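/- For the two-user Gaussian interference channel with degraded message sets in which transmitter 1 knows both messages, if |b| ≤ 1 then the capacity region C^{T₁}_{GIFC} is exactly the set of all rate pairs (R₁,R₂) such that for some α ∈ [0,1]: R₁ ≤ ½ log(1 + αP₁) and R₂ ≤ ½ log( (1 + b²P₁ + 2|b|√((1−α)P₁P₂) + P₂) / (1 + b²αP₁) ). -/

import Mathlib

open scoped BigOperators
open MeasureTheory ProbabilityTheory

noncomputable section

/-- The law of `n` i.i.d. standard Gaussian noise samples. -/
def stdGaussN (n : ℕ) : Measure (Fin n → ℝ) :=
  Measure.pi fun _ => gaussianReal 0 1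

/-- Average probability that receiver 1 errs, for a code for the Gaussian IFC
`Y₁ = X₁ + a X₂ + Z₁`, `Y₂ = b X₁ + X₂ + Z₂` with degraded message sets
(transmitter 1 knows both messages), messages uniform and independent. -/
def peG1T1 (a : ℝ) (n M1 M2 : ℕ) (f1 : Fin M1 → Fin M2 → Fin n → ℝ)
    (f2 : Fin M2 → Fin n → ℝ) (g1 : (Fin n → ℝ) → Fin M1) : ℝ :=
  (1 / (M1 * M2) : ℝ) * ∑ w1 : Fin M1, ∑ w2 : Fin M2,
    (stdGaussN n {z | g1 (fun i => f1 w1 w2 i + a * f2 w2 i + z i) ≠ w1}).toReal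

/-- Average probability that receiver 2 errs (transmitter 1 informed). -/
def peG2T1 (b : ℝ) (n M1 M2 : ℕ) (f1 : Fin M1 → Fin M2 → Fin n → ℝ)
    (f2 : Fin M2 → Fin n → ℝ) (g2 : (Fin n → ℝ) → Fin M2) : ℝ :=
  (1 / (M1 * M2) : ℝ) * ∑ w1 : Fin M1, ∑ w2 : Fin M2,
    (stdGaussN n {z | g2 (fun i => b * f1 w1 w2 i + f2 w2 i + z i) ≠ w2}).toReal

/-- A rate pair is achievable for the Gaussian IFC with degraded message sets
(transmitter 1 knows both messages) under the average power constraints `P1`, `P2`. -/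
def AchievableGT1 (a b P1 P2 R1 R2 : ℝ) : Prop :=
  ∀ ε : ℝ, 0 < ε → ∃ (n M1 M2 : ℕ) (f1 : Fin M1 → Fin M2 → Fin n → ℝ)
    (f2 : Fin M2 → Fin n → ℝ) (g1 : (Fin n → ℝ) → Fin M1) (g2 : (Fin n → ℝ) → Fin M2),
    0 < n ∧ 0 < M1 ∧ 0 < M2 ∧
    (1 / (M1 * M2) : ℝ) * ∑ w1 : Fin M1, ∑ w2 : Fin M2,
      ((1 / n : ℝ) * ∑ i, (f1 w1 w2 i) ^ 2) ≤ P1 ∧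
    (1 / M2 : ℝ) * ∑ w2 : Fin M2, ((1 / n : ℝ) * ∑ i, (f2 w2 i) ^ 2) ≤ P2 ∧
    R1 - ε ≤ Real.logb 2 M1 / n ∧ R2 - ε ≤ Real.logb 2 M2 / n ∧
    peG1T1 a n M1 M2 f1 f2 g1 ≤ ε ∧ peG2T1 b n M1 M2 f1 f2 g2 ≤ ε

/-- The capacity region `C^{T₁}_{GIFC}` of the Gaussian IFC with degraded message sets
in which transmitter 1 knows both messages. -/
def CapacityGT1 (a b P1 P2 : ℝ) : Set (ℝ × ℝ) :=
  closure {R : ℝ × ℝ | AchievableGT1 a b P1 P2 R.1 R.2}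

/-- The region of Theorem 5 / the dirty-paper-coding region `ℛ^{12}_{DPC}`. -/
def DPC12 (b P1 P2 : ℝ) : Set (ℝ × ℝ) :=
  {R | ∃ α : ℝ, 0 ≤ α ∧ α ≤ 1 ∧
    R.1 ≤ (1 / 2) * Real.logb 2 (1 + α * P1) ∧
    R.2 ≤ (1 / 2) * Real.logb 2
      ((1 + b ^ 2 * P1 + 2 * |b| * Real.sqrt ((1 - α) * P1 * P2) + P2)
        / (1 + b ^ 2 * α * P1))}

section PartA
/-- squared Euclidean norm -/
def sqn {n : ℕ} (x : Fin n → ℝ) : ℝ := ∑ i, x i ^ 2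

/-- Gaussian density of variance `v` on `ℝⁿ` -/
def gd {n : ℕ} (v : ℝ) (x : Fin n → ℝ) : ℝ :=
  ((Real.sqrt (2 * Real.pi * v))⁻¹) ^ n * Real.exp (-(sqn x) / (2 * v))

instance (n : ℕ) : IsProbabilityMeasure (stdGaussN n) := by
  unfold stdGaussN; infer_instance

lemma sqn_nonneg {n : ℕ} (x : Fin n → ℝ) : 0 ≤ sqn x := Finset.sum_nonneg fun _ _ => sq_nonneg _

@[fun_prop]
lemma continuous_sqn {n : ℕ} : Continuous (sqn (n := n)) := by unfold sqn; fun_prop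

@[fun_prop]
lemma measurable_sqn {n : ℕ} : Measurable (sqn (n := n)) := continuous_sqn.measurable

@[fun_prop]
lemma continuous_gd {n : ℕ} (v : ℝ) : Continuous (gd (n := n) v) := by unfold gd; fun_prop

@[fun_prop]
lemma measurable_gd {n : ℕ} (v : ℝ) : Measurable (gd (n := n) v) := (continuous_gd v).measurable

lemma gd_pos {n : ℕ} {v : ℝ} (hv : 0 < v) (x : Fin n → ℝ) : 0 < gd v x := by
  unfold gd; have := Real.pi_pos; positivity

lemma gd_eq_prod {n : ℕ} (v : NNReal) (x : Fin n → ℝ) :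
    gd v x = ∏ i, gaussianPDFReal 0 v (x i) := by
  unfold gd gaussianPDFReal sqn
  rw [Finset.prod_mul_distrib, ← Real.exp_sum]
  simp only [Finset.prod_const, Finset.card_univ, Fintype.card_fin, sub_zero]
  congr 2
  rw [neg_div, Finset.sum_div, ← Finset.sum_neg_distrib]
  exact Finset.sum_congr rfl fun i _ => by ring

lemma integrable_gd {n : ℕ} {v : NNReal} : Integrable (gd (n := n) v) := by
  have h : (gd (n := n) v) = fun x => ∏ i, gaussianPDFReal 0 v (x i) := funext (gd_eq_prod v)
  rw [h]
  exact Integrable.fintype_prod (f := fun _ => gaussianPDFReal 0 v)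
    (fun i => integrable_gaussianPDFReal 0 v)

lemma pi_gaussian_eq {n : ℕ} {v : NNReal} (hv : v ≠ 0) :
    (Measure.pi fun _ : Fin n => gaussianReal 0 v)
      = (volume : Measure (Fin n → ℝ)).withDensity (fun x => ENNReal.ofReal (gd v x)) := by
  refine Measure.pi_eq fun s hs => ?_
  rw [withDensity_apply _ (MeasurableSet.univ_pi hs),
    ← ofReal_integral_eq_lintegral_ofReal integrable_gd.integrableOn
      (Filter.Eventually.of_forall fun x => by
        rw [gd_eq_prod]; exact Finset.prod_nonneg fun i _ => gaussianPDFReal_nonneg _ _ _),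
    ← integral_indicator (MeasurableSet.univ_pi hs)]
  have : (Set.univ.pi s).indicator (gd (n := n) v)
      = fun x => ∏ i, (s i).indicator (gaussianPDFReal 0 v) (x i) := by
    ext x
    by_cases hx : x ∈ Set.univ.pi s
    · rw [Set.indicator_of_mem hx, gd_eq_prod]
      refine Finset.prod_congr rfl fun i _ => ?_
      rw [Set.indicator_of_mem (hx i (Set.mem_univ i))]
    · rw [Set.indicator_of_notMem hx]
      simp only [Set.mem_univ_pi, not_forall] at hx
      obtain ⟨i, hi⟩ := hx
      exact (Finset.prod_eq_zero (Finset.mem_univ i) (Set.indicator_of_notMem hi _)).symm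
  rw [this, integral_fintype_prod_volume_eq_prod
    (f := fun i y => (s i).indicator (gaussianPDFReal 0 v) y),
    ENNReal.ofReal_prod_of_nonneg]
  · refine Finset.prod_congr rfl fun i _ => ?_
    rw [gaussianReal_apply_eq_integral 0 hv, integral_indicator (hs i)]
  · intro i _
    exact integral_nonneg fun y => Set.indicator_nonneg (fun z _ => gaussianPDFReal_nonneg _ _ _) _

lemma stdGaussN_eq {n : ℕ} :
    stdGaussN n = (volume : Measure (Fin n → ℝ)).withDensity (fun x => ENNReal.ofReal (gd 1 x)) := by
  have := pi_gaussian_eq (n := n) (v := 1) one_ne_zero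
  simpa [stdGaussN] using this

lemma integral_stdGaussN {n : ℕ} (f : (Fin n → ℝ) → ℝ) :
    ∫ x, f x ∂(stdGaussN n) = ∫ x, gd 1 x * f x := by
  rw [stdGaussN_eq, integral_withDensity_eq_integral_toReal_smul (by fun_prop) (by simp)]
  refine integral_congr_ae (Filter.Eventually.of_forall fun x => ?_)
  simp [ENNReal.toReal_ofReal (gd_pos one_pos x).le]

lemma integrable_stdGaussN_iff {n : ℕ} (f : (Fin n → ℝ) → ℝ) :
    Integrable f (stdGaussN n) ↔ Integrable (fun x => gd 1 x * f x) := by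
  rw [stdGaussN_eq, integrable_withDensity_iff (by fun_prop) (by simp)]
  refine integrable_congr (Filter.Eventually.of_forall fun x => ?_)
  simp [ENNReal.toReal_ofReal (gd_pos one_pos x).le, mul_comm]

lemma integrable_sq_gauss (v : NNReal) : Integrable (fun x : ℝ => x ^ 2) (gaussianReal 0 v) :=
  (memLp_id_gaussianReal (μ := 0) (v := v) 2).integrable_sq

lemma integral_sq_gauss (v : NNReal) : ∫ x : ℝ, x ^ 2 ∂(gaussianReal 0 v) = v := by
  have h := variance_fun_id_gaussianReal (μ := 0) (v := v)
  rw [variance_of_integral_eq_zero (by fun_prop) (by simp)] at h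
  exact h

lemma integrable_sqn {n : ℕ} : Integrable (sqn (n := n)) (stdGaussN n) := by
  unfold sqn stdGaussN
  exact integrable_finsetSum _ fun i _ =>
    integrable_comp_eval (μ := fun _ : Fin n => gaussianReal 0 1) (i := i) (f := fun x : ℝ => x ^ 2) (integrable_sq_gauss 1)

lemma integral_sqn {n : ℕ} : ∫ x, sqn x ∂(stdGaussN n) = n := by
  unfold sqn stdGaussN
  rw [integral_finsetSum]
  · have : ∀ i : Fin n, ∫ x : Fin n → ℝ, x i ^ 2 ∂(Measure.pi fun _ : Fin n => gaussianReal 0 1) = 1 := by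
      intro i
      rw [integral_comp_eval (μ := fun _ : Fin n => gaussianReal 0 1) (f := fun x : ℝ => x ^ 2)
        (by fun_prop), integral_sq_gauss]; simp
    simp [this]
  · intro i _
    exact integrable_comp_eval (μ := fun _ : Fin n => gaussianReal 0 1) (i := i) (f := fun x : ℝ => x ^ 2) (integrable_sq_gauss 1)

lemma integrable_coord {n : ℕ} (i : Fin n) : Integrable (fun x : Fin n → ℝ => x i) (stdGaussN n) := by
  unfold stdGaussN
  exact integrable_comp_eval (μ := fun _ : Fin n => gaussianReal 0 1) (i := i) (f := fun x : ℝ => x) ((memLp_id_gaussianReal (μ := 0) (v := 1) 1).integrable le_rfl)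

lemma integral_coord {n : ℕ} (i : Fin n) : ∫ x : Fin n → ℝ, x i ∂(stdGaussN n) = 0 := by
  unfold stdGaussN
  rw [integral_comp_eval (μ := fun _ : Fin n => gaussianReal 0 1) (f := fun x : ℝ => x)
        (by fun_prop), integral_id_gaussianReal]

lemma sqn_add_smul {n : ℕ} (c : ℝ) (z x : Fin n → ℝ) :
    sqn (x + c • z) = sqn x + ∑ i, (2 * c * x i) * z i + c ^ 2 * sqn z := by
  unfold sqn
  rw [Finset.mul_sum, ← Finset.sum_add_distrib, ← Finset.sum_add_distrib]
  refine Finset.sum_congr rfl fun i _ => ?_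
  simp; ring

lemma integrable_sqn_add {n : ℕ} (c : ℝ) (x : Fin n → ℝ) :
    Integrable (fun z => sqn (x + c • z)) (stdGaussN n) := by
  simp_rw [sqn_add_smul]
  exact ((integrable_const _).add (integrable_finsetSum _ fun i _ =>
    (integrable_coord i).const_mul _)).add (integrable_sqn.const_mul _)

lemma integral_sqn_add {n : ℕ} (c : ℝ) (x : Fin n → ℝ) :
    ∫ z, sqn (x + c • z) ∂(stdGaussN n) = sqn x + c ^ 2 * n := by
  simp_rw [sqn_add_smul]
  have h1 : Integrable (fun z : Fin n → ℝ => ∑ i, (2 * c * x i) * z i) (stdGaussN n) :=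
    integrable_finsetSum _ fun i _ => (integrable_coord i).const_mul _
  have h2 : Integrable (fun z : Fin n → ℝ => sqn x + ∑ i, (2 * c * x i) * z i) (stdGaussN n) :=
    (integrable_const _).add h1
  rw [integral_add h2 (integrable_sqn.const_mul _),
    integral_add (integrable_const _) h1, integral_finsetSum _
      (fun i _ => (integrable_coord i).const_mul _)]
  simp [integral_const_mul, integral_coord, integral_sqn]

lemma rot1 {s t : ℝ} (ht : 0 ≤ t) (h : s ^ 2 + t ^ 2 = 1) :
    MeasurePreserving (fun p : ℝ × ℝ => (s * p.1 + t * p.2, - t * p.1 + s * p.2))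
      ((gaussianReal 0 1).prod (gaussianReal 0 1)) ((gaussianReal 0 1).prod (gaussianReal 0 1)) := by
  refine ⟨by fun_prop, ?_⟩
  have h1 := IsGaussian.map_rotation_eq_self (μ := gaussianReal 0 1) (by simp) (Real.arccos s)
  have hs : Real.cos (Real.arccos s) = s :=
    Real.cos_arccos (by nlinarith [sq_nonneg t]) (by nlinarith [sq_nonneg t])
  have hs' : Real.sin (Real.arccos s) = t := by
    rw [Real.sin_arccos, show 1 - s ^ 2 = t ^ 2 by linarith, Real.sqrt_sq ht]
  convert h1 using 2
  ext p <;> simp [ContinuousLinearMap.rotation_apply, hs, hs']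

lemma rotn {n : ℕ} {s t : ℝ} (ht : 0 ≤ t) (h : s ^ 2 + t ^ 2 = 1) :
    MeasurePreserving (fun p : (Fin n → ℝ) × (Fin n → ℝ) => s • p.1 + t • p.2)
      ((stdGaussN n).prod (stdGaussN n)) (stdGaussN n) := by
  have h1 := (measurePreserving_arrowProdEquivProdArrow ℝ ℝ (Fin n)
    (fun _ => gaussianReal 0 1) (fun _ => gaussianReal 0 1)).symm
  have h2 : MeasurePreserving (fun p : ℝ × ℝ => s * p.1 + t * p.2)
      ((gaussianReal 0 1).prod (gaussianReal 0 1)) (gaussianReal 0 1) :=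
    measurePreserving_fst.comp (rot1 ht h)
  have h3 := measurePreserving_pi (fun _ : Fin n => (gaussianReal 0 1).prod (gaussianReal 0 1))
    (fun _ : Fin n => gaussianReal 0 1) (fun _ => h2)
  exact h3.comp h1

end PartA

section PartB
/-- cdf-like function -/
def cdfF (g : ℝ → ℝ) (y : ℝ) : ℝ := (∫ t in Set.Iic 0, g t) + ∫ t in (0:ℝ)..y, g t

lemma cdfF_hasDerivAt {g : ℝ → ℝ} (hc : Continuous g) (y : ℝ) : HasDerivAt (cdfF g) (g y) y :=
  (intervalIntegral.integral_hasDerivAt_right (hc.intervalIntegrable _ _)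
    (hc.stronglyMeasurableAtFilter _ _) hc.continuousAt).const_add _

lemma cdfF_strictMono {g : ℝ → ℝ} (hc : Continuous g) (hp : ∀ y, 0 < g y) :
    StrictMono (cdfF g) := by
  apply strictMono_of_deriv_pos
  intro x; rw [(cdfF_hasDerivAt hc x).deriv]; exact hp x

lemma cdfF_continuous {g : ℝ → ℝ} (hc : Continuous g) : Continuous (cdfF g) :=
  continuous_iff_continuousAt.2 fun x => (cdfF_hasDerivAt hc x).continuousAt

lemma cdfF_range {g : ℝ → ℝ} (hc : Continuous g) (hp : ∀ y, 0 < g y) (hi : Integrable g) :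
    Set.range (cdfF g) = Set.Ioo 0 (∫ t, g t) := by
  have htop : Filter.Tendsto (cdfF g) Filter.atTop (nhds (∫ t, g t)) := by
    have := (intervalIntegral_tendsto_integral_Ioi 0 (hi.integrableOn) Filter.tendsto_id).const_add
      (∫ t in Set.Iic 0, g t)
    rwa [intervalIntegral.integral_Iic_add_Ioi hi.integrableOn hi.integrableOn] at this
  have hbot : Filter.Tendsto (cdfF g) Filter.atBot (nhds 0) := by
    have := (intervalIntegral_tendsto_integral_Iic 0 (hi.integrableOn) Filter.tendsto_id).const_sub
      (∫ t in Set.Iic 0, g t)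
    rw [sub_self] at this
    refine this.congr fun x => ?_
    unfold cdfF
    rw [intervalIntegral.integral_symm x 0]; simp only [id]; ring
  have hm := cdfF_strictMono hc hp
  ext v
  constructor
  · rintro ⟨y, rfl⟩
    refine ⟨lt_of_le_of_lt ?_ (hm (sub_one_lt y)), lt_of_lt_of_le (hm (lt_add_one y)) ?_⟩
    · exact hm.monotone.le_of_tendsto hbot _
    · exact hm.monotone.ge_of_tendsto htop _
  · rintro ⟨h1, h2⟩
    refine mem_range_of_exists_le_of_exists_ge (cdfF_continuous hc) ?_ ?_
    · obtain ⟨y, hy⟩ := (hbot.eventually (gt_mem_nhds h1)).exists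
      exact ⟨y, le_of_lt hy⟩
    · obtain ⟨y, hy⟩ := (htop.eventually (lt_mem_nhds h2)).exists
      exact ⟨y, le_of_lt hy⟩

/-- monotone transport between positive continuous densities of the same mass -/
lemma exists_transport {g p : ℝ → ℝ} (hgc : Continuous g) (hg : ∀ y, 0 < g y) (hgi : Integrable g)
    (hpc : Continuous p) (hp : ∀ y, 0 < p y) (hpi : Integrable p) (hm : ∫ t, g t = ∫ t, p t) :
    ∃ T : ℝ → ℝ, StrictMono T ∧ ∀ z, HasDerivAt T (p z / g (T z)) z := by
  have hrange : ∀ z, ∃ t, cdfF g t = cdfF p z := by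
    intro z
    have : cdfF p z ∈ Set.range (cdfF g) := by
      rw [cdfF_range hgc hg hgi, hm, ← cdfF_range hpc hp hpi]; exact ⟨z, rfl⟩
    exact this
  choose T hT using hrange
  have hmg := cdfF_strictMono hgc hg
  have hmp := cdfF_strictMono hpc hp
  have hTm : StrictMono T := fun x y hxy => hmg.lt_iff_lt.1 (by rw [hT, hT]; exact hmp hxy)
  have hTs : Function.Surjective T := by
    intro t
    have : cdfF g t ∈ Set.range (cdfF p) := by
      rw [cdfF_range hpc hp hpi, ← hm, ← cdfF_range hgc hg hgi]; exact ⟨t, rfl⟩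
    obtain ⟨z, hz⟩ := this
    exact ⟨z, hmg.injective (by rw [hT, hz])⟩
  have hTc : Continuous T := hTm.monotone.continuous_of_surjective hTs
  refine ⟨T, hTm, fun z => ?_⟩
  rw [hasDerivAt_iff_tendsto_slope]
  have h1 := hasDerivAt_iff_tendsto_slope.1 (cdfF_hasDerivAt hpc z)
  have h2 := hasDerivAt_iff_tendsto_slope.1 (cdfF_hasDerivAt hgc (T z))
  have hTt : Filter.Tendsto T (nhdsWithin z {z}ᶜ) (nhdsWithin (T z) {T z}ᶜ) := by
    refine tendsto_nhdsWithin_iff.2 ⟨hTc.continuousAt.tendsto.mono_left nhdsWithin_le_nhds, ?_⟩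
    filter_upwards [self_mem_nhdsWithin] with x hx
    exact fun h => hx (hTm.injective h)
  have h3 := h1.div (h2.comp hTt) (hg _).ne'
  refine h3.congr' ?_
  filter_upwards [self_mem_nhdsWithin] with x hx
  have hx' : x ≠ z := hx
  have hTx : T x ≠ T z := fun h => hx' (hTm.injective h)
  have e1 : cdfF p x - cdfF p z ≠ 0 := sub_ne_zero.2 fun h => hx' (hmp.injective h)
  simp only [Pi.div_apply, Function.comp, slope_def_field, hT]
  have := sub_ne_zero.2 hx'
  have := sub_ne_zero.2 hTx
  field_simp

end PartB

section PartC
/-- growth class on `ℝ` -/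
def GC1 (f : ℝ → ℝ) : Prop := Continuous f ∧ ∃ K : ℝ, 0 < K ∧
  ∀ x, Real.exp (-(K * (1 + x ^ 2))) ≤ f x ∧ f x ≤ Real.exp (K - x ^ 2 / K)

/-- average of the logarithm -/
def Lop1 (b c : ℝ) (f : ℝ → ℝ) (y : ℝ) : ℝ := ∫ z, Real.log (f (b * y + c * z)) ∂(gaussianReal 0 1)

/-- entropy of the standard Gaussian -/
def h1c : ℝ := (1 / 2) * Real.log (2 * Real.pi) + 1 / 2

/-- `θ log(b/√θ) + (1-θ) log (c/√(1-θ))` -/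
def C0c (b c θ : ℝ) : ℝ := θ * Real.log (b / √θ) + (1 - θ) * Real.log (c / √(1 - θ))

lemma log_pdf (u : ℝ) : Real.log (gaussianPDFReal 0 1 u) = -(1 / 2) * Real.log (2 * Real.pi) - u ^ 2 / 2 := by
  unfold gaussianPDFReal
  have := Real.pi_pos
  rw [Real.log_mul (by positivity) (by positivity), Real.log_exp, Real.log_inv, Real.log_sqrt (by positivity)]
  simp; ring

lemma integral_log_pdf : ∫ u, Real.log (gaussianPDFReal 0 1 u) ∂(gaussianReal 0 1) = - h1c := by
  simp_rw [log_pdf]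
  rw [integral_sub (integrable_const _) ((integrable_sq_gauss 1).div_const 2), integral_div,
    integral_sq_gauss]
  simp [h1c]; ring

lemma integrable_log_pdf : Integrable (fun u => Real.log (gaussianPDFReal 0 1 u)) (gaussianReal 0 1) := by
  simp_rw [log_pdf]
  exact (integrable_const _).sub ((integrable_sq_gauss 1).div_const 2)

lemma integrable_id_gauss : Integrable (fun x : ℝ => x) (gaussianReal 0 1) :=
  (memLp_id_gaussianReal (μ := 0) (v := 1) 1).integrable le_rfl

lemma sq_lin_eq (b c y : ℝ) : (fun z : ℝ => (b * y + c * z) ^ 2)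
    = fun z => (b * y) ^ 2 + (2 * b * y * c) * z + c ^ 2 * z ^ 2 := by ext z; ring

lemma integrable_sq_lin (b c y : ℝ) : Integrable (fun z : ℝ => (b * y + c * z) ^ 2) (gaussianReal 0 1) := by
  rw [sq_lin_eq]
  exact ((integrable_const _).add (integrable_id_gauss.const_mul _)).add
    ((integrable_sq_gauss 1).const_mul _)

lemma integral_sq_lin (b c y : ℝ) :
    ∫ z : ℝ, (b * y + c * z) ^ 2 ∂(gaussianReal 0 1) = b ^ 2 * y ^ 2 + c ^ 2 := by
  rw [sq_lin_eq]
  have h2 : Integrable (fun z : ℝ => (b * y) ^ 2 + (2 * b * y * c) * z) (gaussianReal 0 1) :=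
    (integrable_const _).add (integrable_id_gauss.const_mul _)
  rw [integral_add h2 ((integrable_sq_gauss 1).const_mul _),
    integral_add (integrable_const _) (integrable_id_gauss.const_mul _), integral_const_mul,
    integral_const_mul, integral_sq_gauss, integral_id_gaussianReal]
  simp; ring

section
variable {f : ℝ → ℝ} {K : ℝ}

lemma gc1_log (hK : 0 < K)
    (hf : ∀ x, Real.exp (-(K * (1 + x ^ 2))) ≤ f x ∧ f x ≤ Real.exp (K - x ^ 2 / K)) (x : ℝ) :
    0 < f x ∧ -(K * (1 + x ^ 2)) ≤ Real.log (f x) ∧ Real.log (f x) ≤ K - x ^ 2 / K ∧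
      |Real.log (f x)| ≤ K * (1 + x ^ 2) := by
  have h0 : 0 < f x := (Real.exp_pos _).trans_le (hf x).1
  have h1 : -(K * (1 + x ^ 2)) ≤ Real.log (f x) := (Real.le_log_iff_exp_le h0).2 (hf x).1
  have h2 : Real.log (f x) ≤ K - x ^ 2 / K := (Real.log_le_iff_le_exp h0).2 (hf x).2
  refine ⟨h0, h1, h2, abs_le.2 ⟨h1, h2.trans ?_⟩⟩
  have : 0 ≤ x ^ 2 / K := by positivity
  nlinarith [mul_nonneg hK.le (sq_nonneg x)]

lemma gc1_logint (hc : Continuous f) (hK : 0 < K)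
    (hf : ∀ x, Real.exp (-(K * (1 + x ^ 2))) ≤ f x ∧ f x ≤ Real.exp (K - x ^ 2 / K)) (b c y : ℝ) :
    Integrable (fun z => Real.log (f (b * y + c * z))) (gaussianReal 0 1) := by
  have hl : Continuous fun x => Real.log (f x) := hc.log fun x => (gc1_log hK hf x).1.ne'
  refine Integrable.mono' (((integrable_const (1:ℝ)).add (integrable_sq_lin b c y)).const_mul K)
    (hl.comp (by fun_prop : Continuous fun z : ℝ => b * y + c * z)).aestronglyMeasurable (Filter.Eventually.of_forall fun z => ?_)
  exact (gc1_log hK hf _).2.2.2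

lemma Lop1_cont (hc : Continuous f) (hK : 0 < K)
    (hf : ∀ x, Real.exp (-(K * (1 + x ^ 2))) ≤ f x ∧ f x ≤ Real.exp (K - x ^ 2 / K)) (b c : ℝ) :
    Continuous (Lop1 b c f) := by
  have hl : Continuous fun x => Real.log (f x) := hc.log fun x => (gc1_log hK hf x).1.ne'
  refine continuous_iff_continuousAt.2 fun y0 => ?_
  refine continuousAt_of_dominated (bound := fun z => K * (1 + (2 * (b ^ 2 * (|y0| + 1) ^ 2) + 2 * c ^ 2 * z ^ 2)))
    (Filter.Eventually.of_forall fun y =>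
      (hl.comp (by fun_prop : Continuous fun z : ℝ => b * y + c * z)).aestronglyMeasurable) ?_ ?_ ?_
  · filter_upwards [Metric.ball_mem_nhds y0 one_pos] with y hy
    refine Filter.Eventually.of_forall fun z => ((gc1_log hK hf _).2.2.2).trans ?_
    rw [Metric.mem_ball, Real.dist_eq] at hy
    have h1 : |y| ≤ |y0| + 1 := by
      have := abs_sub_abs_le_abs_sub y y0; linarith
    have h2 : y ^ 2 ≤ (|y0| + 1) ^ 2 := by
      rw [← sq_abs y]; gcongr
    have h3 : b ^ 2 * y ^ 2 ≤ b ^ 2 * (|y0| + 1) ^ 2 := by gcongr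
    refine mul_le_mul_of_nonneg_left ?_ hK.le
    nlinarith [sq_nonneg (b * y - c * z)]
  · exact ((integrable_const (1:ℝ)).add ((integrable_const _).add
      ((integrable_sq_gauss 1).const_mul _))).const_mul K
  · exact Filter.Eventually.of_forall fun z =>
      (hl.comp (by fun_prop : Continuous fun y : ℝ => b * y + c * z)).continuousAt

lemma Lop1_bds (hc : Continuous f) (hK : 0 < K)
    (hf : ∀ x, Real.exp (-(K * (1 + x ^ 2))) ≤ f x ∧ f x ≤ Real.exp (K - x ^ 2 / K)) (b c y : ℝ) :
    -(K * (1 + (b ^ 2 * y ^ 2 + c ^ 2))) ≤ Lop1 b c f y ∧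
      Lop1 b c f y ≤ K - (b ^ 2 * y ^ 2 + c ^ 2) / K := by
  unfold Lop1
  have hi := integrable_sq_lin b c y
  constructor
  · have := integral_mono (μ := gaussianReal 0 1)
      (((integrable_const (1:ℝ)).add hi).const_mul K).neg (gc1_logint hc hK hf b c y)
      (fun z => (gc1_log hK hf (b * y + c * z)).2.1)
    refine le_trans (le_of_eq ?_) this
    have e : ∫ z : ℝ, -(K * (1 + (b * y + c * z) ^ 2)) ∂(gaussianReal 0 1)
      = -(K * (1 + (b ^ 2 * y ^ 2 + c ^ 2))) := by
      rw [integral_neg, integral_const_mul, integral_add (integrable_const _) hi, integral_sq_lin]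
      simp
    rw [← e]; rfl
  · have := integral_mono (μ := gaussianReal 0 1) (gc1_logint hc hK hf b c y)
      ((integrable_const K).sub (hi.div_const K))
      (fun z => (gc1_log hK hf (b * y + c * z)).2.2.1)
    refine le_trans this (le_of_eq ?_)
    have e : ∫ z : ℝ, (K - (b * y + c * z) ^ 2 / K) ∂(gaussianReal 0 1)
      = K - (b ^ 2 * y ^ 2 + c ^ 2) / K := by
      rw [integral_sub (integrable_const _) (hi.div_const K), integral_div, integral_sq_lin]
      simp
    rw [← e]; rfl
end

lemma log_conc {b c θ τ : ℝ} (hb : 0 < b) (hc : 0 < c) (h0 : 0 < θ) (h1 : θ < 1) (hτ : 0 < τ) :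
    θ * Real.log τ + C0c b c θ ≤ Real.log (b * √θ * τ + c * √(1 - θ)) := by
  have h1' : 0 < 1 - θ := by linarith
  have hs : 0 < √θ := Real.sqrt_pos.2 h0
  have ht : 0 < √(1 - θ) := Real.sqrt_pos.2 h1'
  have := strictConcaveOn_log_Ioi.concaveOn.2 (x := b / √θ * τ) (y := c / √(1 - θ))
    (by simp only [Set.mem_Ioi]; positivity) (by simp only [Set.mem_Ioi]; positivity) h0.le h1'.le (by ring)
  simp only [smul_eq_mul] at this
  have e : θ * (b / √θ * τ) + (1 - θ) * (c / √(1 - θ)) = b * √θ * τ + c * √(1 - θ) := by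
    have e1 : θ / √θ = √θ := Real.div_sqrt
    have e2 : (1 - θ) / √(1 - θ) = √(1 - θ) := Real.div_sqrt
    calc _ = b * (θ / √θ) * τ + c * ((1 - θ) / √(1 - θ)) := by ring
      _ = _ := by rw [e1, e2]
  rw [e, Real.log_mul (by positivity) (by positivity)] at this
  unfold C0c
  linarith

end PartC

section PartD
lemma integrable_gauss_iff (f : ℝ → ℝ) :
    Integrable f (gaussianReal 0 1) ↔ Integrable (fun x => gaussianPDFReal 0 1 x * f x) := by
  rw [gaussianReal_of_var_ne_zero 0 one_ne_zero,
    integrable_withDensity_iff (measurable_gaussianPDF 0 1) (Filter.Eventually.of_forall fun x => by simp [gaussianPDF])]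
  refine integrable_congr (Filter.Eventually.of_forall fun x => ?_)
  simp [toReal_gaussianPDF, mul_comm]

lemma integral_gauss (f : ℝ → ℝ) :
    ∫ x, f x ∂(gaussianReal 0 1) = ∫ x, gaussianPDFReal 0 1 x * f x := by
  rw [integral_gaussianReal_eq_integral_smul one_ne_zero]; rfl

lemma cont_pdf : Continuous (gaussianPDFReal 0 1) := by
  unfold gaussianPDFReal; fun_prop

lemma gc1_integrable {f : ℝ → ℝ} (h : GC1 f) : Integrable f := by
  obtain ⟨hc, K, hK, hf⟩ := h
  have h1 : Integrable (fun x : ℝ => Real.exp (-K⁻¹ * x ^ 2)) := integrable_exp_neg_mul_sq (by positivity)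
  refine (h1.const_mul (Real.exp K)).mono' hc.aestronglyMeasurable (Filter.Eventually.of_forall fun x => ?_)
  rw [Real.norm_of_nonneg ((Real.exp_pos _).le.trans (hf x).1), ← Real.exp_add]
  refine (hf x).2.trans (Real.exp_le_exp.2 (le_of_eq ?_))
  ring

lemma gc1_sq_integrable {f : ℝ → ℝ} (h : GC1 f) : Integrable (fun x => x ^ 2 * f x) := by
  obtain ⟨hc, K, hK, hf⟩ := h
  have h1 : Integrable (fun x : ℝ => Real.exp (-(2 * K)⁻¹ * x ^ 2)) := integrable_exp_neg_mul_sq (by positivity)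
  refine (h1.const_mul (2 * K * Real.exp K)).mono' (by fun_prop) (Filter.Eventually.of_forall fun x => ?_)
  rw [Real.norm_of_nonneg (mul_nonneg (sq_nonneg _) ((Real.exp_pos _).le.trans (hf x).1))]
  have h2 : x ^ 2 ≤ 2 * K * Real.exp (x ^ 2 / (2 * K)) := by
    have := Real.add_one_le_exp (x ^ 2 / (2 * K))
    have h3 : x ^ 2 = 2 * K * (x ^ 2 / (2 * K)) := by field_simp
    nlinarith
  calc x ^ 2 * f x ≤ (2 * K * Real.exp (x ^ 2 / (2 * K))) * Real.exp (K - x ^ 2 / K) := by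
        refine mul_le_mul h2 (hf x).2 ((Real.exp_pos _).le.trans (hf x).1) (by positivity)
    _ = 2 * K * Real.exp K * Real.exp (-(2 * K)⁻¹ * x ^ 2) := by
        rw [mul_assoc (2 * K), ← Real.exp_add, mul_assoc (2 * K), ← Real.exp_add]
        congr 2; field_simp; ring

lemma gc1_exp_Lop1 {f : ℝ → ℝ} (h : GC1 f) {b c θ : ℝ} (hb : b ≠ 0) (hθ : 0 < θ) :
    GC1 (fun y => Real.exp (θ⁻¹ * Lop1 b c f y)) := by
  obtain ⟨hc, K, hK, hf⟩ := h
  have hL := Lop1_cont hc hK hf b c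
  refine ⟨by fun_prop, ?_⟩
  have hb2 : 0 < b ^ 2 := by positivity
  refine ⟨θ⁻¹ * (K * (1 + b ^ 2 + c ^ 2)) + θ * K / b ^ 2, by positivity, fun y => ?_⟩
  obtain ⟨h1, h2⟩ := Lop1_bds hc hK hf b c y
  have hθ' : 0 < θ⁻¹ := by positivity
  constructor
  · refine Real.exp_le_exp.2 ?_
    have h3 := mul_le_mul_of_nonneg_left h1 hθ'.le
    refine le_trans ?_ h3
    have h4 : 0 ≤ θ * K / b ^ 2 * (1 + y ^ 2) := by positivity
    have h5 : 0 ≤ θ⁻¹ * K * (y ^ 2 + c ^ 2 * y ^ 2 + b ^ 2) := by positivity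
    nlinarith
  · refine Real.exp_le_exp.2 ?_
    have h3 := mul_le_mul_of_nonneg_left h2 hθ'.le
    refine h3.trans ?_
    set K' := θ⁻¹ * (K * (1 + b ^ 2 + c ^ 2)) + θ * K / b ^ 2 with hK'
    have h4 : θ * K / b ^ 2 ≤ K' := by
      have : 0 ≤ θ⁻¹ * (K * (1 + b ^ 2 + c ^ 2)) := by positivity
      linarith
    have h5 : y ^ 2 / K' ≤ y ^ 2 / (θ * K / b ^ 2) := by gcongr
    have h6 : y ^ 2 / (θ * K / b ^ 2) = θ⁻¹ * (b ^ 2 * y ^ 2 / K) := by field_simp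
    have h7 : θ⁻¹ * K ≤ K' := by
      have : 0 ≤ θ⁻¹ * (K * (b ^ 2 + c ^ 2)) + θ * K / b ^ 2 := by positivity
      nlinarith
    have h8 : 0 ≤ θ⁻¹ * (c ^ 2 / K) := by positivity
    have h9 : θ⁻¹ * (K - (b ^ 2 * y ^ 2 + c ^ 2) / K) = θ⁻¹ * K - θ⁻¹ * (b ^ 2 * y ^ 2 / K) - θ⁻¹ * (c ^ 2 / K) := by
      ring
    linarith

/-- one-dimensional change of variables inequality -/
lemma cov_le {Θ Θ' f : ℝ → ℝ} (hΘ : ∀ u, HasDerivAt Θ (Θ' u) u) (hpos : ∀ u, 0 ≤ Θ' u)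
    (hinj : Function.Injective Θ) (hf0 : ∀ x, 0 ≤ f x) (hf : Integrable f) :
    Integrable (fun u => Θ' u * f (Θ u)) ∧ ∫ u, Θ' u * f (Θ u) ≤ ∫ x, f x := by
  have h1 := integrableOn_image_iff_integrableOn_abs_deriv_smul (s := Set.univ) MeasurableSet.univ
    (fun u _ => (hΘ u).hasDerivWithinAt) hinj.injOn f
  have h2 := integral_image_eq_integral_abs_deriv_smul (s := Set.univ) MeasurableSet.univ
    (fun u _ => (hΘ u).hasDerivWithinAt) hinj.injOn f
  simp only [abs_of_nonneg (hpos _), smul_eq_mul, Measure.restrict_univ, integrableOn_univ] at h1 h2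
  refine ⟨h1.1 hf.integrableOn, ?_⟩
  rw [← h2]
  exact setIntegral_le_integral hf (Filter.Eventually.of_forall hf0)

theorem FI1 {f : ℝ → ℝ} (hf : GC1 f) {b c θ : ℝ} (hb : 0 < b) (hc : 0 < c) (h0 : 0 < θ) (h1 : θ < 1) :
    θ * Real.log (∫ y, Real.exp (θ⁻¹ * Lop1 b c f y)) ≤
      Real.log (∫ x, f x) - C0c b c θ - (1 - θ) * h1c := by
  set L := Lop1 b c f with hL
  set G : ℝ → ℝ := fun y => Real.exp (θ⁻¹ * L y) with hG
  have hGC : GC1 G := gc1_exp_Lop1 hf hb.ne' h0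
  have hGpos : ∀ y, 0 < G y := fun y => Real.exp_pos _
  have hGi : Integrable G := gc1_integrable hGC
  have hGc : Continuous G := hGC.1
  set I := ∫ y, G y with hI
  have hfi := gc1_integrable hf
  obtain ⟨hfc, K, hK, hfb⟩ := hf
  have hfpos : ∀ x, 0 < f x := fun x => (gc1_log hK hfb x).1
  have hlf : Continuous fun x => Real.log (f x) := hfc.log fun x => (hfpos x).ne'
  have hLc : Continuous L := Lop1_cont hfc hK hfb b c
  have hIpos : 0 < I := by
    rw [hI, integral_pos_iff_support_of_nonneg (fun y => (hGpos y).le) hGi]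
    have : Function.support G = Set.univ := by ext y; simp [(hGpos y).ne']
    rw [this]; simp
  have hmpos : 0 < ∫ x, f x := by
    rw [integral_pos_iff_support_of_nonneg (fun y => (hfpos y).le) hfi]
    have : Function.support f = Set.univ := by ext y; simp [(hfpos y).ne']
    rw [this]; simp
  set m := ∫ x, f x with hm
  have hφ : ∀ u, 0 < gaussianPDFReal 0 1 u := fun u => gaussianPDFReal_pos 0 1 u one_ne_zero
  have hφi : Integrable (gaussianPDFReal 0 1) := integrable_gaussianPDFReal 0 1
  obtain ⟨T, hTm, hT⟩ := exists_transport (g := G) (p := fun z => I * gaussianPDFReal 0 1 z)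
    hGc hGpos hGi (cont_pdf.const_mul I) (fun z => mul_pos hIpos (hφ z)) (hφi.const_mul I)
    (by rw [integral_const_mul, integral_gaussianPDFReal_eq_one 0 one_ne_zero, mul_one])
  set τ : ℝ → ℝ := fun z => I * gaussianPDFReal 0 1 z / G (T z) with hτ
  have hτpos : ∀ z, 0 < τ z := fun z => div_pos (mul_pos hIpos (hφ z)) (hGpos _)
  have hTc : Continuous T := continuous_iff_continuousAt.2 fun z => (hT z).continuousAt
  have hτc : Continuous τ := (cont_pdf.const_mul I).div (hGc.comp hTc) fun z => (hGpos _).ne'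
  have hT2 : Integrable (fun z => T z ^ 2) (gaussianReal 0 1) := by
    rw [integrable_gauss_iff]
    have := (cov_le (f := fun y => y ^ 2 * G y) hT (fun z => (hτpos z).le) hTm.injective
      (fun y => mul_nonneg (sq_nonneg _) (hGpos y).le) (gc1_sq_integrable hGC)).1
    refine (this.const_mul I⁻¹).congr (Filter.Eventually.of_forall fun z => ?_)
    have := (hGpos (T z)).ne'
    simp only []
    field_simp
  have hlogτ : ∀ z, θ * Real.log (τ z) = θ * Real.log I + θ * Real.log (gaussianPDFReal 0 1 z) - L (T z) := by
    intro z
    rw [hτ]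
    simp only []
    rw [Real.log_div (mul_pos hIpos (hφ z)).ne' (hGpos _).ne', Real.log_mul hIpos.ne' (hφ z).ne', hG]
    simp only [Real.log_exp]
    field_simp
  set s := √θ with hs
  set t := √(1 - θ) with ht
  have hspos : 0 < s := Real.sqrt_pos.2 h0
  have htpos : 0 < t := Real.sqrt_pos.2 (by linarith)
  have hst : s ^ 2 + t ^ 2 = 1 := by
    rw [hs, ht, Real.sq_sqrt h0.le, Real.sq_sqrt (by linarith)]; ring
  set γ := gaussianReal 0 1 with hγ
  set A : ℝ × ℝ → ℝ := fun p => Real.log (f (b * T p.1 + c * p.2)) with hA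
  have hAc : Continuous A := hlf.comp (by fun_prop)
  have hT2' : Integrable (fun p : ℝ × ℝ => T p.1 ^ 2) (γ.prod γ) := hT2.comp_fst γ
  have hz2' : Integrable (fun p : ℝ × ℝ => p.2 ^ 2) (γ.prod γ) := (integrable_sq_gauss 1).comp_snd γ
  have hAi : Integrable A (γ.prod γ) := by
    refine (((integrable_const (1:ℝ)).add ((hT2'.const_mul (2 * b ^ 2)).add
      (hz2'.const_mul (2 * c ^ 2)))).const_mul K).mono' hAc.aestronglyMeasurable
      (Filter.Eventually.of_forall fun p => ?_)
    refine (gc1_log hK hfb _).2.2.2.trans (mul_le_mul_of_nonneg_left ?_ hK.le)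
    simp only [Pi.add_apply]
    nlinarith [sq_nonneg (b * T p.1 - c * p.2)]
  have hLTi : Integrable (fun z => L (T z)) γ := hAi.integral_prod_left
  have hBi : Integrable (fun z => θ * Real.log (τ z)) γ := by
    simp_rw [hlogτ]
    exact ((integrable_const _).add (integrable_log_pdf.const_mul θ)).sub hLTi
  have hBi' : Integrable (fun p : ℝ × ℝ => θ * Real.log (τ p.1)) (γ.prod γ) := hBi.comp_fst γ
  set W : ℝ × ℝ → ℝ := fun q => A (s * q.1 - t * q.2, t * q.1 + s * q.2)
    + θ * Real.log (τ (s * q.1 - t * q.2)) with hW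
  have hWc : Continuous W := by
    refine (hAc.comp (by fun_prop)).add (continuous_const.mul (Continuous.log (hτc.comp (by fun_prop)) fun q => ?_))
    exact (hτpos _).ne'
  have hrot := rot1 htpos.le hst
  have hWr : ∀ p : ℝ × ℝ, W (s * p.1 + t * p.2, - t * p.1 + s * p.2) = A p + θ * Real.log (τ p.1) := by
    intro p
    have e1 : s * (s * p.1 + t * p.2) - t * (- t * p.1 + s * p.2) = p.1 := by
      linear_combination p.1 * hst
    have e2 : t * (s * p.1 + t * p.2) + s * (- t * p.1 + s * p.2) = p.2 := by
      linear_combination p.2 * hst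
    simp only [hW, e1, e2]
  have hWi : Integrable W (γ.prod γ) := by
    rw [← hrot.integrable_comp hWc.aestronglyMeasurable]
    exact (hAi.add hBi').congr (Filter.Eventually.of_forall fun p => (hWr p).symm)
  have hWint : ∫ q, W q ∂(γ.prod γ) = θ * Real.log I - θ * h1c := by
    rw [← hrot.map_eq, integral_map hrot.measurable.aemeasurable hWc.aestronglyMeasurable]
    simp_rw [hWr]
    rw [integral_add hAi hBi', integral_prod _ hAi, integral_fun_fst (μ := γ) (ν := γ) (fun z => θ * Real.log (τ z))]
    have e1 : ∫ x, ∫ y, A (x, y) ∂γ ∂γ = ∫ x, L (T x) ∂γ := rfl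
    simp_rw [hlogτ]
    have hi1 : Integrable (fun z => θ * Real.log I + θ * Real.log (gaussianPDFReal 0 1 z)) γ :=
      (integrable_const _).add (integrable_log_pdf.const_mul θ)
    rw [e1, integral_sub hi1 hLTi, integral_add (integrable_const _) (integrable_log_pdf.const_mul θ),
      integral_const_mul θ (fun a => Real.log (gaussianPDFReal 0 1 a)), integral_log_pdf]
    simp
    ring
  have hslice : ∀ v, Integrable (fun u => W (u, v)) γ → ∫ u, W (u, v) ∂γ ≤ Real.log m - C0c b c θ - h1c := by
    intro v hv
    set Θ : ℝ → ℝ := fun u => b * T (s * u - t * v) + c * (t * u + s * v) with hΘ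
    set Θ' : ℝ → ℝ := fun u => b * s * τ (s * u - t * v) + c * t with hΘ'
    have hd : ∀ u, HasDerivAt Θ (Θ' u) u := by
      intro u
      have d1 : HasDerivAt (fun u => s * u - t * v) s u := by
        simpa using ((hasDerivAt_id u).const_mul s).sub_const (t * v)
      have d2 : HasDerivAt (fun u => t * u + s * v) t u := by
        simpa using ((hasDerivAt_id u).const_mul t).add_const (s * v)
      have d3 := ((hT (s * u - t * v)).comp u d1).const_mul b
      have := d3.add (d2.const_mul c)
      have e : b * (I * gaussianPDFReal 0 1 (s * u - t * v) / G (T (s * u - t * v)) * s) + c * t = Θ' u := by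
        simp only [hΘ', hτ]; ring
      rw [← e]; exact this
    have hΘp : ∀ u, 0 < Θ' u := fun u => by
      have := hτpos (s * u - t * v)
      rw [hΘ']; positivity
    have hinj : Function.Injective Θ := by
      have : StrictMono Θ := fun x y hxy => by
        have a1 : T (s * x - t * v) < T (s * y - t * v) := hTm (by nlinarith)
        have a2 : t * x + s * v < t * y + s * v := by nlinarith
        have := mul_lt_mul_of_pos_left a1 hb
        have := mul_lt_mul_of_pos_left a2 hc
        simp only [hΘ]; linarith
      exact this.injective
    obtain ⟨ci, cle⟩ := cov_le hd (fun u => (hΘp u).le) hinj (fun x => (hfpos x).le) hfi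
    set r : ℝ → ℝ := fun u => Θ' u * f (Θ u) / (m * gaussianPDFReal 0 1 u) with hr
    have er : ∀ u, gaussianPDFReal 0 1 u * r u = m⁻¹ * (Θ' u * f (Θ u)) := fun u => by
      have := (hφ u).ne'
      simp only [hr]; field_simp
    have ri : Integrable r γ := by
      rw [hγ, integrable_gauss_iff]; simp_rw [er]; exact ci.const_mul _
    have rle : ∫ u, r u ∂γ ≤ 1 := by
      rw [hγ, integral_gauss]; simp_rw [er]
      rw [integral_const_mul]
      calc m⁻¹ * ∫ u, Θ' u * f (Θ u) ≤ m⁻¹ * m := by gcongr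
        _ = 1 := by field_simp
    have pt : ∀ u, W (u, v) ≤ (r u - 1) + (Real.log m - C0c b c θ) + Real.log (gaussianPDFReal 0 1 u) := by
      intro u
      have l1 := log_conc hb hc h0 h1 (hτpos (s * u - t * v))
      have rp : 0 < r u := div_pos (mul_pos (hΘp u) (hfpos _)) (mul_pos hmpos (hφ u))
      have l2 := Real.log_le_sub_one_of_pos rp
      have l3 : Real.log (r u) = Real.log (Θ' u) + Real.log (f (Θ u)) - Real.log m - Real.log (gaussianPDFReal 0 1 u) := by
        simp only [hr]
        rw [Real.log_div (mul_pos (hΘp u) (hfpos _)).ne' (mul_pos hmpos (hφ u)).ne',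
          Real.log_mul (hΘp u).ne' (hfpos _).ne', Real.log_mul hmpos.ne' (hφ u).ne']
        ring
      have l4 : W (u, v) = Real.log (f (Θ u)) + θ * Real.log (τ (s * u - t * v)) := rfl
      have l5 : Real.log (Θ' u) = Real.log (b * √θ * τ (s * u - t * v) + c * √(1 - θ)) := rfl
      linarith
    have i1 : Integrable (fun u => (r u - 1) + (Real.log m - C0c b c θ)) γ :=
      (ri.sub (integrable_const _)).add (integrable_const _)
    have i2 : Integrable (fun u => r u - 1) γ := ri.sub (integrable_const _)
    have := integral_mono hv (i1.add integrable_log_pdf) pt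
    refine this.trans ?_
    have e : ∫ u, ((r u - 1) + (Real.log m - C0c b c θ)) + Real.log (gaussianPDFReal 0 1 u) ∂γ
        = (∫ u, r u ∂γ - 1) + (Real.log m - C0c b c θ) - h1c := by
      rw [integral_add i1 integrable_log_pdf, integral_add i2 (integrable_const _),
        integral_sub ri (integrable_const _), integral_log_pdf]
      simp; ring
    refine (le_of_eq e).trans ?_
    linarith
  have hfin : ∫ q, W q ∂(γ.prod γ) ≤ Real.log m - C0c b c θ - h1c := by
    rw [integral_prod_symm _ hWi]
    have := integral_mono_ae hWi.integral_prod_right (integrable_const (Real.log m - C0c b c θ - h1c))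
      (hWi.prod_left_ae.mono fun v hv => hslice v hv)
    simpa using this
  rw [hWint] at hfin
  linarith

end PartD

section PartE
/-- growth bounds -/
def GB {n : ℕ} (K : ℝ) (f : (Fin n → ℝ) → ℝ) : Prop :=
  ∀ x, Real.exp (-(K * (1 + sqn x))) ≤ f x ∧ f x ≤ Real.exp (K - sqn x / K)

/-- average of the logarithm -/
def Lopn {n : ℕ} (b c : ℝ) (f : (Fin n → ℝ) → ℝ) (y : Fin n → ℝ) : ℝ :=
  ∫ z, Real.log (f (b • y + c • z)) ∂(stdGaussN n)

lemma gb_log {n : ℕ} {K : ℝ} {f : (Fin n → ℝ) → ℝ} (hK : 0 < K) (hf : GB K f) (x : Fin n → ℝ) :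
    0 < f x ∧ -(K * (1 + sqn x)) ≤ Real.log (f x) ∧ Real.log (f x) ≤ K - sqn x / K ∧
      |Real.log (f x)| ≤ K * (1 + sqn x) := by
  have h0 : 0 < f x := (Real.exp_pos _).trans_le (hf x).1
  have h1 : -(K * (1 + sqn x)) ≤ Real.log (f x) := (Real.le_log_iff_exp_le h0).2 (hf x).1
  have h2 : Real.log (f x) ≤ K - sqn x / K := (Real.log_le_iff_le_exp h0).2 (hf x).2
  refine ⟨h0, h1, h2, abs_le.2 ⟨h1, h2.trans ?_⟩⟩
  have := sqn_nonneg x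
  have : 0 ≤ sqn x / K := by positivity
  nlinarith [mul_nonneg hK.le (sqn_nonneg x)]

lemma integrable_exp_sqn {n : ℕ} {a : ℝ} (ha : 0 < a) :
    Integrable (fun x : Fin n → ℝ => Real.exp (-a * sqn x)) := by
  have : (fun x : Fin n → ℝ => Real.exp (-a * sqn x)) = fun x => ∏ i, Real.exp (-a * x i ^ 2) := by
    ext x; rw [sqn, Finset.mul_sum, Real.exp_sum]
  rw [this]
  exact Integrable.fintype_prod (f := fun _ y => Real.exp (-a * y ^ 2)) fun i => integrable_exp_neg_mul_sq ha

lemma integral_exp_sqn_pos {n : ℕ} {a : ℝ} (ha : 0 < a) :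
    0 < ∫ x : Fin n → ℝ, Real.exp (-a * sqn x) :=
  integral_exp_pos (integrable_exp_sqn ha)

lemma gb_integrable {n : ℕ} {K : ℝ} {f : (Fin n → ℝ) → ℝ} (hc : Continuous f) (hK : 0 < K) (hf : GB K f) :
    Integrable f := by
  refine ((integrable_exp_sqn (n := n) (a := K⁻¹) (by positivity)).const_mul (Real.exp K)).mono'
    hc.aestronglyMeasurable (Filter.Eventually.of_forall fun x => ?_)
  rw [Real.norm_of_nonneg (gb_log hK hf x).1.le, ← Real.exp_add]
  exact (hf x).2.trans (Real.exp_le_exp.2 (le_of_eq (by ring)))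

lemma gb_logint {n : ℕ} {K : ℝ} {f : (Fin n → ℝ) → ℝ} (hc : Continuous f) (hK : 0 < K) (hf : GB K f)
    (c : ℝ) (x : Fin n → ℝ) : Integrable (fun z => Real.log (f (x + c • z))) (stdGaussN n) := by
  have hl : Continuous fun x => Real.log (f x) := hc.log fun x => (gb_log hK hf x).1.ne'
  refine Integrable.mono' (((integrable_const (1:ℝ)).add (integrable_sqn_add c x)).const_mul K)
    (hl.comp (by fun_prop : Continuous fun z : Fin n → ℝ => x + c • z)).aestronglyMeasurable
    (Filter.Eventually.of_forall fun z => ?_)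
  exact (gb_log hK hf _).2.2.2

lemma sqn_cons {n : ℕ} (x0 : ℝ) (x : Fin n → ℝ) : sqn (Fin.cons x0 x : Fin (n+1) → ℝ) = x0 ^ 2 + sqn x := by
  simp [sqn, Fin.sum_univ_succ]

@[fun_prop]
lemma continuous_cons' {n : ℕ} : Continuous fun p : ℝ × (Fin n → ℝ) => (Fin.cons p.1 p.2 : Fin (n+1) → ℝ) := by
  refine continuous_pi fun i => ?_
  refine Fin.cases ?_ (fun j => ?_) i
  · simpa using continuous_fst
  · simp; fun_prop

lemma mp_cons_vol {n : ℕ} : MeasurePreserving (fun p : ℝ × (Fin n → ℝ) => (Fin.cons p.1 p.2 : Fin (n+1) → ℝ))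
    (volume.prod volume) volume := by
  have := (volume_preserving_piFinSuccAbove (fun _ : Fin (n+1) => ℝ) 0).symm
  have e : (fun p : ℝ × (Fin n → ℝ) => (Fin.cons p.1 p.2 : Fin (n+1) → ℝ))
      = (MeasurableEquiv.piFinSuccAbove (fun _ : Fin (n+1) => ℝ) 0).symm := by
    funext p; ext i
    simp [MeasurableEquiv.piFinSuccAbove, Fin.insertNthEquiv]
  rw [e]
  exact this

lemma mp_cons_gauss {n : ℕ} : MeasurePreserving (fun p : ℝ × (Fin n → ℝ) => (Fin.cons p.1 p.2 : Fin (n+1) → ℝ))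
    ((gaussianReal 0 1).prod (stdGaussN n)) (stdGaussN (n+1)) := by
  have := (measurePreserving_piFinSuccAbove (fun _ : Fin (n+1) => gaussianReal 0 1) 0).symm
  have e : (fun p : ℝ × (Fin n → ℝ) => (Fin.cons p.1 p.2 : Fin (n+1) → ℝ))
      = (MeasurableEquiv.piFinSuccAbove (fun _ : Fin (n+1) => ℝ) 0).symm := by
    funext p; ext i
    simp [MeasurableEquiv.piFinSuccAbove, Fin.insertNthEquiv]
  rw [e]
  exact this

lemma marg_GC1 {n : ℕ} {K : ℝ} {f : (Fin (n+1) → ℝ) → ℝ} (hc : Continuous f) (hK : 0 < K) (hf : GB K f) :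
    GC1 (fun x0 => ∫ x : Fin n → ℝ, f (Fin.cons x0 x)) := by
  have hKi : 0 < K⁻¹ := by positivity
  have b2 : ∀ x0 (x : Fin n → ℝ), f (Fin.cons x0 x) ≤ Real.exp (K - x0 ^ 2 / K) * Real.exp (-K⁻¹ * sqn x) := by
    intro x0 x
    refine (hf _).2.trans (le_of_eq ?_)
    rw [← Real.exp_add, sqn_cons]; congr 1; ring
  have b1 : ∀ x0 (x : Fin n → ℝ), Real.exp (-(K * (1 + x0 ^ 2))) * Real.exp (-K * sqn x) ≤ f (Fin.cons x0 x) := by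
    intro x0 x
    refine le_trans (le_of_eq ?_) (hf _).1
    rw [← Real.exp_add, sqn_cons]; congr 1; ring
  have hcs : ∀ x0, Continuous fun x : Fin n → ℝ => f (Fin.cons x0 x) := fun x0 =>
    hc.comp (continuous_cons'.comp (by fun_prop : Continuous fun x : Fin n → ℝ => (x0, x)))
  have hpos : ∀ x0 (x : Fin n → ℝ), 0 < f (Fin.cons x0 x) := fun x0 x => (gb_log hK hf _).1
  have hi : ∀ x0, Integrable fun x : Fin n → ℝ => f (Fin.cons x0 x) := fun x0 => by
    refine ((integrable_exp_sqn (n := n) hKi).const_mul (Real.exp (K - x0 ^ 2 / K))).mono'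
      (hcs x0).aestronglyMeasurable (Filter.Eventually.of_forall fun x => ?_)
    rw [Real.norm_of_nonneg (hpos x0 x).le]; exact b2 x0 x
  set c1 := ∫ x : Fin n → ℝ, Real.exp (-K * sqn x) with hc1
  set c2 := ∫ x : Fin n → ℝ, Real.exp (-K⁻¹ * sqn x) with hc2
  have c1p : 0 < c1 := integral_exp_sqn_pos hK
  have c2p : 0 < c2 := integral_exp_sqn_pos hKi
  refine ⟨continuous_iff_continuousAt.2 fun y0 => ?_, K + |Real.log c1| + |Real.log c2|, by positivity, fun x0 => ⟨?_, ?_⟩⟩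
  · refine continuousAt_of_dominated (bound := fun x => Real.exp K * Real.exp (-K⁻¹ * sqn x))
      (Filter.Eventually.of_forall fun y => (hcs y).aestronglyMeasurable) (Filter.Eventually.of_forall fun y =>
      Filter.Eventually.of_forall fun x => ?_) ((integrable_exp_sqn hKi).const_mul _)
      (Filter.Eventually.of_forall fun x => ?_)
    · rw [Real.norm_of_nonneg (hpos y x).le]
      refine (b2 y x).trans ?_
      have : 0 ≤ y ^ 2 / K := by positivity
      gcongr; linarith
    · exact (hc.comp (continuous_cons'.comp (by fun_prop : Continuous fun x0 : ℝ => (x0, x)))).continuousAt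
  · have h1 := integral_mono ((integrable_exp_sqn (n := n) hK).const_mul (Real.exp (-(K * (1 + x0 ^ 2))))) (hi x0) (b1 x0)
    rw [integral_const_mul, ← hc1] at h1
    refine le_trans ?_ h1
    rw [← Real.exp_log c1p, ← Real.exp_add, Real.log_exp]
    refine Real.exp_le_exp.2 ?_
    have := neg_abs_le (Real.log c1)
    have := abs_nonneg (Real.log c1)
    have := abs_nonneg (Real.log c2)
    nlinarith [mul_nonneg (abs_nonneg (Real.log c1)) (sq_nonneg x0), mul_nonneg (abs_nonneg (Real.log c2)) (sq_nonneg x0)]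
  · have h1 := integral_mono (hi x0) ((integrable_exp_sqn (n := n) hKi).const_mul (Real.exp (K - x0 ^ 2 / K))) (b2 x0)
    rw [integral_const_mul, ← hc2] at h1
    refine h1.trans ?_
    rw [← Real.exp_log c2p, ← Real.exp_add, Real.log_exp]
    refine Real.exp_le_exp.2 ?_
    have := le_abs_self (Real.log c2)
    have h3 := abs_nonneg (Real.log c1)
    have h4 := abs_nonneg (Real.log c2)
    have : x0 ^ 2 / (K + |Real.log c1| + |Real.log c2|) ≤ x0 ^ 2 / K := by
      gcongr; linarith
    linarith

lemma slice_GB {n : ℕ} {K : ℝ} {f : (Fin (n+1) → ℝ) → ℝ} (hK : 0 < K) (hf : GB K f) (x0 : ℝ) :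
    GB (K * (1 + x0 ^ 2)) (fun x : Fin n → ℝ => f (Fin.cons x0 x)) := by
  intro x
  have hs := sqn_nonneg x
  obtain ⟨h1, h2⟩ := hf (Fin.cons x0 x)
  rw [sqn_cons] at h1 h2
  refine ⟨le_trans (Real.exp_le_exp.2 ?_) h1, h2.trans (Real.exp_le_exp.2 ?_)⟩
  · nlinarith [mul_nonneg hK.le (mul_nonneg (sq_nonneg x0) hs)]
  · have : sqn x / (K * (1 + x0 ^ 2)) ≤ sqn x / K := by
      gcongr; nlinarith [sq_nonneg x0]
    have h3 : (x0 ^ 2 + sqn x) / K = x0 ^ 2 / K + sqn x / K := by ring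
    have : 0 ≤ x0 ^ 2 / K := by positivity
    nlinarith [sq_nonneg x0]

lemma exp_jensen {μ : Measure ℝ} [IsProbabilityMeasure μ] {g : ℝ → ℝ} (hg : Integrable g μ) :
    ENNReal.ofReal (Real.exp (∫ x, g x ∂μ)) ≤ ∫⁻ x, ENNReal.ofReal (Real.exp (g x)) ∂μ := by
  by_cases h : ∫⁻ x, ENNReal.ofReal (Real.exp (g x)) ∂μ = ⊤
  · rw [h]; exact le_top
  have hm : AEStronglyMeasurable (fun x => Real.exp (g x)) μ :=
    Real.continuous_exp.comp_aestronglyMeasurable hg.1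
  have hi : Integrable (fun x => Real.exp (g x)) μ := by
    refine ⟨hm, ?_⟩
    rw [hasFiniteIntegral_iff_ofReal (Filter.Eventually.of_forall fun x => (Real.exp_pos _).le)]
    exact lt_top_iff_ne_top.2 h
  rw [← ofReal_integral_eq_lintegral_ofReal hi (Filter.Eventually.of_forall fun x => (Real.exp_pos _).le)]
  exact ENNReal.ofReal_le_ofReal (convexOn_exp.map_integral_le Real.continuous_exp.continuousOn isClosed_univ
    (Filter.Eventually.of_forall fun _ => Set.mem_univ _) hg hi)

lemma gc1_pos {f : ℝ → ℝ} (h : GC1 f) : 0 < ∫ x, f x := by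
  have hfi := gc1_integrable h
  have hp : ∀ x, 0 < f x := fun x => by
    obtain ⟨_, K, hK, hf⟩ := h
    exact (gc1_log hK hf x).1
  rw [integral_pos_iff_support_of_nonneg (fun y => (hp y).le) hfi]
  have : Function.support f = Set.univ := by ext y; simp [(hp y).ne']
  rw [this]; simp

theorem FIn {b c θ : ℝ} (hb : 0 < b) (hc : 0 < c) (h0 : 0 < θ) (h1 : θ < 1) : ∀ (n : ℕ) {K : ℝ}
    {f : (Fin n → ℝ) → ℝ} (_ : Continuous f) (_ : 0 < K) (_ : GB K f),
    ∫⁻ y, ENNReal.ofReal (Real.exp (θ⁻¹ * Lopn b c f y)) ≤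
      ENNReal.ofReal (Real.exp (θ⁻¹ * (Real.log (∫ x, f x) - n * (C0c b c θ + (1 - θ) * h1c)))) := by
  intro n
  induction n with
  | zero =>
    intro K f hfc hK hf
    have e : ∀ x y : Fin 0 → ℝ, x = y := fun x y => Subsingleton.elim _ _
    have h1 : ∀ y, Lopn b c f y = Real.log (f 0) := by
      intro y
      unfold Lopn
      simp_rw [fun z : Fin 0 → ℝ => e (b • y + c • z) 0]
      simp
    have h2 : ∫ x, f x = f 0 := by
      simp_rw [fun z : Fin 0 → ℝ => e z 0]
      rw [integral_const]
      simp [Measure.real, volume_pi, Measure.pi_of_empty]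
    simp_rw [h1, h2]
    rw [lintegral_const]
    simp [volume_pi, Measure.pi_of_empty]
  | succ n ih =>
    intro K f hfc hK hf
    set κ := C0c b c θ + (1 - θ) * h1c with hκ
    set F : ℝ → ℝ := fun x0 => ∫ x : Fin n → ℝ, f (Fin.cons x0 x) with hF
    have hFG : GC1 F := marg_GC1 hfc hK hf
    have hFp := gc1_pos hFG
    have hFpos : ∀ x, 0 < F x := fun x => by
      obtain ⟨_, K, hK, hf⟩ := hFG
      exact (gc1_log hK hf x).1
    have hfi := gb_integrable hfc hK hf
    have hcc : Continuous fun p : ℝ × (Fin n → ℝ) => f (Fin.cons p.1 p.2) := hfc.comp continuous_cons'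
    have hlc : Continuous fun p : ℝ × (Fin n → ℝ) => Real.log (f (Fin.cons p.1 p.2)) :=
      hcc.log fun p => (gb_log hK hf _).1.ne'
    have hIF : ∫ x, f x = ∫ x0, F x0 := by
      have hfi' := (mp_cons_vol.integrable_comp hfc.aestronglyMeasurable).2 hfi
      rw [← mp_cons_vol.map_eq, integral_map mp_cons_vol.measurable.aemeasurable hfc.aestronglyMeasurable]
      exact integral_prod _ hfi'
    set ell : ℝ → (Fin n → ℝ) → ℝ := fun x0 y => Lopn b c (fun x => f (Fin.cons x0 x)) y with hell
    set k : ℝ → ℝ := fun x0 => Real.log (F x0) - n * κ with hk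
    have hkc : Continuous k := (hFG.1.log fun x => (hFpos x).ne').sub continuous_const
    have hellm : Measurable fun p : ℝ × (Fin n → ℝ) => ell p.1 p.2 := by
      have : Continuous fun q : (ℝ × (Fin n → ℝ)) × (Fin n → ℝ) => Real.log (f (Fin.cons q.1.1 (b • q.1.2 + c • q.2))) :=
        hlc.comp (by fun_prop : Continuous fun q : (ℝ × (Fin n → ℝ)) × (Fin n → ℝ) => (q.1.1, b • q.1.2 + c • q.2))
      exact (this.stronglyMeasurable.integral_prod_right' (ν := stdGaussN n)).measurable
    have hstep : ∀ x0, ∫⁻ y, ENNReal.ofReal (Real.exp (θ⁻¹ * (ell x0 y - k x0))) ≤ 1 := by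
      intro x0
      have hK' : 0 < K * (1 + x0 ^ 2) := by positivity
      have h3 := ih (f := fun x => f (Fin.cons x0 x))
        (hcc.comp (by fun_prop : Continuous fun x : Fin n → ℝ => (x0, x))) hK' (slice_GB hK hf x0)
      have h4 : ∀ y, ENNReal.ofReal (Real.exp (θ⁻¹ * (ell x0 y - k x0)))
          = ENNReal.ofReal (Real.exp (- (θ⁻¹ * k x0))) * ENNReal.ofReal (Real.exp (θ⁻¹ * ell x0 y)) := by
        intro y
        rw [← ENNReal.ofReal_mul (Real.exp_pos _).le, ← Real.exp_add]
        congr 2; ring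
      simp_rw [h4]
      rw [lintegral_const_mul' _ _ ENNReal.ofReal_ne_top]
      refine (mul_le_mul_right h3 _).trans ?_
      rw [← ENNReal.ofReal_mul (Real.exp_pos _).le, ← Real.exp_add]
      simp [hk, hF]
    have hL : ∀ y0 (y : Fin n → ℝ), Integrable (fun z0 => ell (b * y0 + c * z0) y) (gaussianReal 0 1) ∧
        Lopn b c f (Fin.cons y0 y) = ∫ z0, ell (b * y0 + c * z0) y ∂(gaussianReal 0 1) := by
      intro y0 y
      have e : ∀ p : ℝ × (Fin n → ℝ), b • (Fin.cons y0 y : Fin (n+1) → ℝ) + c • (Fin.cons p.1 p.2 : Fin (n+1) → ℝ)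
          = Fin.cons (b * y0 + c * p.1) (b • y + c • p.2) := by
        intro p; ext i; refine Fin.cases ?_ (fun j => ?_) i <;> simp
      have hi := gb_logint hfc hK hf c (b • (Fin.cons y0 y : Fin (n+1) → ℝ))
      have hi' := (mp_cons_gauss.integrable_comp hi.1).2 hi
      have e2 : ((fun z => Real.log (f (b • (Fin.cons y0 y : Fin (n+1) → ℝ) + c • z))) ∘
          fun p : ℝ × (Fin n → ℝ) => (Fin.cons p.1 p.2 : Fin (n+1) → ℝ)) =
          fun p => Real.log (f (Fin.cons (b * y0 + c * p.1) (b • y + c • p.2))) := by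
        ext p; simp only [Function.comp, e]
      rw [e2] at hi'
      refine ⟨hi'.integral_prod_left, ?_⟩
      unfold Lopn
      rw [← mp_cons_gauss.map_eq, integral_map mp_cons_gauss.measurable.aemeasurable
        (by rw [mp_cons_gauss.map_eq]; exact hi.1)]
      simp_rw [e]
      exact integral_prod _ hi'
    have hFI := FI1 hFG hb hc h0 h1
    have hkk : ∀ y0, Integrable (fun z0 => k (b * y0 + c * z0)) (gaussianReal 0 1) ∧
        ∫ z0, k (b * y0 + c * z0) ∂(gaussianReal 0 1) = Lop1 b c F y0 - n * κ := by
      intro y0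
      obtain ⟨hc', K', hK', hF'⟩ := hFG
      have := gc1_logint hc' hK' hF' b c y0
      refine ⟨this.sub (integrable_const _), ?_⟩
      simp only [hk]
      rw [integral_sub this (integrable_const _)]
      simp [Lop1]
    have hin : ∀ y0, ∫⁻ y : Fin n → ℝ, ENNReal.ofReal (Real.exp (θ⁻¹ * Lopn b c f (Fin.cons y0 y)))
        ≤ ENNReal.ofReal (Real.exp (θ⁻¹ * (Lop1 b c F y0 - n * κ))) := by
      intro y0
      have h5 : ∀ y : Fin n → ℝ, ENNReal.ofReal (Real.exp (θ⁻¹ * Lopn b c f (Fin.cons y0 y))) ≤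
          ENNReal.ofReal (Real.exp (θ⁻¹ * (Lop1 b c F y0 - n * κ))) *
          ∫⁻ z0, ENNReal.ofReal (Real.exp (θ⁻¹ * (ell (b * y0 + c * z0) y - k (b * y0 + c * z0)))) ∂(gaussianReal 0 1) := by
        intro y
        obtain ⟨i1, e1⟩ := hL y0 y
        obtain ⟨i2, e2⟩ := hkk y0
        have := exp_jensen ((i1.sub i2).const_mul θ⁻¹)
        refine le_trans (le_of_eq ?_) (mul_le_mul_right this _)
        rw [integral_const_mul]
        simp only [Pi.sub_apply]
        rw [integral_sub i1 i2, e1, e2, ← ENNReal.ofReal_mul (Real.exp_pos _).le, ← Real.exp_add]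
        congr 2; ring
      refine (lintegral_mono h5).trans ?_
      rw [lintegral_const_mul' _ _ ENNReal.ofReal_ne_top]
      refine mul_le_of_le_one_right (zero_le) ?_
      rw [lintegral_lintegral_swap]
      · refine (lintegral_mono fun z0 => hstep (b * y0 + c * z0)).trans ?_
        simp
      · have h6 : Measurable fun p : (Fin n → ℝ) × ℝ => ell (b * y0 + c * p.2) p.1 :=
          hellm.comp (by fun_prop : Measurable fun p : (Fin n → ℝ) × ℝ => (b * y0 + c * p.2, p.1))
        have h7 : Measurable fun p : (Fin n → ℝ) × ℝ => k (b * y0 + c * p.2) := hkc.measurable.comp (by fun_prop)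
        exact ((((h6.sub h7).const_mul θ⁻¹).exp).ennreal_ofReal).aemeasurable
    have hLm : Measurable (Lopn b c f) := by
      have hl : Continuous fun x => Real.log (f x) := hfc.log fun x => (gb_log hK hf x).1.ne'
      have : Continuous fun q : (Fin (n+1) → ℝ) × (Fin (n+1) → ℝ) => Real.log (f (b • q.1 + c • q.2)) :=
        hl.comp (by fun_prop)
      exact (this.stronglyMeasurable.integral_prod_right' (ν := stdGaussN (n+1))).measurable
    have hmm : Measurable fun y => ENNReal.ofReal (Real.exp (θ⁻¹ * Lopn b c f y)) :=
      ((hLm.const_mul _).exp).ennreal_ofReal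
    have hsp : ∫⁻ y, ENNReal.ofReal (Real.exp (θ⁻¹ * Lopn b c f y)) =
        ∫⁻ y0 : ℝ, ∫⁻ y : Fin n → ℝ, ENNReal.ofReal (Real.exp (θ⁻¹ * Lopn b c f (Fin.cons y0 y))) := by
      rw [← mp_cons_vol.map_eq, lintegral_map hmm mp_cons_vol.measurable]
      exact lintegral_prod _ (hmm.comp mp_cons_vol.measurable).aemeasurable
    rw [hsp]
    refine (lintegral_mono hin).trans ?_
    have hGG := gc1_exp_Lop1 (c := c) hFG hb.ne' h0
    have h8 : ∀ y0, ENNReal.ofReal (Real.exp (θ⁻¹ * (Lop1 b c F y0 - n * κ)))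
          = ENNReal.ofReal (Real.exp (- (θ⁻¹ * (n * κ)))) * ENNReal.ofReal (Real.exp (θ⁻¹ * Lop1 b c F y0)) := by
        intro y
        rw [← ENNReal.ofReal_mul (Real.exp_pos _).le, ← Real.exp_add]
        congr 2; ring
    simp_rw [h8]
    rw [lintegral_const_mul' _ _ ENNReal.ofReal_ne_top, ← ofReal_integral_eq_lintegral_ofReal
      (gc1_integrable hGG) (Filter.Eventually.of_forall fun x => (Real.exp_pos _).le),
      ← ENNReal.ofReal_mul (Real.exp_pos _).le, hIF]
    refine ENNReal.ofReal_le_ofReal ?_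
    have hIp := gc1_pos hGG
    rw [← Real.exp_log hIp, ← Real.exp_add]
    refine Real.exp_le_exp.2 ?_
    have h9 : Real.log (∫ x, Real.exp (θ⁻¹ * Lop1 b c F x)) ≤ θ⁻¹ * (Real.log (∫ x, F x) - C0c b c θ - (1 - θ) * h1c) := by
      rw [← div_eq_inv_mul, le_div_iff₀ h0]; linarith
    push_cast
    have : κ = C0c b c θ + (1 - θ) * h1c := hκ
    have h10 : θ⁻¹ * (Real.log (∫ x, F x) - (n + 1) * κ) = θ⁻¹ * (Real.log (∫ x, F x) - C0c b c θ - (1 - θ) * h1c) - θ⁻¹ * (n * κ) := by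
      rw [this]; ring
    linarith

end PartE

section PartF
lemma integral_gd {n : ℕ} {v : ℝ} (hv : 0 < v) : Integrable (gd (n := n) v) ∧ ∫ x : Fin n → ℝ, gd v x = 1 := by
  lift v to NNReal using hv.le
  have hv' : v ≠ 0 := by rintro rfl; simp at hv
  refine ⟨integrable_gd, ?_⟩
  simp_rw [gd_eq_prod]
  rw [integral_fintype_prod_volume_eq_prod (f := fun _ y => gaussianPDFReal 0 v y)]
  simp [integral_gaussianPDFReal_eq_one 0 hv']

lemma log_gd {n : ℕ} {v : ℝ} (hv : 0 < v) (x : Fin n → ℝ) :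
    Real.log (gd v x) = -(n / 2 * Real.log (2 * Real.pi * v)) - sqn x / (2 * v) := by
  unfold gd
  have := Real.pi_pos
  rw [Real.log_mul (by positivity) (by positivity), Real.log_exp, Real.log_pow, Real.log_inv,
    Real.log_sqrt (by positivity)]
  ring

section mix
variable {ι : Type} [Fintype ι] {n : ℕ}

/-- density of a uniform mixture of unit Gaussians -/
def mix (X : ι → Fin n → ℝ) (y : Fin n → ℝ) : ℝ := (Fintype.card ι : ℝ)⁻¹ * ∑ m, gd 1 (y - X m)

/-- expectation under the mixture -/
def mexp (X : ι → Fin n → ℝ) (ψ : (Fin n → ℝ) → ℝ) : ℝ :=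
  (Fintype.card ι : ℝ)⁻¹ * ∑ m, ∫ z, ψ (X m + z) ∂(stdGaussN n)

/-- differential entropy of the mixture -/
def Hent (X : ι → Fin n → ℝ) : ℝ := - mexp X (fun y => Real.log (mix X y))

lemma mix_cont (X : ι → Fin n → ℝ) : Continuous (mix X) := by unfold mix; fun_prop

lemma sqn_sub_le (x y : Fin n → ℝ) : sqn (y - x) ≤ 2 * sqn y + 2 * sqn x := by
  unfold sqn
  rw [Finset.mul_sum, Finset.mul_sum, ← Finset.sum_add_distrib]
  refine Finset.sum_le_sum fun i _ => ?_
  simp only [Pi.sub_apply]; nlinarith [sq_nonneg (y i + x i)]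

lemma sqn_le_sub (x y : Fin n → ℝ) : sqn y ≤ 2 * sqn (y - x) + 2 * sqn x := by
  unfold sqn
  rw [Finset.mul_sum, Finset.mul_sum, ← Finset.sum_add_distrib]
  refine Finset.sum_le_sum fun i _ => ?_
  simp only [Pi.sub_apply]; nlinarith [sq_nonneg (y i - 2 * x i)]

lemma gd_GB (x : Fin n → ℝ) {K : ℝ} (hK : |(n / 2 * Real.log (2 * Real.pi * 1))| + sqn x + 4 ≤ K) :
    GB K (fun y => gd 1 (y - x)) := by
  intro y
  have hx := sqn_nonneg x
  have hy := sqn_nonneg y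
  set A := (n / 2 * Real.log (2 * Real.pi * 1)) with hA
  have hK4 : 4 ≤ K := by have := abs_nonneg A; linarith
  simp only []
  rw [← Real.exp_log (gd_pos one_pos (y - x)), log_gd one_pos, ← hA]
  have h1 := sqn_sub_le x y
  have h2 := sqn_le_sub x y
  have h3 := le_abs_self A
  have h4 := neg_abs_le A
  have h5 : sqn y / K ≤ sqn y / 4 := by gcongr
  refine ⟨Real.exp_le_exp.2 ?_, Real.exp_le_exp.2 ?_⟩
  · nlinarith
  · linarith

variable [Nonempty ι]

lemma mix_GB (X : ι → Fin n → ℝ) : ∃ K : ℝ, 0 < K ∧ GB K (mix X) := by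
  refine ⟨|(n / 2 * Real.log (2 * Real.pi * 1))| + ∑ m, sqn (X m) + 4, ?_, ?_⟩
  · have : 0 ≤ ∑ m, sqn (X m) := Finset.sum_nonneg fun m _ => sqn_nonneg _
    positivity
  · have hN : (0:ℝ) < Fintype.card ι := by exact_mod_cast Fintype.card_pos
    have h : ∀ m, GB (|(n / 2 * Real.log (2 * Real.pi * 1))| + ∑ m, sqn (X m) + 4) (fun y => gd 1 (y - X m)) := by
      intro m
      refine gd_GB _ ?_
      have := Finset.single_le_sum (fun m _ => sqn_nonneg (X m)) (Finset.mem_univ m)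
      linarith
    intro y
    unfold mix
    rw [← div_eq_inv_mul, le_div_iff₀ hN, div_le_iff₀ hN]
    constructor
    · have := Finset.card_nsmul_le_sum Finset.univ (fun m => gd 1 (y - X m)) _ fun m _ => (h m y).1
      simpa [mul_comm] using this
    · have := Finset.sum_le_card_nsmul Finset.univ (fun m => gd 1 (y - X m)) _ fun m _ => (h m y).2
      simpa [mul_comm] using this

lemma mix_pos (X : ι → Fin n → ℝ) (y : Fin n → ℝ) : 0 < mix X y := by
  obtain ⟨K, hK, h⟩ := mix_GB X
  exact (gb_log hK h y).1

lemma card_pos' : (0:ℝ) < Fintype.card ι := by exact_mod_cast Fintype.card_pos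

lemma logmix_int (X : ι → Fin n → ℝ) (x : Fin n → ℝ) :
    Integrable (fun z => Real.log (mix X (x + z))) (stdGaussN n) := by
  obtain ⟨K, hK, h⟩ := mix_GB X
  simpa using gb_logint (mix_cont X) hK h 1 x

lemma mix_integral (X : ι → Fin n → ℝ) : Integrable (mix X) ∧ ∫ y, mix X y = 1 := by
  have hi : ∀ m, Integrable (fun y => gd 1 (y - X m)) := fun m => (integral_gd one_pos).1.comp_sub_right _
  refine ⟨(integrable_finsetSum _ fun m _ => hi m).const_mul _, ?_⟩
  unfold mix
  rw [integral_const_mul, integral_finsetSum _ fun m _ => hi m]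
  simp_rw [integral_sub_right_eq_self (fun y => gd (n := n) 1 y), (integral_gd (n := n) one_pos).2]
  have := (card_pos' (ι := ι)).ne'
  simp [this]

lemma int_shift (x : Fin n → ℝ) (ψ : (Fin n → ℝ) → ℝ) :
    (Integrable (fun z => ψ (x + z)) (stdGaussN n) ↔ Integrable (fun y => gd 1 (y - x) * ψ y)) ∧
    ∫ z, ψ (x + z) ∂(stdGaussN n) = ∫ y, gd 1 (y - x) * ψ y := by
  rw [integrable_stdGaussN_iff, integral_stdGaussN]
  have e : ∀ z, gd 1 z * ψ (x + z) = (fun y => gd 1 (y - x) * ψ y) (x + z) := fun z => by simp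
  simp_rw [e]
  refine ⟨⟨fun h => ?_, fun h => h.comp_add_left x⟩, integral_add_left_eq_self (fun y => gd 1 (y - x) * ψ y) x⟩
  have := h.comp_add_left (-x)
  simpa using this

lemma div_mix (X : ι → Fin n → ℝ) {u : (Fin n → ℝ) → ℝ} (hu : Integrable u) :
    (∀ m, Integrable (fun z => u (X m + z) / mix X (X m + z)) (stdGaussN n)) ∧
      mexp X (fun y => u y / mix X y) = ∫ y, u y := by
  have hN := card_pos' (ι := ι)
  have hi : ∀ m, Integrable (fun y => gd 1 (y - X m) * (u y / mix X y)) := by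
    intro m
    have h2 : AEStronglyMeasurable (fun y => gd 1 (y - X m) * (u y / mix X y)) volume :=
      ((continuous_gd 1).comp (continuous_id.sub continuous_const)).aestronglyMeasurable.mul
        (hu.1.div₀ (mix_cont X).aestronglyMeasurable)
    refine (hu.norm.const_mul (Fintype.card ι : ℝ)).mono' h2 (Filter.Eventually.of_forall fun y => ?_)
    have hp := mix_pos X y
    rw [norm_mul, norm_div, Real.norm_of_nonneg (gd_pos one_pos _).le, Real.norm_of_nonneg hp.le,
      mul_div_assoc', div_le_iff₀ hp]
    have : gd 1 (y - X m) ≤ Fintype.card ι * mix X y := by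
      unfold mix
      rw [← mul_assoc, mul_inv_cancel₀ hN.ne', one_mul]
      exact Finset.single_le_sum (f := fun m => gd 1 (y - X m)) (fun m _ => (gd_pos one_pos _).le) (Finset.mem_univ m)
    nlinarith [norm_nonneg (u y)]
  refine ⟨fun m => ((int_shift (X m) (fun y => u y / mix X y)).1).2 (hi m), ?_⟩
  unfold mexp
  simp_rw [fun m => (int_shift (X m) (fun y => u y / mix X y)).2]
  rw [← integral_finsetSum _ fun m _ => hi m, ← integral_const_mul]
  refine integral_congr_ae (Filter.Eventually.of_forall fun y => ?_)
  have hp := (mix_pos X y).ne'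
  simp only []
  rw [← Finset.sum_mul, ← mul_assoc]
  change mix X y * _ = _
  field_simp

lemma mexp_mono {X : ι → Fin n → ℝ} {f g : (Fin n → ℝ) → ℝ}
    (hf : ∀ m, Integrable (fun z => f (X m + z)) (stdGaussN n))
    (hg : ∀ m, Integrable (fun z => g (X m + z)) (stdGaussN n)) (h : ∀ y, f y ≤ g y) : mexp X f ≤ mexp X g := by
  unfold mexp
  refine mul_le_mul_of_nonneg_left (Finset.sum_le_sum fun m _ => ?_) (by positivity)
  exact integral_mono (hf m) (hg m) fun z => h _

lemma mexp_add {X : ι → Fin n → ℝ} {f g : (Fin n → ℝ) → ℝ}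
    (hf : ∀ m, Integrable (fun z => f (X m + z)) (stdGaussN n))
    (hg : ∀ m, Integrable (fun z => g (X m + z)) (stdGaussN n)) :
    mexp X (fun y => f y + g y) = mexp X f + mexp X g := by
  unfold mexp
  simp_rw [fun m => integral_add (hf m) (hg m)]
  rw [Finset.sum_add_distrib, mul_add]

lemma mexp_const {X : ι → Fin n → ℝ} (c : ℝ) : mexp X (fun _ => c) = c := by
  unfold mexp
  have := (card_pos' (ι := ι)).ne'
  simp

lemma gibbs (X : ι → Fin n → ℝ) {u : (Fin n → ℝ) → ℝ} (hu : Integrable u) (hp : ∀ y, 0 < u y)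
    (hl : ∀ m, Integrable (fun z => Real.log (u (X m + z))) (stdGaussN n)) :
    mexp X (fun y => Real.log (u y)) + Hent X ≤ (∫ y, u y) - 1 := by
  obtain ⟨h1, h2⟩ := div_mix X hu
  have h3 : mexp X (fun y => Real.log (u y)) ≤ mexp X (fun y => (u y / mix X y + (-1)) + Real.log (mix X y)) := by
    refine mexp_mono hl (fun m => ((h1 m).add (integrable_const _)).add (logmix_int X _)) fun y => ?_
    have := Real.log_le_sub_one_of_pos (div_pos (hp y) (mix_pos X y))
    rw [Real.log_div (hp y).ne' (mix_pos X y).ne'] at this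
    linarith
  rw [mexp_add (f := fun y => u y / mix X y + (-1)) (fun m => (h1 m).add (integrable_const _)) (fun m => logmix_int X _),
    mexp_add (f := fun y => u y / mix X y) h1 (fun m => integrable_const _), mexp_const, h2] at h3
  unfold Hent
  linarith

lemma Hent_shift (X : ι → Fin n → ℝ) (d : Fin n → ℝ) : Hent (fun m => X m + d) = Hent X := by
  have e : ∀ m z, mix (fun m => X m + d) (X m + d + z) = mix X (X m + z) := by
    intro m z
    unfold mix
    refine congrArg _ (Finset.sum_congr rfl fun k _ => congrArg _ ?_)
    ext i; simp only [Pi.add_apply, Pi.sub_apply]; ring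
  unfold Hent mexp
  simp_rw [e]

lemma sqn_neg (x : Fin n → ℝ) : sqn (-x) = sqn x := by simp [sqn]

lemma gd_neg (v : ℝ) (x : Fin n → ℝ) : gd v (-x) = gd v x := by unfold gd; rw [sqn_neg]

lemma Hent_neg (X : ι → Fin n → ℝ) : Hent (fun m => - X m) = Hent X := by
  unfold Hent mexp
  refine congrArg _ (congrArg _ (Finset.sum_congr rfl fun m _ => ?_))
  rw [integral_stdGaussN, integral_stdGaussN, ← integral_neg_eq_self]
  refine integral_congr_ae (Filter.Eventually.of_forall fun z => ?_)
  simp only [gd_neg]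
  refine congrArg _ (congrArg _ ?_)
  unfold mix
  refine congrArg _ (Finset.sum_congr rfl fun k _ => ?_)
  rw [← gd_neg]; refine congrArg _ ?_
  ext i; simp only [Pi.add_apply, Pi.sub_apply, Pi.neg_apply]; ring

lemma integral_log_gd : ∫ z : Fin n → ℝ, Real.log (gd 1 z) ∂(stdGaussN n) = - (n * h1c) := by
  simp_rw [log_gd one_pos]
  rw [integral_sub (integrable_const _) (integrable_sqn.div_const _), integral_div, integral_sqn]
  simp [h1c]; ring

lemma Hent_const (x : Fin n → ℝ) : Hent (fun _ : ι => x) = n * h1c := by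
  have hN := (card_pos' (ι := ι)).ne'
  have e : ∀ y, mix (fun _ : ι => x) y = gd 1 (y - x) := fun y => by
    unfold mix; simp [hN]
  unfold Hent mexp
  simp_rw [e, add_sub_cancel_left, integral_log_gd]
  simp [hN]

lemma Hent_le (X : ι → Fin n → ℝ) {v : ℝ} (hv : 0 < v) :
    Hent X ≤ n / 2 * Real.log (2 * Real.pi * v) + ((Fintype.card ι : ℝ)⁻¹ * ∑ m, sqn (X m) + n) / (2 * v) := by
  have hN := (card_pos' (ι := ι)).ne'
  have hi : ∀ m, Integrable (fun z => sqn (X m + z)) (stdGaussN n) := fun m => by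
    simpa using integrable_sqn_add 1 (X m)
  have hi' : ∀ m, ∫ z, sqn (X m + z) ∂(stdGaussN n) = sqn (X m) + n := fun m => by
    simpa using integral_sqn_add 1 (X m)
  have h := gibbs X (u := gd v) (integral_gd hv).1 (gd_pos hv) fun m => by
    simp_rw [log_gd hv]; exact (integrable_const _).sub ((hi m).div_const _)
  rw [(integral_gd hv).2] at h
  have e : mexp X (fun y => Real.log (gd v y)) = -(n / 2 * Real.log (2 * Real.pi * v)) -
      ((Fintype.card ι : ℝ)⁻¹ * ∑ m, sqn (X m) + n) / (2 * v) := by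
    unfold mexp
    simp_rw [log_gd hv]
    simp_rw [fun m => integral_sub (integrable_const (-(n / 2 * Real.log (2 * Real.pi * v)))) ((hi m).div_const (2 * v)), integral_div, hi']
    simp only [integral_const, Finset.sum_sub_distrib, ← Finset.sum_div, Finset.sum_add_distrib]
    simp
    field_simp
  linarith

lemma Hent_ge (X : ι → Fin n → ℝ) : n * h1c ≤ Hent X := by
  have hN := (card_pos' (ι := ι))
  have h : ∀ m, ∫ z, Real.log (mix X (X m + z)) ∂(stdGaussN n) ≤ - (n * h1c) := by
    intro m
    have := gibbs (fun _ : Unit => X m) (mix_integral X).1 (mix_pos X) fun _ => logmix_int X _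
    rw [Hent_const, (mix_integral X).2] at this
    simp [mexp] at this
    linarith
  unfold Hent mexp
  rw [le_neg]
  have := Finset.sum_le_sum fun m (_ : m ∈ Finset.univ) => h m
  have h2 : (Fintype.card ι : ℝ)⁻¹ * ∑ m, ∫ z, Real.log (mix X (X m + z)) ∂(stdGaussN n)
      ≤ (Fintype.card ι : ℝ)⁻¹ * ∑ m : ι, - (n * h1c) := 
    mul_le_mul_of_nonneg_left this (by positivity)
  refine h2.trans (le_of_eq ?_)
  simp [hN.ne']

theorem epi (X : ι → Fin n → ℝ) {b c θ : ℝ} (hb : 0 < b) (hc : 0 < c) (hbc : b ^ 2 + c ^ 2 = 1)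
    (h0 : 0 < θ) (h1 : θ < 1) :
    θ * Hent X + n * (C0c b c θ + (1 - θ) * h1c) ≤ Hent (fun m => b • X m) := by
  set q := mix (fun m => b • X m) with hq
  obtain ⟨K, hK, hGB⟩ := mix_GB (fun m => b • X m)
  set κ := C0c b c θ + (1 - θ) * h1c with hκ
  have hFI := FIn hb hc h0 h1 n (mix_cont (fun m => b • X m)) hK hGB
  rw [(mix_integral (fun m => b • X m)).2] at hFI
  have hLm : Measurable (Lopn b c q) := by
    have hl : Continuous fun x => Real.log (q x) := (mix_cont _).log fun x => (mix_pos _ x).ne'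
    have : Continuous fun q' : (Fin n → ℝ) × (Fin n → ℝ) => Real.log (q (b • q'.1 + c • q'.2)) :=
      hl.comp (by fun_prop)
    exact (this.stronglyMeasurable.integral_prod_right' (ν := stdGaussN n)).measurable
  set G : (Fin n → ℝ) → ℝ := fun y => Real.exp (θ⁻¹ * Lopn b c q y + θ⁻¹ * (n * κ)) with hG
  have hGm : Measurable G := ((hLm.const_mul _).add_const _).exp
  have hGl : ∫⁻ y, ENNReal.ofReal (G y) ≤ 1 := by
    have e : ∀ y, ENNReal.ofReal (G y) = ENNReal.ofReal (Real.exp (θ⁻¹ * (n * κ))) *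
        ENNReal.ofReal (Real.exp (θ⁻¹ * Lopn b c q y)) := fun y => by
      rw [← ENNReal.ofReal_mul (Real.exp_pos _).le, ← Real.exp_add, add_comm]
    simp_rw [e]
    rw [lintegral_const_mul' _ _ ENNReal.ofReal_ne_top]
    refine (mul_le_mul' le_rfl hFI).trans ?_
    rw [← ENNReal.ofReal_mul (Real.exp_pos _).le, ← Real.exp_add]
    simp [hκ]
  have hGi : Integrable G := by
    refine ⟨hGm.aestronglyMeasurable, ?_⟩
    rw [hasFiniteIntegral_iff_ofReal (Filter.Eventually.of_forall fun x => (Real.exp_pos _).le)]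
    exact hGl.trans_lt (by simp)
  have hGint : ∫ y, G y ≤ 1 := by
    rw [integral_eq_lintegral_of_nonneg_ae (Filter.Eventually.of_forall fun x => (Real.exp_pos _).le) hGi.1]
    exact ENNReal.toReal_le_of_le_ofReal zero_le_one (by simpa using hGl)
  have hrot := rotn (n := n) hc.le hbc
  have hLi : ∀ m, Integrable (fun z => Lopn b c q (X m + z)) (stdGaussN n) ∧
      ∫ z, Lopn b c q (X m + z) ∂(stdGaussN n) = ∫ z, Real.log (q (b • X m + z)) ∂(stdGaussN n) := by
    intro m
    have hi := logmix_int (fun m => b • X m) (b • X m)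
    have hi' := (hrot.integrable_comp hi.1).2 hi
    have e : ((fun z => Real.log (mix (fun m => b • X m) (b • X m + z))) ∘
        fun p : (Fin n → ℝ) × (Fin n → ℝ) => b • p.1 + c • p.2) =
        fun p => Real.log (q (b • (X m + p.1) + c • p.2)) := by
      ext p; simp only [Function.comp, hq, smul_add, add_assoc]
    rw [e] at hi'
    refine ⟨hi'.integral_prod_left, ?_⟩
    have h2 : ∫ z, Real.log (q (b • X m + z)) ∂(stdGaussN n) =
        ∫ p, Real.log (q (b • (X m + p.1) + c • p.2)) ∂((stdGaussN n).prod (stdGaussN n)) := by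
      conv_lhs => rw [← hrot.map_eq]
      rw [integral_map hrot.measurable.aemeasurable (by rw [hrot.map_eq]; exact hi.1)]
      exact integral_congr_ae (Filter.Eventually.of_forall fun p => congrFun e p)
    rw [h2, integral_prod _ hi']
    rfl
  have hg := gibbs X hGi (fun y => Real.exp_pos _) fun m => by
    simp only [hG, Real.log_exp]
    exact ((hLi m).1.const_mul _).add (integrable_const _)
  simp only [hG, Real.log_exp] at hg
  rw [mexp_add (f := fun y => θ⁻¹ * Lopn b c q y) (fun m => (hLi m).1.const_mul _) (fun m => integrable_const _), mexp_const] at hg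
  have e2 : mexp X (fun y => θ⁻¹ * Lopn b c q y) = θ⁻¹ * (- Hent (fun m => b • X m)) := by
    unfold Hent mexp
    simp_rw [integral_const_mul, (hLi _).2, ← Finset.mul_sum]
    ring
  rw [e2] at hg
  have h5 : θ⁻¹ * (n * κ - Hent (fun m => b • X m)) ≤ - Hent X := by
    have : ∫ y, Real.exp (θ⁻¹ * Lopn b c q y + θ⁻¹ * (n * κ)) ≤ 1 := hGint
    linarith
  rw [← div_eq_inv_mul, div_le_iff₀ h0] at h5
  linarith

end mix

end PartF

section PartG
section fano
variable {A B : Type} [Fintype A] [Nonempty A] [Fintype B] [Nonempty B] {n : ℕ}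

lemma mexp_uncurry (X : A → B → Fin n → ℝ) (ψ : (Fin n → ℝ) → ℝ) :
    mexp (fun p : A × B => X p.1 p.2) ψ = (Fintype.card A : ℝ)⁻¹ * ∑ w, mexp (X w) ψ := by
  unfold mexp
  rw [Fintype.sum_prod_type, ← Finset.mul_sum, Fintype.card_prod]
  push_cast
  rw [mul_inv, mul_assoc]

lemma fano0 (X : A → B → Fin n → ℝ) (C : A → Set (Fin n → ℝ)) (hC : ∀ w, MeasurableSet (C w))
    (hd : ∀ w w' y, y ∈ C w → y ∈ C w' → w = w') {s : ℝ} (hs : 0 < s) (hs1 : s < 1) {ε : ℝ}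
    (hε : ε = (Fintype.card A : ℝ)⁻¹ * ∑ w, (Fintype.card B : ℝ)⁻¹ * ∑ b,
      (stdGaussN n {z | X w b + z ∉ C w}).toReal) :
    (1 - ε) * Real.log (Fintype.card A * (1 - s)) + ε * Real.log s ≤
      Hent (fun p : A × B => X p.1 p.2) - (Fintype.card A : ℝ)⁻¹ * ∑ w, Hent (X w) := by
  classical
  set M : ℝ := (Fintype.card A : ℝ) with hM
  have hMp : 0 < M := card_pos'
  have hBp : (0:ℝ) < Fintype.card B := card_pos'
  set Y : A × B → Fin n → ℝ := fun p => X p.1 p.2 with hY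
  set t : A → (Fin n → ℝ) → ℝ := fun w y => M * (1 - s) * (C w).indicator 1 y + s with ht
  have h1s : 0 < 1 - s := by linarith
  have hind0 : ∀ w y, 0 ≤ (C w).indicator (1 : (Fin n → ℝ) → ℝ) y ∧ (C w).indicator (1 : (Fin n → ℝ) → ℝ) y ≤ 1 := by
    intro w y
    by_cases h : y ∈ C w <;> simp [h]
  have htp : ∀ w y, s ≤ t w y := fun w y => by
    have := (hind0 w y).1
    have : 0 ≤ M * (1 - s) * (C w).indicator 1 y := by positivity
    simp only [ht]; linarith
  have htp' : ∀ w y, 0 < t w y := fun w y => hs.trans_le (htp w y)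
  have htb : ∀ w y, t w y ≤ M * (1 - s) + s := fun w y => by
    have := (hind0 w y).2
    have h3 : 0 < M * (1 - s) := by positivity
    simp only [ht]; nlinarith
  have htm : ∀ w, Measurable (t w) := fun w =>
    (((measurable_one.indicator (hC w)).const_mul _).add_const _)
  have hmix := mix_integral Y
  have hui : ∀ w, Integrable (fun y => t w y * mix Y y) := fun w => by
    refine hmix.1.bdd_mul (c := M * (1 - s) + s) (htm w).aestronglyMeasurable
      (Filter.Eventually.of_forall fun y => ?_)
    rw [Real.norm_of_nonneg (htp' w y).le]; exact htb w y
  have hlti : ∀ w x, Integrable (fun z => Real.log (t w (x + z))) (stdGaussN n) := by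
    intro w x
    refine Integrable.of_bound (C := |Real.log s| + |Real.log (M * (1 - s) + s)|) ?_ (Filter.Eventually.of_forall fun z => ?_)
    · exact ((htm w).comp (measurable_const_add x)).log.aestronglyMeasurable
    · rw [Real.norm_eq_abs, abs_le]
      have a1 := Real.log_le_log hs (htp w (x + z))
      have a2 := Real.log_le_log (htp' w (x+z)) (htb w (x + z))
      have a3 := neg_abs_le (Real.log s)
      have a4 := le_abs_self (Real.log (M * (1 - s) + s))
      have a5 := abs_nonneg (Real.log s)
      have a6 := abs_nonneg (Real.log (M * (1 - s) + s))
      constructor <;> linarith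
  set l1 := Real.log (M * (1 - s)) with hl1
  set l2 := Real.log s with hl2
  have hltge : ∀ w x, l1 + (l2 - l1) * (stdGaussN n {z | x + z ∉ C w}).toReal ≤
      ∫ z, Real.log (t w (x + z)) ∂(stdGaussN n) := by
    intro w x
    have hS : MeasurableSet {z | x + z ∉ C w} := (measurable_const_add x (hC w)).compl
    have hi : Integrable (fun z => (l2 - l1) * ({z | x + z ∉ C w}).indicator (1 : (Fin n → ℝ) → ℝ) z) (stdGaussN n) :=
      ((integrable_const (1:ℝ)).indicator hS).const_mul _
    have e : ∫ z, (l1 + (l2 - l1) * ({z | x + z ∉ C w}).indicator (1 : (Fin n → ℝ) → ℝ) z) ∂(stdGaussN n) =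
        l1 + (l2 - l1) * (stdGaussN n {z | x + z ∉ C w}).toReal := by
      rw [integral_add (integrable_const _) hi, integral_const_mul, integral_indicator_one hS]
      simp [Measure.real]
    rw [← e]
    refine integral_mono ((integrable_const _).add hi) (hlti w x) fun z => ?_
    by_cases h : x + z ∈ C w
    · have : t w (x + z) = M * (1 - s) + s := by simp [ht, h]
      simp only [Set.indicator, Set.mem_ofPred_eq, h, not_true_eq_false, if_false, this]
      rw [mul_zero, add_zero]
      exact Real.log_le_log (by positivity) (by linarith)
    · have : t w (x + z) = s := by simp [ht, h]
      simp [Set.indicator, h, this]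
      exact le_of_eq hl2
  have hg : ∀ w, mexp (X w) (fun y => Real.log (t w y)) + mexp (X w) (fun y => Real.log (mix Y y)) + Hent (X w)
      ≤ (∫ y, t w y * mix Y y) - 1 := by
    intro w
    have el : ∀ y, Real.log (t w y * mix Y y) = Real.log (t w y) + Real.log (mix Y y) := fun y =>
      Real.log_mul (htp' w y).ne' (mix_pos Y y).ne'
    have := gibbs (X w) (hui w) (fun y => mul_pos (htp' w y) (mix_pos Y y)) fun m => by
      simp_rw [el]; exact (hlti w _).add (logmix_int Y _)
    simp_rw [el] at this
    rwa [mexp_add (fun m => hlti w _) (fun m => logmix_int Y _)] at this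
  have hsum : ∑ w, ∫ y, t w y * mix Y y ≤ M := by
    rw [← integral_finsetSum _ fun w _ => hui w]
    have : ∫ y, M * mix Y y = M := by rw [integral_const_mul, hmix.2, mul_one]
    rw [← this]
    refine integral_mono (integrable_finsetSum _ fun w _ => hui w) (hmix.1.const_mul _) fun y => ?_
    simp only []
    rw [← Finset.sum_mul]
    refine mul_le_mul_of_nonneg_right ?_ (mix_pos Y y).le
    have h1 : ∑ w, (C w).indicator (1 : (Fin n → ℝ) → ℝ) y ≤ 1 := by
      by_cases h : ∃ w, y ∈ C w
      · obtain ⟨w, hw⟩ := h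
        rw [Finset.sum_eq_single w]
        · simp [hw]
        · intro w' _ hne
          have : y ∉ C w' := fun h => hne (hd _ _ _ h hw)
          simp [this]
        · simp
      · push Not at h
        simp [h]
    simp only [ht, Finset.sum_add_distrib, ← Finset.mul_sum, Finset.sum_const, Finset.card_univ, nsmul_eq_mul]
    rw [← hM]
    nlinarith [mul_pos hMp h1s]
  have hall := Finset.sum_le_sum fun w (_ : w ∈ Finset.univ) => hg w
  simp only [Finset.sum_add_distrib, Finset.sum_sub_distrib, Finset.sum_const, Finset.card_univ, nsmul_eq_mul, mul_one] at hall
  have h2 : ∑ w, mexp (X w) (fun y => Real.log (t w y)) ≥ M * ((1 - ε) * l1 + ε * l2) := by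
    have h3 : ∀ w, l1 + (l2 - l1) * ((Fintype.card B : ℝ)⁻¹ * ∑ b, (stdGaussN n {z | X w b + z ∉ C w}).toReal)
        ≤ mexp (X w) (fun y => Real.log (t w y)) := by
      intro w
      unfold mexp
      have := Finset.sum_le_sum fun b (_ : b ∈ Finset.univ) => hltge w (X w b)
      have := mul_le_mul_of_nonneg_left this (by positivity : 0 ≤ (Fintype.card B : ℝ)⁻¹)
      refine le_trans (le_of_eq ?_) this
      rw [Finset.sum_add_distrib, ← Finset.mul_sum]
      simp only [Finset.sum_const, Finset.card_univ, nsmul_eq_mul]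
      field_simp
    have := Finset.sum_le_sum fun w (_ : w ∈ Finset.univ) => h3 w
    refine le_trans (le_of_eq ?_) this
    rw [Finset.sum_add_distrib, ← Finset.mul_sum, hε]
    simp only [Finset.sum_const, Finset.card_univ, nsmul_eq_mul]
    rw [← hM]
    field_simp
    ring
  have h4 : Hent Y = - (M⁻¹ * ∑ w, mexp (X w) (fun y => Real.log (mix Y y))) := by
    rw [Hent, hY, mexp_uncurry]
  rw [← hM] at hall
  have h5 : ∑ w, mexp (X w) (fun y => Real.log (mix Y y)) = - (M * Hent Y) := by
    rw [h4]; field_simp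
  rw [h5] at hall
  have h6 : M * ((1 - ε) * l1 + ε * l2) ≤ M * (Hent Y - M⁻¹ * ∑ w, Hent (X w)) := by
    have : M * (Hent Y - M⁻¹ * ∑ w, Hent (X w)) = M * Hent Y - ∑ w, Hent (X w) := by field_simp
    rw [this]; linarith
  exact le_of_mul_le_mul_left h6 hMp

lemma fano (X : A → B → Fin n → ℝ) (g : (Fin n → ℝ) → A) {s : ℝ} (hs : 0 < s) (hs1 : s < 1) {ε : ℝ}
    (hε : ε = (Fintype.card A : ℝ)⁻¹ * ∑ w, (Fintype.card B : ℝ)⁻¹ * ∑ b,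
      (stdGaussN n {z | g (X w b + z) ≠ w}).toReal) :
    (1 - ε) * Real.log (Fintype.card A * (1 - s)) + ε * Real.log s ≤
      Hent (fun p : A × B => X p.1 p.2) - (Fintype.card A : ℝ)⁻¹ * ∑ w, Hent (X w) := by
  set μ : A → B → Measure (Fin n → ℝ) := fun w b => (stdGaussN n).map (MeasurableEquiv.addLeft (X w b)) with hμ
  have hμa : ∀ w b (S : Set (Fin n → ℝ)), μ w b S = stdGaussN n {z | X w b + z ∈ S} := fun w b S =>
    MeasurableEquiv.map_apply _ _
  set H : A → Set (Fin n → ℝ) := fun w => ⋂ b, toMeasurable (μ w b) {y | g y ≠ w} with hH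
  have hDH : ∀ w, {y | g y ≠ w} ⊆ H w := fun w => Set.subset_iInter fun b => subset_toMeasurable _ _
  refine fano0 X (fun w => (H w)ᶜ) (fun w => (MeasurableSet.iInter fun b => measurableSet_toMeasurable _ _).compl) ?_ hs hs1 ?_
  · intro w w' y h h'
    have a1 : g y = w := by by_contra hne; exact h (hDH w hne)
    have a2 : g y = w' := by by_contra hne; exact h' (hDH w' hne)
    rw [← a1, a2]
  · rw [hε]
    congr 1
    refine Finset.sum_congr rfl fun w _ => ?_
    congr 1
    refine Finset.sum_congr rfl fun b _ => ?_
    congr 1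
    simp only [Set.mem_compl_iff, not_not]
    rw [← hμa w b (H w)]
    have : stdGaussN n {z | g (X w b + z) ≠ w} = μ w b {y | g y ≠ w} := (hμa w b {y | g y ≠ w}).symm
    rw [this]
    refine le_antisymm (measure_mono (hDH w)) ?_
    refine (measure_mono (Set.iInter_subset _ b)).trans (le_of_eq (measure_toMeasurable _))

end fano

end PartG

section PartH
lemma C0c_opt {β c N : ℝ} (hb : 0 < β) (hc : 0 < c) (hN : 0 < N) :
    ∃ θ, 0 < θ ∧ θ < 1 ∧ θ * ((1/2) * Real.log N) + C0c β c θ = (1/2) * Real.log (β^2 * N + c^2) := by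
  set S := β^2 * N + c^2 with hS
  have hSp : 0 < S := by positivity
  have h1 : 1 - β^2 * N / S = c^2 / S := by field_simp; rw [hS]; ring
  refine ⟨β^2 * N / S, by positivity, ?_, ?_⟩
  · have : 0 < c^2/S := by positivity
    linarith
  · unfold C0c
    rw [h1]
    have e1 : Real.log (β / √(β^2 * N / S)) = (1/2) * Real.log S - (1/2) * Real.log N := by
      rw [Real.log_div hb.ne' (by positivity), Real.log_sqrt (by positivity), Real.log_div (by positivity) hSp.ne',
        Real.log_mul (by positivity) hN.ne', Real.log_pow]
      push_cast; ring
    have e2 : Real.log (c / √(c^2 / S)) = (1/2) * Real.log S := by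
      rw [Real.log_div hc.ne' (by positivity), Real.log_sqrt (by positivity), Real.log_div (by positivity) hSp.ne',
        Real.log_pow]
      push_cast; ring
    rw [e1, e2]
    have : β^2 * N / S + c^2/S = 1 := by linarith
    linear_combination (1/2 * Real.log S) * this

section conv
variable {A B : Type} [Fintype A] [Nonempty A] [Fintype B] [Nonempty B] {n : ℕ}

lemma Hent_unit (X : A → Fin n → ℝ) : Hent (fun p : A × Unit => X p.1) = Hent X := by
  unfold Hent mexp mix
  simp [Fintype.sum_prod_type]

lemma inv_card_sum (c : ℝ) : (Fintype.card A : ℝ)⁻¹ * ∑ _w : A, c = c := by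
  have := (card_pos' (ι := A)).ne'
  simp [this]

lemma avg_add (f g : A → ℝ) : (Fintype.card A : ℝ)⁻¹ * ∑ w, (f w + g w) =
    (Fintype.card A : ℝ)⁻¹ * ∑ w, f w + (Fintype.card A : ℝ)⁻¹ * ∑ w, g w := by
  rw [Finset.sum_add_distrib, mul_add]

lemma avg_aff (f : A → ℝ) (c d : ℝ) : (Fintype.card A : ℝ)⁻¹ * ∑ w, (c * f w + d) =
    c * ((Fintype.card A : ℝ)⁻¹ * ∑ w, f w) + d := by
  rw [avg_add, inv_card_sum, ← Finset.mul_sum, mul_left_comm]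

lemma avg_mono {f g : A → ℝ} (h : ∀ w, f w ≤ g w) :
    (Fintype.card A : ℝ)⁻¹ * ∑ w, f w ≤ (Fintype.card A : ℝ)⁻¹ * ∑ w, g w :=
  mul_le_mul_of_nonneg_left (Finset.sum_le_sum fun w _ => h w) (by positivity)

/-- averaged entropy power inequality -/
lemma epi_avg (X : B → A → Fin n → ℝ) (hn : 0 < n) {b D N : ℝ} (hb : |b| ≤ 1)
    (hD : D = (Fintype.card B : ℝ)⁻¹ * ∑ w, Hent (X w)) (hN : 0 < N) (hDN : D = n * (h1c + (1/2) * Real.log N)) :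
    n * (h1c + (1/2) * Real.log (1 + b^2 * (N - 1))) ≤ (Fintype.card B : ℝ)⁻¹ * ∑ w, Hent (fun m => b • X w m) := by
  have habs : ∀ w, Hent (fun m => b • X w m) = Hent (fun m => |b| • X w m) := by
    intro w
    rcases abs_choice b with h | h
    · rw [h]
    · rw [h, ← Hent_neg]; simp
  simp_rw [habs]
  rw [← sq_abs b]
  set β := |b| with hβ
  have hβ0 : 0 ≤ β := abs_nonneg b
  rcases hβ0.eq_or_lt with h0 | h0
  · rw [← h0]
    simp only [zero_smul, Hent_const, inv_card_sum]
    simp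
  rcases hb.eq_or_lt with h1 | h1
  · rw [h1]; simp only [one_smul]
    rw [← hD, hDN]; apply le_of_eq; congr 4; ring
  set c := √(1 - β^2) with hc
  have hcp : 0 < c := Real.sqrt_pos.2 (by nlinarith)
  have hc2 : c^2 = 1 - β^2 := Real.sq_sqrt (by nlinarith)
  obtain ⟨θ, t0, t1, ht⟩ := C0c_opt h0 hcp hN
  have key : ∀ w, θ * Hent (X w) + n * (C0c β c θ + (1-θ)*h1c) ≤ Hent (fun m => β • X w m) := fun w =>
    epi (X w) h0 hcp (by rw [hc2]; ring) t0 t1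
  have h2 := avg_mono key
  refine le_trans (le_of_eq ?_) h2
  rw [avg_aff, ← hD, hDN]
  rw [show 1 + β^2 * (N - 1) = β^2 * N + c^2 by rw [hc2]; ring, ← ht]
  ring

lemma sqn_center (x : A → Fin n → ℝ) {m : Fin n → ℝ} (hm : m = fun i => (Fintype.card A : ℝ)⁻¹ * ∑ w, x w i) :
    (Fintype.card A : ℝ)⁻¹ * ∑ w, sqn (x w - m) = (Fintype.card A : ℝ)⁻¹ * ∑ w, sqn (x w) - sqn m := by
  have hp := (card_pos' (ι := A)).ne'
  have e : ∀ i, ∑ w, x w i = Fintype.card A * m i := fun i => by rw [hm]; field_simp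
  unfold sqn
  rw [Finset.sum_comm, Finset.sum_comm (f := fun w i => x w i ^ 2), Finset.mul_sum, Finset.mul_sum, ← Finset.sum_sub_distrib]
  refine Finset.sum_congr rfl fun i _ => ?_
  have : ∑ w, (x w - m) i ^ 2 = ∑ w, x w i ^ 2 - Fintype.card A * m i ^ 2 := by
    calc ∑ w, (x w - m) i ^ 2 = ∑ w, (x w i ^ 2 - 2 * m i * x w i + m i ^ 2) :=
          Finset.sum_congr rfl fun w _ => by simp only [Pi.sub_apply]; ring
      _ = _ := by
          rw [Finset.sum_add_distrib, Finset.sum_sub_distrib, ← Finset.mul_sum, e]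
          simp only [Finset.sum_const, Finset.card_univ, nsmul_eq_mul]; ring
  rw [this]; field_simp

lemma sqn_comb (x : A → Fin n → ℝ) {m : Fin n → ℝ} (hm : m = fun i => (Fintype.card A : ℝ)⁻¹ * ∑ w, x w i)
    (b : ℝ) (y : Fin n → ℝ) :
    (Fintype.card A : ℝ)⁻¹ * ∑ w, sqn (b • x w + y) =
      b^2 * ((Fintype.card A : ℝ)⁻¹ * ∑ w, sqn (x w)) + sqn y + 2 * b * ∑ i, m i * y i := by
  have hp := (card_pos' (ι := A)).ne'
  have e : ∀ i, ∑ w, x w i = Fintype.card A * m i := fun i => by rw [hm]; field_simp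
  unfold sqn
  rw [Finset.sum_comm, Finset.sum_comm (f := fun w i => x w i ^ 2), Finset.mul_sum, Finset.mul_sum, Finset.mul_sum,
    Finset.mul_sum, ← Finset.sum_add_distrib, ← Finset.sum_add_distrib]
  refine Finset.sum_congr rfl fun i _ => ?_
  have : ∑ w, (b • x w + y) i ^ 2 = b^2 * ∑ w, x w i ^ 2 + 2 * b * y i * (Fintype.card A * m i) + Fintype.card A * y i ^ 2 := by
    calc ∑ w, (b • x w + y) i ^ 2 = ∑ w, (b^2 * x w i ^ 2 + 2 * b * y i * x w i + y i ^ 2) :=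
          Finset.sum_congr rfl fun w _ => by simp only [Pi.add_apply, Pi.smul_apply, smul_eq_mul]; ring
      _ = _ := by
          rw [Finset.sum_add_distrib, Finset.sum_add_distrib, ← Finset.mul_sum, ← Finset.mul_sum, e]
          simp only [Finset.sum_const, Finset.card_univ, nsmul_eq_mul]
  rw [this]; field_simp; ring

lemma cs_avg (x y : B → Fin n → ℝ) :
    ((Fintype.card B : ℝ)⁻¹ * ∑ w, ∑ i, x w i * y w i)^2 ≤
     ((Fintype.card B : ℝ)⁻¹ * ∑ w, sqn (x w)) * ((Fintype.card B : ℝ)⁻¹ * ∑ w, sqn (y w)) := by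
  have := Finset.sum_mul_sq_le_sq_mul_sq (Finset.univ : Finset (B × Fin n)) (fun p => x p.1 p.2) (fun p => y p.1 p.2)
  simp only [Fintype.sum_prod_type] at this
  have h2 := mul_le_mul_of_nonneg_left this (by positivity : 0 ≤ ((Fintype.card B : ℝ)⁻¹)^2)
  unfold sqn
  nlinarith [h2]

lemma conv_code (hn : 0 < n) {a b P1 P2 s : ℝ} (hb : |b| ≤ 1) (hs : 0 < s) (hs1 : s < 1)
    (f1 : A → B → Fin n → ℝ) (f2 : B → Fin n → ℝ)
    (g1 : (Fin n → ℝ) → A) (g2 : (Fin n → ℝ) → B)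
    (hp1 : (Fintype.card B : ℝ)⁻¹ * ∑ w2, (Fintype.card A : ℝ)⁻¹ * ∑ w1, sqn (f1 w1 w2) ≤ n * P1)
    (hp2 : (Fintype.card B : ℝ)⁻¹ * ∑ w2, sqn (f2 w2) ≤ n * P2)
    {ε1 ε2 : ℝ}
    (he1 : ε1 = (Fintype.card B : ℝ)⁻¹ * ∑ w2, (Fintype.card A : ℝ)⁻¹ * ∑ w1,
      (stdGaussN n {z | g1 (f1 w1 w2 + a • f2 w2 + z) ≠ w1}).toReal)
    (he2 : ε2 = (Fintype.card B : ℝ)⁻¹ * ∑ w2, (Fintype.card A : ℝ)⁻¹ * ∑ w1,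
      (stdGaussN n {z | g2 (b • f1 w1 w2 + f2 w2 + z) ≠ w2}).toReal) :
    ∃ α : ℝ, 0 ≤ α ∧ α ≤ 1 ∧
      (1 - ε1) * Real.log (Fintype.card A * (1 - s)) + ε1 * Real.log s ≤ n * ((1/2) * Real.log (1 + α * P1)) ∧
      (1 - ε2) * Real.log (Fintype.card B * (1 - s)) + ε2 * Real.log s ≤ n * ((1/2) * Real.log
        ((1 + b ^ 2 * P1 + 2 * |b| * √((1 - α) * P1 * P2) + P2) / (1 + b ^ 2 * α * P1))) := by
  have hnp : (0:ℝ) < n := by exact_mod_cast hn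
  have hAp := card_pos' (ι := A)
  have hBp := card_pos' (ι := B)
  set m : B → Fin n → ℝ := fun w2 i => (Fintype.card A : ℝ)⁻¹ * ∑ w, f1 w w2 i with hm
  set S1 := (Fintype.card B : ℝ)⁻¹ * ∑ w2, (Fintype.card A : ℝ)⁻¹ * ∑ w1, sqn (f1 w1 w2) with hS1
  set S2 := (Fintype.card B : ℝ)⁻¹ * ∑ w2, sqn (f2 w2) with hS2
  set Sm := (Fintype.card B : ℝ)⁻¹ * ∑ w2, sqn (m w2) with hSm
  set Cc := (Fintype.card B : ℝ)⁻¹ * ∑ w2, ∑ i, m w2 i * f2 w2 i with hCc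
  have hcs : Cc^2 ≤ Sm * S2 := cs_avg m f2
  have hSm0 : 0 ≤ Sm := mul_nonneg (by positivity) (Finset.sum_nonneg fun w _ => sqn_nonneg _)
  have hS20 : 0 ≤ S2 := mul_nonneg (by positivity) (Finset.sum_nonneg fun w _ => sqn_nonneg _)
  set D := (Fintype.card B : ℝ)⁻¹ * ∑ w2, Hent (fun w1 => f1 w1 w2) with hD
  -- variance
  have hV : (Fintype.card B : ℝ)⁻¹ * ∑ w2, (Fintype.card A : ℝ)⁻¹ * ∑ w1, sqn (f1 w1 w2 - m w2) = S1 - Sm := by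
    have : ∀ w2, (Fintype.card A : ℝ)⁻¹ * ∑ w1, sqn (f1 w1 w2 - m w2) = (Fintype.card A : ℝ)⁻¹ * ∑ w1, sqn (f1 w1 w2) - sqn (m w2) :=
      fun w2 => sqn_center (fun w1 => f1 w1 w2) rfl
    simp_rw [this]
    rw [Finset.sum_sub_distrib, mul_sub]
  have hV0 : 0 ≤ S1 - Sm := by
    rw [← hV]
    exact mul_nonneg (by positivity) (Finset.sum_nonneg fun w _ => mul_nonneg (by positivity) (Finset.sum_nonneg fun w _ => sqn_nonneg _))
  have hent : ∀ (v : ℝ), 0 < v → (n:ℝ) / 2 * Real.log (2 * Real.pi * v) + (n * (v - 1) + n) / (2 * v) =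
      n * (h1c + (1/2) * Real.log v) := by
    intro v hv
    rw [Real.log_mul (by positivity) hv.ne', h1c]
    field_simp; ring
  -- D bounds
  have hDle : D ≤ n * (h1c + (1/2) * Real.log (1 + (S1 - Sm)/n)) := by
    have hv : 0 < 1 + (S1 - Sm)/n := by positivity
    have h1 : ∀ w2, Hent (fun w1 => f1 w1 w2) ≤ n / 2 * Real.log (2 * Real.pi * (1 + (S1 - Sm)/n)) +
        ((Fintype.card A : ℝ)⁻¹ * ∑ w1, sqn (f1 w1 w2 - m w2) + n) / (2 * (1 + (S1 - Sm)/n)) := by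
      intro w2
      rw [← Hent_shift _ (- m w2)]
      have := Hent_le (fun w1 => f1 w1 w2 + - m w2) hv
      simp only [← sub_eq_add_neg] at this ⊢
      exact this
    set v := 1 + (S1 - Sm)/n with hvd
    have h2 := avg_mono (g := fun w2 => (2*v)⁻¹ * ((Fintype.card A : ℝ)⁻¹ * ∑ w1, sqn (f1 w1 w2 - m w2)) +
      (n / 2 * Real.log (2 * Real.pi * v) + n / (2 * v))) fun w2 => (h1 w2).trans (le_of_eq (by ring))
    rw [avg_aff, hV] at h2
    refine h2.trans (le_of_eq ?_)
    rw [← hent _ hv, show S1 - Sm = n * (v - 1) by rw [hvd]; field_simp; ring]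
    ring
  have hDge : n * h1c ≤ D := by
    have h2 := avg_mono fun w2 => Hent_ge (fun w1 => f1 w1 w2)
    rwa [inv_card_sum] at h2
  set N := Real.exp (2 * (D / n - h1c)) with hN
  have hNp : 0 < N := Real.exp_pos _
  have hDN : D = n * (h1c + (1/2) * Real.log N) := by rw [hN, Real.log_exp]; field_simp; ring
  have hN1 : 1 ≤ N := by
    rw [hN]; apply Real.one_le_exp
    have : h1c ≤ D / n := by rw [le_div_iff₀ hnp]; linarith
    linarith
  have hNV : N ≤ 1 + (S1 - Sm)/n := by
    rw [hDN] at hDle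
    have := le_of_mul_le_mul_left hDle hnp
    rw [← Real.log_le_log_iff hNp (by positivity)]
    linarith
  have hSP : S1 / n ≤ P1 := by rw [div_le_iff₀ hnp]; linarith
  have hNP : N - 1 + Sm/n ≤ P1 := by rw [sub_div] at hNV; linarith
  have hSmn : 0 ≤ Sm / n := by positivity
  have hP10 : 0 ≤ P1 := by linarith
  set α := (N - 1) / P1 with hα
  have hαP : α * P1 = N - 1 := by
    rcases hP10.eq_or_lt with h | h
    · rw [← h]; linarith
    · rw [hα]; field_simp
  have hα0 : 0 ≤ α := div_nonneg (by linarith) hP10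
  have hα1 : α ≤ 1 := div_le_one_of_le₀ (by linarith) hP10
  refine ⟨α, hα0, hα1, ?_, ?_⟩
  · have h1 : ∀ w2, (1 - (Fintype.card A : ℝ)⁻¹ * ∑ w1, (stdGaussN n {z | g1 (f1 w1 w2 + a • f2 w2 + z) ≠ w1}).toReal) * Real.log (Fintype.card A * (1 - s)) +
        ((Fintype.card A : ℝ)⁻¹ * ∑ w1, (stdGaussN n {z | g1 (f1 w1 w2 + a • f2 w2 + z) ≠ w1}).toReal) * Real.log s ≤
        Hent (fun w1 => f1 w1 w2) - n * h1c := by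
      intro w2
      have := fano (A := A) (B := Unit) (fun w1 _ => f1 w1 w2 + a • f2 w2) g1 hs hs1 rfl
      rw [Hent_unit (fun w1 => f1 w1 w2 + a • f2 w2), Hent_shift] at this
      simp only [Hent_const, inv_card_sum] at this
      simpa using this
    set l1 := Real.log (Fintype.card A * (1 - s)) with hl1
    have h2 := avg_mono (f := fun w2 => (Real.log s - l1) * ((Fintype.card A : ℝ)⁻¹ * ∑ w1, (stdGaussN n {z | g1 (f1 w1 w2 + a • f2 w2 + z) ≠ w1}).toReal) + l1)
      (g := fun w2 => 1 * Hent (fun w1 => f1 w1 w2) + -(n * h1c))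
      fun w2 => le_trans (le_of_eq (by ring)) ((h1 w2).trans (le_of_eq (by ring)))
    rw [avg_aff, avg_aff, ← he1, ← hD] at h2
    refine le_trans (le_of_eq (by ring)) (h2.trans (le_of_eq ?_))
    rw [hαP, hDN]; ring_nf
  · have h1 := fano (A := B) (B := A) (fun w2 w1 => b • f1 w1 w2 + f2 w2) g2 hs hs1 he2
    have h2 := epi_avg (fun w2 w1 => f1 w1 w2) hn hb hD hNp hDN
    simp only [Hent_shift] at h1
    set σ := 1 + b ^ 2 * P1 + 2 * |b| * √((1 - α) * P1 * P2) + P2 with hσ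
    have hS2P : S2 / n ≤ P2 := by rw [div_le_iff₀ hnp]; linarith
    have hP20 : 0 ≤ P2 := le_trans (by positivity) hS2P
    have hσp : 0 < σ := by positivity
    have h3 := Hent_le (fun p : B × A => b • f1 p.2 p.1 + f2 p.1) hσp
    have hmom : (Fintype.card (B × A) : ℝ)⁻¹ * ∑ p : B × A, sqn (b • f1 p.2 p.1 + f2 p.1) ≤ n * (σ - 1) := by
      have e : (Fintype.card (B × A) : ℝ)⁻¹ * ∑ p : B × A, sqn (b • f1 p.2 p.1 + f2 p.1) =
          b^2 * S1 + S2 + 2 * b * Cc := by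
        rw [Fintype.sum_prod_type, Fintype.card_prod]
        push_cast
        rw [mul_inv, mul_assoc, Finset.mul_sum]
        have : ∀ w2, (Fintype.card A : ℝ)⁻¹ * ∑ w1, sqn (b • f1 w1 w2 + f2 w2) =
            b^2 * ((Fintype.card A : ℝ)⁻¹ * ∑ w1, sqn (f1 w1 w2)) + sqn (f2 w2) + 2 * b * ∑ i, m w2 i * f2 w2 i :=
          fun w2 => sqn_comb (fun w1 => f1 w1 w2) rfl b (f2 w2)
        simp_rw [this]
        rw [avg_add, avg_add, ← Finset.mul_sum Finset.univ (fun w2 => (Fintype.card A : ℝ)⁻¹ * ∑ w1, sqn (f1 w1 w2)),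
          ← Finset.mul_sum Finset.univ (fun w2 => ∑ i, m w2 i * f2 w2 i), hS1, hS2, hCc,
          mul_left_comm _ (b^2), mul_left_comm _ (2*b)]
      rw [e]
      have hC : |Cc| ≤ n * √((1 - α) * P1 * P2) := by
        have : (n:ℝ) * √((1 - α) * P1 * P2) = √(n^2 * ((1 - α) * P1 * P2)) := by
          rw [Real.sqrt_mul (sq_nonneg (n:ℝ)), Real.sqrt_sq hnp.le]
        rw [this]
        apply Real.abs_le_sqrt
        refine hcs.trans ?_
        have e1 : Sm ≤ n * ((1-α) * P1) := by
          have : Sm / n ≤ (1-α)*P1 := by linarith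
          rw [div_le_iff₀ hnp] at this; linarith
        calc Sm * S2 ≤ (n * ((1-α) * P1)) * (n * P2) := mul_le_mul e1 hp2 hS20 (hSm0.trans e1)
          _ = _ := by ring
      have h5 : b * Cc ≤ |b| * (n * √((1 - α) * P1 * P2)) := by
        calc b * Cc ≤ |b * Cc| := le_abs_self _
          _ = |b| * |Cc| := abs_mul _ _
          _ ≤ _ := mul_le_mul_of_nonneg_left hC (abs_nonneg _)
      have h6 : b^2 * S1 ≤ b^2 * (n * P1) := mul_le_mul_of_nonneg_left hp1 (sq_nonneg _)
      rw [hσ]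
      clear_value σ S1 S2 Sm Cc D N α
      linarith
    have h4 : Hent (fun p : B × A => b • f1 p.2 p.1 + f2 p.1) ≤ n * (h1c + (1/2) * Real.log σ) := by
      refine h3.trans ?_
      rw [← hent σ hσp]
      gcongr
    have hden : 1 + b^2 * α * P1 = 1 + b^2 * (N - 1) := by rw [mul_assoc, hαP]
    have hdp : 0 < 1 + b^2 * (N - 1) := by
      have := mul_nonneg (sq_nonneg b) (sub_nonneg.2 hN1)
      linarith
    rw [hden, Real.log_div hσp.ne' hdp.ne']
    refine h1.trans ?_
    linarith

end conv

end PartH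

section PartI
lemma den_pos {b P1 α : ℝ} (hP1 : 0 ≤ P1) (h0 : 0 ≤ α) : 0 < 1 + b ^ 2 * α * P1 := by positivity

lemma num_pos {b P1 P2 α : ℝ} (hP1 : 0 ≤ P1) (hP2 : 0 ≤ P2) :
    0 < 1 + b ^ 2 * P1 + 2 * |b| * Real.sqrt ((1 - α) * P1 * P2) + P2 := by positivity

lemma DPC12_closed {b P1 P2 : ℝ} (hP1 : 0 ≤ P1) (hP2 : 0 ≤ P2) : IsClosed (DPC12 b P1 P2) := by
  have e : DPC12 b P1 P2 = Prod.fst '' {p : (ℝ × ℝ) × (Set.Icc (0:ℝ) 1) |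
      p.1.1 ≤ (1 / 2) * (Real.log (1 + p.2 * P1) / Real.log 2) ∧
      p.1.2 ≤ (1 / 2) * (Real.log ((1 + b ^ 2 * P1 + 2 * |b| * Real.sqrt ((1 - p.2) * P1 * P2) + P2)
        / (1 + b ^ 2 * p.2 * P1)) / Real.log 2)} := by
    ext R
    constructor
    · rintro ⟨α, h0, h1, h2, h3⟩
      exact ⟨(R, ⟨α, h0, h1⟩), ⟨h2, h3⟩, rfl⟩
    · rintro ⟨⟨R', α⟩, ⟨h2, h3⟩, rfl⟩
      exact ⟨α, α.2.1, α.2.2, h2, h3⟩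
  rw [e]
  apply isClosedMap_fst_of_compactSpace
  apply IsClosed.inter
  · refine isClosed_le (by fun_prop) (continuous_const.mul (Continuous.div_const (Continuous.log (by fun_prop) ?_) _))
    intro p
    have := p.2.2.1
    positivity
  · refine isClosed_le (by fun_prop) (continuous_const.mul (Continuous.div_const (Continuous.log (Continuous.div (by fun_prop) (by fun_prop) ?_) ?_) _))
    · intro p
      exact (den_pos hP1 p.2.2.1).ne'
    · intro p
      exact (div_pos (num_pos hP1 hP2) (den_pos hP1 p.2.2.1)).ne'

lemma conv_slack {ε e T R : ℝ} {n : ℕ} (hn : 0 < n) (hε : 0 < ε) (hε1 : ε < 1) (he0 : 0 ≤ e) (he : e ≤ ε) {M : ℕ} (hM : 0 < M)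
    (hR : R - ε ≤ Real.logb 2 M / n)
    (h : (1 - e) * Real.log (M * (1 - ε)) + e * Real.log ε ≤ n * ((1/2) * Real.log T)) :
    (1 - ε) * (R - ε) - (-Real.log (1 - ε) - ε * Real.log ε) / Real.log 2 ≤ (1/2) * Real.logb 2 T := by
  have hnp : (1:ℝ) ≤ n := by exact_mod_cast hn
  have hMp : (1:ℝ) ≤ M := by exact_mod_cast hM
  have hl2 : 0 < Real.log 2 := Real.log_pos (by norm_num)
  have hlM : 0 ≤ Real.log M := Real.log_nonneg hMp
  have h1 : Real.log (1 - ε) ≤ 0 := Real.log_nonpos (by linarith) (by linarith)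
  have h2 : Real.log ε ≤ 0 := Real.log_nonpos (by linarith) (by linarith)
  rw [Real.log_mul (by linarith) (by linarith)] at h
  rw [Real.logb, div_div, le_div_iff₀ (by positivity)] at hR
  set s := -Real.log (1 - ε) - ε * Real.log ε with hs
  have hs0 : 0 ≤ s := by nlinarith
  have h3 : (1 - ε) * Real.log M - s ≤ n * ((1/2) * Real.log T) := by nlinarith
  have h4 : (1 - ε) * ((R - ε) * (Real.log 2 * n)) ≤ (1 - ε) * Real.log M := mul_le_mul_of_nonneg_left hR (by linarith)
  have h5 : n * ((1 - ε) * (R - ε) * Real.log 2 - s) ≤ n * ((1/2) * Real.log T) := by nlinarith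
  have h6 := le_of_mul_le_mul_left h5 (by linarith : (0:ℝ) < n)
  rw [Real.logb]
  have : (1 - ε) * (R - ε) - s / Real.log 2 = ((1 - ε) * (R - ε) * Real.log 2 - s) / Real.log 2 := by field_simp
  rw [this, ← mul_div_assoc]
  gcongr

lemma ach_mem {a b P1 P2 R1 R2 : ℝ} (hb : |b| ≤ 1) (h : AchievableGT1 a b P1 P2 R1 R2) {ε : ℝ} (hε : 0 < ε) (hε1 : ε < 1) :
    ((1 - ε) * (R1 - ε) - (-Real.log (1 - ε) - ε * Real.log ε) / Real.log 2,
     (1 - ε) * (R2 - ε) - (-Real.log (1 - ε) - ε * Real.log ε) / Real.log 2) ∈ DPC12 b P1 P2 := by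
  obtain ⟨n, M1, M2, f1, f2, g1, g2, hn, hM1, hM2, hp1, hp2, hr1, hr2, he1, he2⟩ := h ε hε
  have : Nonempty (Fin M1) := ⟨⟨0, hM1⟩⟩
  have : Nonempty (Fin M2) := ⟨⟨0, hM2⟩⟩
  have hnp : (0:ℝ) < n := by exact_mod_cast hn
  have hM1p : (0:ℝ) < M1 := by exact_mod_cast hM1
  have hM2p : (0:ℝ) < M2 := by exact_mod_cast hM2
  have av : ∀ (φ : Fin M1 → Fin M2 → ℝ), (1 / (M1 * M2) : ℝ) * ∑ w1, ∑ w2, φ w1 w2 =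
      (Fintype.card (Fin M2) : ℝ)⁻¹ * ∑ w2, (Fintype.card (Fin M1) : ℝ)⁻¹ * ∑ w1, φ w1 w2 := by
    intro φ
    rw [Finset.sum_comm, ← Finset.mul_sum, Fintype.card_fin, Fintype.card_fin]
    field_simp
  have hq1 : (Fintype.card (Fin M2) : ℝ)⁻¹ * ∑ w2, (Fintype.card (Fin M1) : ℝ)⁻¹ * ∑ w1, sqn (f1 w1 w2) ≤ n * P1 := by
    simp_rw [← Finset.mul_sum] at hp1
    rw [mul_left_comm, one_div_mul_eq_div, div_le_iff₀ hnp] at hp1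
    rw [← av]; unfold sqn; linarith
  have hq2 : (Fintype.card (Fin M2) : ℝ)⁻¹ * ∑ w2, sqn (f2 w2) ≤ n * P2 := by
    simp_rw [← Finset.mul_sum] at hp2
    rw [mul_left_comm, one_div_mul_eq_div, div_le_iff₀ hnp] at hp2
    rw [Fintype.card_fin, ← one_div]; unfold sqn; linarith
  have c1 : peG1T1 a n M1 M2 f1 f2 g1 = (Fintype.card (Fin M2) : ℝ)⁻¹ * ∑ w2, (Fintype.card (Fin M1) : ℝ)⁻¹ * ∑ w1,
      (stdGaussN n {z | g1 (f1 w1 w2 + a • f2 w2 + z) ≠ w1}).toReal := by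
    rw [← av]; rfl
  have c2 : peG2T1 b n M1 M2 f1 f2 g2 = (Fintype.card (Fin M2) : ℝ)⁻¹ * ∑ w2, (Fintype.card (Fin M1) : ℝ)⁻¹ * ∑ w1,
      (stdGaussN n {z | g2 (b • f1 w1 w2 + f2 w2 + z) ≠ w2}).toReal := by
    rw [← av]; rfl
  have e10 : 0 ≤ peG1T1 a n M1 M2 f1 f2 g1 := by unfold peG1T1; positivity
  have e20 : 0 ≤ peG2T1 b n M1 M2 f1 f2 g2 := by unfold peG2T1; positivity
  obtain ⟨α, h0, h1, k1, k2⟩ := conv_code hn hb hε hε1 f1 f2 g1 g2 hq1 hq2 c1 c2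
  rw [Fintype.card_fin] at k1 k2
  exact ⟨α, h0, h1, conv_slack hn hε hε1 e10 he1 hM1 hr1 k1, conv_slack hn hε hε1 e20 he2 hM2 hr2 k2⟩

lemma converse {a b P1 P2 : ℝ} (hb : |b| ≤ 1) (hP1 : 0 ≤ P1) (hP2 : 0 ≤ P2) :
    CapacityGT1 a b P1 P2 ⊆ DPC12 b P1 P2 := by
  refine closure_minimal ?_ (DPC12_closed hP1 hP2)
  rintro ⟨R1, R2⟩ h
  have hlim : ∀ R : ℝ, Filter.Tendsto (fun ε => (1 - ε) * (R - ε) - (-Real.log (1 - ε) - ε * Real.log ε) / Real.log 2)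
      (nhdsWithin 0 (Set.Ioi 0)) (nhds R) := by
    intro R
    have : ContinuousAt (fun ε => (1 - ε) * (R - ε) - (-Real.log (1 - ε) - ε * Real.log ε) / Real.log 2) 0 := by
      have h1 := Real.continuous_mul_log.continuousAt (x := 0)
      have h2 : ContinuousAt (fun ε : ℝ => Real.log (1 - ε)) 0 := ContinuousAt.log (by fun_prop) (by norm_num)
      exact ContinuousAt.sub (by fun_prop) ((h2.neg.sub h1).div_const _)
    have h3 := this.tendsto
    simp only [sub_zero, Real.log_one, zero_mul, neg_zero, zero_div, one_mul] at h3
    exact h3.mono_left nhdsWithin_le_nhds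
  refine (DPC12_closed hP1 hP2).mem_of_tendsto ((hlim R1).prodMk_nhds (hlim R2)) ?_
  filter_upwards [Ioo_mem_nhdsGT (zero_lt_one (α := ℝ))] with ε hε
  exact ach_mem hb h hε.1 hε.2

end PartI

section PartJ
section rc
variable {U T : Type} [MeasurableSpace U] [MeasurableSpace T]

lemma mp_pair (α : Measure U) [IsProbabilityMeasure α] {ι : Type} [Fintype ι] {i j : ι} (h : i ≠ j) :
    MeasurePreserving (fun c : ι → U => (c i, c j)) (Measure.pi fun _ => α) (α.prod α) := by
  refine ⟨by fun_prop, ?_⟩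
  have hi : iIndepFun (fun i (ω : ι → U) => ω i) (Measure.pi fun _ => α) :=
    iIndepFun_pi (X := fun _ x => x) fun _ => aemeasurable_id
  have h2 := hi.indepFun h
  rw [indepFun_iff_map_prod_eq_prod_map_map (measurable_pi_apply i).aemeasurable (measurable_pi_apply j).aemeasurable] at h2
  rw [h2]
  congr 1
  · exact (measurePreserving_eval (fun _ : ι => α) i).map_eq
  · exact (measurePreserving_eval (fun _ : ι => α) j).map_eq

lemma exists_code (α : Measure U) (π : Measure T) [IsProbabilityMeasure α] [IsProbabilityMeasure π]
    (M1 M2 : ℕ) {h0 : U × T → ENNReal} {h1 : (U × U) × T → ENNReal} {h2 : U × (T × T) → ENNReal}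
    (m0 : Measurable h0) (m1 : Measurable h1) (m2 : Measurable h2) {B0 B1 B2 : ENNReal}
    (b0 : ∫⁻ p, h0 p ∂(α.prod π) ≤ B0) (b1 : ∫⁻ p, h1 p ∂((α.prod α).prod π) ≤ B1)
    (b2 : ∫⁻ p, h2 p ∂(α.prod (π.prod π)) ≤ B2) :
    ∃ (c : Fin M1 → U) (d : Fin M2 → T),
      ∑ w1, ∑ w2, (h0 (c w1, d w2) + ∑ w ∈ Finset.univ.erase w1, h1 ((c w, c w1), d w2)
        + ∑ w ∈ Finset.univ.erase w2, h2 (c w1, (d w, d w2))) ≤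
      M1 * (M2 * (B0 + ((M1 - 1 : ℕ) : ENNReal) * B1 + ((M2 - 1 : ℕ) : ENNReal) * B2)) := by
  set P := (Measure.pi fun _ : Fin M1 => α).prod (Measure.pi fun _ : Fin M2 => π) with hP
  have t0 : ∀ w1 w2, ∫⁻ p, h0 (p.1 w1, p.2 w2) ∂P ≤ B0 := fun w1 w2 => by
    have := ((measurePreserving_eval (fun _ : Fin M1 => α) w1).prod (measurePreserving_eval (fun _ : Fin M2 => π) w2)).lintegral_comp m0
    exact le_trans (le_of_eq this) b0
  have t1 : ∀ w w1 w2, w ≠ w1 → ∫⁻ p, h1 ((p.1 w, p.1 w1), p.2 w2) ∂P ≤ B1 := fun w w1 w2 hw => by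
    have := ((mp_pair α hw).prod (measurePreserving_eval (fun _ : Fin M2 => π) w2)).lintegral_comp m1
    exact le_trans (le_of_eq this) b1
  have t2 : ∀ w1 w w2, w ≠ w2 → ∫⁻ p, h2 (p.1 w1, (p.2 w, p.2 w2)) ∂P ≤ B2 := fun w1 w w2 hw => by
    have := ((measurePreserving_eval (fun _ : Fin M1 => α) w1).prod (mp_pair π hw)).lintegral_comp m2
    exact le_trans (le_of_eq this) b2
  have n0 : ∀ w1 w2, Measurable fun p : (Fin M1 → U) × (Fin M2 → T) => h0 (p.1 w1, p.2 w2) := fun w1 w2 => by fun_prop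
  have n1 : ∀ w w1 w2, Measurable fun p : (Fin M1 → U) × (Fin M2 → T) => h1 ((p.1 w, p.1 w1), p.2 w2) := fun w w1 w2 => by fun_prop
  have n2 : ∀ w1 w w2, Measurable fun p : (Fin M1 → U) × (Fin M2 → T) => h2 (p.1 w1, (p.2 w, p.2 w2)) := fun w1 w w2 => by fun_prop
  obtain ⟨p, hp⟩ := exists_le_lintegral (μ := P) (f := fun p => ∑ w1, ∑ w2, (h0 (p.1 w1, p.2 w2) + ∑ w ∈ Finset.univ.erase w1, h1 ((p.1 w, p.1 w1), p.2 w2)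
        + ∑ w ∈ Finset.univ.erase w2, h2 (p.1 w1, (p.2 w, p.2 w2)))) (by
      refine Measurable.aemeasurable ?_
      fun_prop)
  refine ⟨p.1, p.2, hp.trans ?_⟩
  rw [lintegral_finsetSum _ (fun w1 _ => by fun_prop)]
  refine (Finset.sum_le_card_nsmul Finset.univ _ _ fun w1 _ => ?_).trans (le_of_eq (by rw [Finset.card_univ, Fintype.card_fin, nsmul_eq_mul]))
  rw [lintegral_finsetSum _ (fun w2 _ => by fun_prop)]
  refine (Finset.sum_le_card_nsmul Finset.univ _ _ fun w2 _ => ?_).trans (le_of_eq (by rw [Finset.card_univ, Fintype.card_fin, nsmul_eq_mul]))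
  rw [lintegral_add_right _ (by fun_prop), lintegral_add_right _ (by fun_prop), lintegral_finsetSum _ (fun w _ => n1 _ _ _),
    lintegral_finsetSum _ (fun w _ => n2 _ _ _)]
  refine add_le_add (add_le_add (t0 _ _) ?_) ?_
  · refine (Finset.sum_le_card_nsmul _ _ B1 fun w hw => t1 _ _ _ (Finset.ne_of_mem_erase hw)).trans (le_of_eq ?_)
    rw [Finset.card_erase_of_mem (Finset.mem_univ _), Finset.card_univ, Fintype.card_fin, nsmul_eq_mul]
  · refine (Finset.sum_le_card_nsmul _ _ B2 fun w hw => t2 _ _ _ (Finset.ne_of_mem_erase hw)).trans (le_of_eq ?_)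
    rw [Finset.card_erase_of_mem (Finset.mem_univ _), Finset.card_univ, Fintype.card_fin, nsmul_eq_mul]

end rc

end PartJ

section PartK
section oneshot
variable {n : ℕ}

lemma inner_bound {X : Type} [MeasurableSpace X] (μ : Measure X) [IsProbabilityMeasure μ] {f : X → Fin n → ℝ}
    (hf : Measurable f) {ρ : Measure (Fin n → ℝ)} (hfρ : μ.map f = ρ) {A : Set ((Fin n → ℝ) × (Fin n → ℝ))}
    (hA : MeasurableSet A) {p : ENNReal} (hp : ∀ y, ρ {u | (u, y) ∈ A} ≤ p) (y : Fin n → ℝ) :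
    ∫⁻ x, stdGaussN n {z | (f x, y + z) ∈ A} ∂μ ≤ p := by
  set S : Set (X × (Fin n → ℝ)) := (fun q => (f q.1, y + q.2)) ⁻¹' A with hS
  have hSm : MeasurableSet S := (by fun_prop : Measurable fun q : X × (Fin n → ℝ) => (f q.1, y + q.2)) hA
  have e1 := Measure.prod_apply (μ := μ) (ν := stdGaussN n) hSm
  have e2 := Measure.prod_apply_symm (μ := μ) (ν := stdGaussN n) hSm
  have e3 : ∫⁻ x, stdGaussN n {z | (f x, y + z) ∈ A} ∂μ = (μ.prod (stdGaussN n)) S := e1.symm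
  rw [e3, e2]
  refine (lintegral_mono (g := fun _ => p) fun z => ?_).trans (by simp)
  have h := hp (y + z)
  have hm : MeasurableSet {u | (u, y + z) ∈ A} := (by fun_prop : Measurable fun u : Fin n → ℝ => (u, y + z)) hA
  rw [← hfρ, Measure.map_apply hf hm] at h
  exact h

lemma meas_gauss {X : Type} [MeasurableSpace X] {f g : X → Fin n → ℝ} (hf : Measurable f) (hg : Measurable g)
    {A : Set ((Fin n → ℝ) × (Fin n → ℝ))} (hA : MeasurableSet A) :
    Measurable fun x => stdGaussN n {z | (f x, g x + z) ∈ A} := by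
  have hSm : MeasurableSet ((fun q : X × (Fin n → ℝ) => (f q.1, g q.1 + q.2)) ⁻¹' A) :=
    (by fun_prop : Measurable fun q : X × (Fin n → ℝ) => (f q.1, g q.1 + q.2)) hA
  exact measurable_measure_prodMk_left hSm

/-- the encoder selecting the first good index -/
lemma exists_sel {L : ℕ} {φ : (Fin n → ℝ) × (Fin n → ℝ) → Fin n → ℝ} (hφ : Measurable φ)
    {G : Set ((Fin n → ℝ) × (Fin n → ℝ))} (hG : MeasurableSet G) :
    ∃ x : (Fin L → Fin n → ℝ) × (Fin n → ℝ) → Fin n → ℝ, Measurable x ∧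
      (∀ r t, (∃ l, (r l, t) ∈ G) → ∃ l, (r l, t) ∈ G ∧ x (r, t) = φ (r l, t)) ∧
      (∀ r t, (∀ l, (r l, t) ∉ G) → x (r, t) = 0) := by
  classical
  set S : Fin L → Set ((Fin L → Fin n → ℝ) × (Fin n → ℝ)) := fun l =>
    {p | (p.1 l, p.2) ∈ G} ∩ ⋂ l' : Fin L, ⋂ _ : l' < l, {p | (p.1 l', p.2) ∉ G} with hS
  have hm : ∀ l, MeasurableSet {p : (Fin L → Fin n → ℝ) × (Fin n → ℝ) | (p.1 l, p.2) ∈ G} := fun l =>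
    (by fun_prop : Measurable fun p : (Fin L → Fin n → ℝ) × (Fin n → ℝ) => (p.1 l, p.2)) hG
  have hSm : ∀ l, MeasurableSet (S l) := fun l =>
    (hm l).inter (MeasurableSet.iInter fun l' => MeasurableSet.iInter fun _ => (hm l').compl)
  refine ⟨fun p => ∑ l, (S l).indicator (fun p => φ (p.1 l, p.2)) p, ?_, ?_, ?_⟩
  · refine Finset.measurable_sum _ fun l _ => Measurable.indicator (by fun_prop) (hSm l)
  · intro r t h
    have hex : (Finset.univ.filter fun l => (r l, t) ∈ G).Nonempty := by
      obtain ⟨l, hl⟩ := h; exact ⟨l, by simp [hl]⟩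
    set l0 := (Finset.univ.filter fun l => (r l, t) ∈ G).min' hex with hl0
    have h1 : (r l0, t) ∈ G := by
      have := Finset.min'_mem _ hex
      simpa using this
    have h2 : ∀ l, (r l, t) ∈ G → l0 ≤ l := fun l hl => Finset.min'_le _ _ (by simp [hl])
    have hmem : ∀ l, (r, t) ∈ S l ↔ l = l0 := by
      intro l
      simp only [hS, Set.mem_inter_iff, Set.mem_ofPred_eq, Set.mem_iInter]
      constructor
      · rintro ⟨a1, a2⟩
        by_contra hne
        exact a2 l0 (lt_of_le_of_ne (h2 l a1) (Ne.symm hne)) h1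
      · rintro rfl
        exact ⟨h1, fun l' hl' hg => absurd (h2 l' hg) (not_le.2 hl')⟩
    refine ⟨l0, h1, ?_⟩
    simp only []
    rw [Finset.sum_eq_single l0]
    · rw [Set.indicator_of_mem ((hmem l0).2 rfl)]
    · intro l _ hne
      rw [Set.indicator_of_notMem fun h => hne ((hmem l).1 h)]
    · simp
  · intro r t h
    refine Finset.sum_eq_zero fun l _ => ?_
    rw [Set.indicator_of_notMem fun h' => h l h'.1]

theorem oneshot {a b P1 P2 : ℝ} (hP1 : 0 ≤ P1) (hP2 : 0 ≤ P2) (ρ π : Measure (Fin n → ℝ))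
    [IsProbabilityMeasure ρ] [IsProbabilityMeasure π]
    {φ1 : (Fin n → ℝ) × (Fin n → ℝ) → Fin n → ℝ} (hφ1 : Measurable φ1)
    {φ2 : (Fin n → ℝ) → Fin n → ℝ} (hφ2 : Measurable φ2)
    {G A1 A2 : Set ((Fin n → ℝ) × (Fin n → ℝ))} (hG : MeasurableSet G) (hA1 : MeasurableSet A1) (hA2 : MeasurableSet A2)
    {δ η p1 p2 : ENNReal} {M1 M2 L : ℕ} (hM1 : 0 < M1) (hM2 : 0 < M2)
    (hG1 : ∀ p ∈ G, sqn (φ1 p) ≤ n * P1) (hG2 : ∀ p ∈ G, sqn (φ2 p.2) ≤ n * P2)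
    (hG3 : ∀ p ∈ G, stdGaussN n {z | (p.1, φ1 p + a • φ2 p.2 + z) ∉ A1} ≤ δ)
    (hG4 : ∀ p ∈ G, stdGaussN n {z | (p.2, b • φ1 p + φ2 p.2 + z) ∉ A2} ≤ δ)
    (hp1 : ∀ y, ρ {u | (u, y) ∈ A1} ≤ p1) (hp2 : ∀ y, π {u | (u, y) ∈ A2} ≤ p2)
    (hmiss : ∫⁻ t, (ρ {u | (u, t) ∉ G}) ^ L ∂π ≤ η) :
    ∃ (f1 : Fin M1 → Fin M2 → Fin n → ℝ) (f2 : Fin M2 → Fin n → ℝ)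
      (g1 : (Fin n → ℝ) → Fin M1) (g2 : (Fin n → ℝ) → Fin M2),
      (∀ w1 w2, sqn (f1 w1 w2) ≤ n * P1) ∧ (∀ w2, sqn (f2 w2) ≤ n * P2) ∧
      ∑ w1, ∑ w2, (stdGaussN n {z | g1 (f1 w1 w2 + a • f2 w2 + z) ≠ w1}
        + stdGaussN n {z | g2 (b • f1 w1 w2 + f2 w2 + z) ≠ w2}) ≤
      M1 * (M2 * (2 * (δ + η) + ((M1 - 1 : ℕ) : ENNReal) * (L * p1) + ((M2 - 1 : ℕ) : ENNReal) * p2)) := by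
  classical
  obtain ⟨x1, hx1m, hx1, hx10⟩ := exists_sel (L := L) hφ1 hG
  set x2 : (Fin n → ℝ) → Fin n → ℝ := fun t => if sqn (φ2 t) ≤ n * P2 then φ2 t else 0 with hx2
  have hx2m : Measurable x2 :=
    Measurable.ite (measurableSet_le (measurable_sqn.comp hφ2) measurable_const) hφ2 measurable_const
  set α : Measure (Fin L → Fin n → ℝ) := Measure.pi fun _ => ρ with hα
  set y1 : (Fin L → Fin n → ℝ) × (Fin n → ℝ) → Fin n → ℝ := fun p => x1 p + a • x2 p.2 with hy1
  set y2 : (Fin L → Fin n → ℝ) × (Fin n → ℝ) → Fin n → ℝ := fun p => b • x1 p + x2 p.2 with hy2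
  have hy1m : Measurable y1 := by fun_prop
  have hy2m : Measurable y2 := by fun_prop
  set N : Set ((Fin L → Fin n → ℝ) × (Fin n → ℝ)) := {p | ∀ l, (p.1 l, p.2) ∉ G} with hN
  have hNm : MeasurableSet N := by
    have : N = ⋂ l, {p : (Fin L → Fin n → ℝ) × (Fin n → ℝ) | (p.1 l, p.2) ∈ G}ᶜ := by
      ext p; simp [hN]
    rw [this]
    exact MeasurableSet.iInter fun l =>
      ((by fun_prop : Measurable fun p : (Fin L → Fin n → ℝ) × (Fin n → ℝ) => (p.1 l, p.2)) hG).compl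
  have hNmeas : (α.prod π) N ≤ η := by
    rw [Measure.prod_apply_symm hNm]
    refine le_trans (le_of_eq (lintegral_congr fun t => ?_)) hmiss
    have : (fun x => (x, t)) ⁻¹' N = Set.univ.pi fun _ : Fin L => {u | (u, t) ∉ G} := by
      ext r; simp [hN]
    rw [this, hα, Measure.pi_pi]; simp
  obtain ⟨c, d, hcd⟩ := exists_code α π M1 M2
    (h0 := fun p => 2 * (δ + N.indicator 1 p))
    (h1 := fun q => ∑ l, stdGaussN n {z | (q.1.1 l, y1 (q.1.2, q.2) + z) ∈ A1})
    (h2 := fun q => stdGaussN n {z | (q.2.1, y2 (q.1, q.2.2) + z) ∈ A2})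
    (B0 := 2 * (δ + η)) (B1 := L * p1) (B2 := p2)
    ((measurable_const.add (measurable_one.indicator hNm)).const_mul _)
    (Finset.measurable_sum _ fun l _ => meas_gauss (by fun_prop) (by fun_prop) hA1)
    (meas_gauss (by fun_prop) (by fun_prop) hA2)
    (by
      have hi : Measurable (N.indicator (1 : (Fin L → Fin n → ℝ) × (Fin n → ℝ) → ENNReal)) := measurable_one.indicator hNm
      rw [lintegral_const_mul _ (by fun_prop), lintegral_add_left measurable_const, lintegral_indicator_one hNm]
      simp only [lintegral_const, measure_univ, mul_one]
      gcongr)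
    (by
      rw [lintegral_finsetSum _ (fun l _ => meas_gauss (by fun_prop) (by fun_prop) hA1)]
      refine (Finset.sum_le_card_nsmul Finset.univ _ p1 fun l _ => ?_).trans (le_of_eq (by rw [Finset.card_univ, Fintype.card_fin, nsmul_eq_mul]))
      rw [lintegral_prod_symm _ (meas_gauss (by fun_prop) (by fun_prop) hA1).aemeasurable]
      refine (lintegral_mono (g := fun _ => p1) fun t => ?_).trans (by simp)
      simp only []
      rw [lintegral_prod_symm _ (meas_gauss (by fun_prop) (by fun_prop) hA1).aemeasurable]
      refine (lintegral_mono (g := fun _ => p1) fun r => ?_).trans (by simp)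
      exact inner_bound α (f := fun r => r l) (by fun_prop) (measurePreserving_eval (fun _ : Fin L => ρ) l).map_eq hA1 hp1 (y1 (r, t)))
    (by
      rw [lintegral_prod _ (meas_gauss (by fun_prop) (by fun_prop) hA2).aemeasurable]
      refine (lintegral_mono (g := fun _ => p2) fun r => ?_).trans (by simp)
      simp only []
      rw [lintegral_prod_symm _ (meas_gauss (by fun_prop) (by fun_prop) hA2).aemeasurable]
      refine (lintegral_mono (g := fun _ => p2) fun t => ?_).trans (by simp)
      exact inner_bound π (f := fun t => t) (by fun_prop) Measure.map_id' hA2 hp2 (y2 (r, t)))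
  set g1 : (Fin n → ℝ) → Fin M1 := fun y => if h : ∃ w, ∃ l, (c w l, y) ∈ A1 then h.choose else ⟨0, hM1⟩ with hg1
  set g2 : (Fin n → ℝ) → Fin M2 := fun y => if h : ∃ w, (d w, y) ∈ A2 then h.choose else ⟨0, hM2⟩ with hg2
  have hg1e : ∀ y w, g1 y ≠ w → (∀ l, (c w l, y) ∉ A1) ∨ ∃ w' ∈ Finset.univ.erase w, ∃ l, (c w' l, y) ∈ A1 := by
    intro y w hne
    by_cases h : ∃ w, ∃ l, (c w l, y) ∈ A1
    · right
      refine ⟨g1 y, by simp [hne], ?_⟩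
      have : g1 y = h.choose := dif_pos h
      rw [this]; exact h.choose_spec
    · left; push Not at h; exact h w
  have hg2e : ∀ y w, g2 y ≠ w → (d w, y) ∉ A2 ∨ ∃ w' ∈ Finset.univ.erase w, (d w', y) ∈ A2 := by
    intro y w hne
    by_cases h : ∃ w, (d w, y) ∈ A2
    · right
      refine ⟨g2 y, by simp [hne], ?_⟩
      have : g2 y = h.choose := dif_pos h
      rw [this]; exact h.choose_spec
    · left; push Not at h; exact h w
  refine ⟨fun w1 w2 => x1 (c w1, d w2), fun w2 => x2 (d w2), g1, g2, ?_, ?_, ?_⟩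
  · intro w1 w2
    change sqn (x1 (c w1, d w2)) ≤ n * P1
    by_cases h : ∃ l, (c w1 l, d w2) ∈ G
    · obtain ⟨l, hl, e⟩ := hx1 _ _ h
      rw [e]; exact hG1 _ hl
    · push Not at h
      rw [hx10 _ _ h]; simp only [sqn]; simp; positivity
  · intro w2
    simp only [hx2]
    split_ifs with h
    · exact h
    · simp only [sqn]; simp; positivity
  · refine le_trans (Finset.sum_le_sum fun w1 _ => Finset.sum_le_sum fun w2 _ => ?_) hcd
    by_cases h : ∃ l, (c w1 l, d w2) ∈ G
    · obtain ⟨l, hl, e⟩ := hx1 _ _ h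
      have ex2 : x2 (d w2) = φ2 (d w2) := if_pos (hG2 _ hl)
      have k1 : stdGaussN n {z | g1 (x1 (c w1, d w2) + a • x2 (d w2) + z) ≠ w1} ≤
          δ + ∑ w ∈ Finset.univ.erase w1, ∑ l, stdGaussN n {z | (c w l, y1 (c w1, d w2) + z) ∈ A1} := by
        have hsub : {z | g1 (x1 (c w1, d w2) + a • x2 (d w2) + z) ≠ w1} ⊆
            {z | (c w1 l, x1 (c w1, d w2) + a • x2 (d w2) + z) ∉ A1} ∪
            ⋃ w ∈ Finset.univ.erase w1, ⋃ l, {z | (c w l, y1 (c w1, d w2) + z) ∈ A1} := by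
          intro z hz
          rcases hg1e _ _ hz with h | ⟨w', hw', l', h⟩
          · exact Or.inl (h l)
          · right
            simp only [Set.mem_iUnion]
            exact ⟨w', hw', l', h⟩
        refine (measure_mono hsub).trans ((measure_union_le _ _).trans (add_le_add ?_ ?_))
        · rw [e, ex2]; exact hG3 _ hl
        · refine (measure_biUnion_finset_le _ _).trans (Finset.sum_le_sum fun w _ => ?_)
          exact measure_iUnion_fintype_le _ _
      have k2 : stdGaussN n {z | g2 (b • x1 (c w1, d w2) + x2 (d w2) + z) ≠ w2} ≤
          δ + ∑ w ∈ Finset.univ.erase w2, stdGaussN n {z | (d w, y2 (c w1, d w2) + z) ∈ A2} := by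
        have hsub : {z | g2 (b • x1 (c w1, d w2) + x2 (d w2) + z) ≠ w2} ⊆
            {z | (d w2, b • x1 (c w1, d w2) + x2 (d w2) + z) ∉ A2} ∪
            ⋃ w ∈ Finset.univ.erase w2, {z | (d w, y2 (c w1, d w2) + z) ∈ A2} := by
          intro z hz
          rcases hg2e _ _ hz with h | ⟨w', hw', h⟩
          · exact Or.inl h
          · right
            simp only [Set.mem_iUnion]
            exact ⟨w', hw', h⟩
        refine (measure_mono hsub).trans ((measure_union_le _ _).trans (add_le_add ?_ ?_))
        · rw [e, ex2]; exact hG4 _ hl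
        · exact measure_biUnion_finset_le _ _
      refine (add_le_add k1 k2).trans ?_
      rw [add_add_add_comm, ← two_mul, ← add_assoc]
      gcongr
      exact le_self_add
    · push Not at h
      have hmem : (c w1, d w2) ∈ N := h
      rw [Set.indicator_of_mem hmem, add_assoc]
      refine le_trans ?_ le_self_add
      refine (add_le_add prob_le_one prob_le_one).trans ?_
      rw [← two_mul]
      gcongr
      exact le_add_self

end oneshot

end PartK

section PartL
/-- Gaussian vector law with mean `x` and variance `v` per coordinate -/
def gauss {n : ℕ} (x : Fin n → ℝ) (v : ℝ) : Measure (Fin n → ℝ) :=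
  (stdGaussN n).map fun z => x + Real.sqrt v • z

instance {n : ℕ} (x : Fin n → ℝ) (v : ℝ) : IsProbabilityMeasure (gauss x v) :=
  Measure.isProbabilityMeasure_map (by fun_prop)

lemma map_smul_gauss {n : ℕ} (c : ℝ) :
    (stdGaussN n).map (fun z => c • z) =
      Measure.pi fun _ => gaussianReal 0 (⟨c ^ 2, sq_nonneg c⟩ : NNReal) := by
  have h := Measure.pi_map_pi (μ := fun _ : Fin n => gaussianReal 0 1) (f := fun _ x => c * x)
    (fun _ => by fun_prop)
  have h2 : (gaussianReal 0 1).map (fun x => c * x) = gaussianReal 0 (⟨c ^ 2, sq_nonneg c⟩ : NNReal) := by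
    rw [gaussianReal_map_const_mul]; simp; rfl
  simp only [h2] at h
  exact h

lemma map_neg_smul_gauss {n : ℕ} (c : ℝ) :
    (stdGaussN n).map (fun z => (-c) • z) = (stdGaussN n).map (fun z => c • z) := by
  rw [map_smul_gauss, map_smul_gauss]; simp

lemma gauss_apply {n : ℕ} (x : Fin n → ℝ) {v : ℝ} (hv : 0 < v) {S : Set (Fin n → ℝ)}
    (hS : MeasurableSet S) :
    gauss x v S = ∫⁻ u in S, ENNReal.ofReal (gd v (u - x)) := by
  have h1 : gauss x v = ((stdGaussN n).map (fun z => Real.sqrt v • z)).map (fun z => x + z) := by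
    rw [Measure.map_map (by fun_prop) (by fun_prop)]; rfl
  have hv' : (⟨Real.sqrt v ^ 2, sq_nonneg _⟩ : NNReal) = ⟨v, hv.le⟩ := by
    ext; exact Real.sq_sqrt hv.le
  have hv0 : (⟨v, hv.le⟩ : NNReal) ≠ 0 := by
    intro h; exact hv.ne' (congrArg NNReal.toReal h)
  rw [h1, map_smul_gauss, hv', pi_gaussian_eq hv0, Measure.map_apply (by fun_prop) hS,
    withDensity_apply _ ((by fun_prop : Measurable fun z : Fin n → ℝ => x + z) hS),
    ← lintegral_indicator ((by fun_prop : Measurable fun z : Fin n → ℝ => x + z) hS),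
    ← lintegral_indicator hS,
    ← lintegral_add_left_eq_self (fun u => S.indicator (fun u => ENNReal.ofReal (gd v (u - x))) u) x]
  refine lintegral_congr fun u => ?_
  by_cases h : x + u ∈ S
  · rw [Set.indicator_of_mem h, Set.indicator_of_mem (by exact h), add_sub_cancel_left]; rfl
  · rw [Set.indicator_of_notMem h, Set.indicator_of_notMem (by exact h)]

lemma change_measure {n : ℕ} (x x' : Fin n → ℝ) {v w η : ℝ} (hv : 0 < v) (hw : 0 < w)
    {S : Set (Fin n → ℝ)} (hS : MeasurableSet S)
    (h1 : ∀ u ∈ S, sqn (u - x) ≤ n * w * (1 + η)) (h2 : ∀ u ∈ S, n * v * (1 - η) ≤ sqn (u - x')) :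
    gauss x' v S ≤ ENNReal.ofReal (Real.exp (-(n * (1 / 2 * Real.log (v / w) - η)))) * gauss x w S := by
  rw [gauss_apply _ hv hS, gauss_apply _ hw hS, ← lintegral_const_mul _ (by fun_prop)]
  refine setLIntegral_mono' hS fun u hu => ?_
  rw [← ENNReal.ofReal_mul (Real.exp_nonneg _)]
  refine ENNReal.ofReal_le_ofReal ?_
  rw [← Real.log_le_log_iff (gd_pos hv _) (mul_pos (Real.exp_pos _) (gd_pos hw _)),
    Real.log_mul (Real.exp_pos _).ne' (gd_pos hw _).ne', Real.log_exp, log_gd hv, log_gd hw]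
  have e1 : sqn (u - x) / (2 * w) ≤ n * (1 + η) / 2 := by
    rw [div_le_div_iff₀ (by positivity) (by positivity)]; nlinarith [h1 u hu]
  have e2 : n * (1 - η) / 2 ≤ sqn (u - x') / (2 * v) := by
    rw [div_le_div_iff₀ (by positivity) (by positivity)]; nlinarith [h2 u hu]
  have hpi := Real.pi_pos
  rw [Real.log_mul (by positivity) hv.ne', Real.log_mul (by positivity) hw.ne', Real.log_div hv.ne' hw.ne']
  linarith

lemma change_measure' {n : ℕ} (x x' : Fin n → ℝ) {v w η : ℝ} (hv : 0 < v) (hw : 0 < w)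
    {S : Set (Fin n → ℝ)} (hS : MeasurableSet S)
    (h1 : ∀ u ∈ S, sqn (u - x) ≤ n * w * (1 + η)) (h2 : ∀ u ∈ S, n * v * (1 - η) ≤ sqn (u - x')) :
    gauss x' v S ≤ ENNReal.ofReal (Real.exp (-(n * (1 / 2 * Real.log (v / w) - η)))) :=
  (change_measure x x' hv hw hS h1 h2).trans ((mul_le_mul' le_rfl prob_le_one).trans (by rw [mul_one]))

/-- the typical set -/
def Typ (n : ℕ) (s η : ℝ) (x : Fin n → ℝ) : Prop :=
  n * s * (1 - η) ≤ sqn x ∧ sqn x ≤ n * s * (1 + η)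

/-- probability of being atypical -/
def dev (n : ℕ) (η : ℝ) : ENNReal := stdGaussN n {z | ¬ Typ n 1 η z}

lemma meas_typ (n : ℕ) (s η : ℝ) : MeasurableSet {x : Fin n → ℝ | ¬ Typ n s η x} := by
  have h : MeasurableSet {x : Fin n → ℝ | Typ n s η x} :=
    (measurableSet_le measurable_const measurable_sqn).inter (measurableSet_le measurable_sqn measurable_const)
  exact h.compl

lemma sqn_smul {n : ℕ} (c : ℝ) (x : Fin n → ℝ) : sqn (c • x) = c ^ 2 * sqn x := by
  unfold sqn; rw [Finset.mul_sum]; exact Finset.sum_congr rfl fun i _ => by simp [mul_pow]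

lemma dev_scale {n : ℕ} {s η : ℝ} (hs : 0 ≤ s) :
    (stdGaussN n).map (fun z => Real.sqrt s • z) {x | ¬ Typ n s η x} ≤ dev n η := by
  rw [Measure.map_apply (by fun_prop) (meas_typ n s η)]
  refine measure_mono fun z hz ht => hz ?_
  obtain ⟨h1, h2⟩ := ht
  simp only [Typ, sqn_smul, Real.sq_sqrt hs]
  constructor <;> nlinarith

lemma lin2 {n : ℕ} (p q : ℝ) :
    ((stdGaussN n).prod (stdGaussN n)).map (fun w => p • w.1 + q • w.2) =
      (stdGaussN n).map (fun z => Real.sqrt (p ^ 2 + q ^ 2) • z) := by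
  by_cases h0 : p ^ 2 + q ^ 2 = 0
  · have hp : p = 0 := by nlinarith
    have hq : q = 0 := by nlinarith
    subst hp; subst hq; simp
  have hpos : 0 < p ^ 2 + q ^ 2 := lt_of_le_of_ne (by positivity) (Ne.symm h0)
  set r := Real.sqrt (p ^ 2 + q ^ 2) with hr
  have hr0 : 0 < r := Real.sqrt_pos.2 hpos
  have hrr : r ^ 2 = p ^ 2 + q ^ 2 := Real.sq_sqrt hpos.le
  have key : ∀ c : ℝ, c ≠ 0 → c ^ 2 = p ^ 2 + q ^ 2 → 0 ≤ q / c →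
      ((stdGaussN n).prod (stdGaussN n)).map (fun w => p • w.1 + q • w.2) =
      (stdGaussN n).map (fun z => c • z) := by
    intro c hc hcc hq
    have h := rotn (n := n) (s := p / c) (t := q / c) hq (by field_simp; linarith)
    have h3 : (stdGaussN n).map (fun z => c • z) = (((stdGaussN n).prod (stdGaussN n)).map
        (fun w => (p / c) • w.1 + (q / c) • w.2)).map (fun z => c • z) := by rw [h.map_eq]
    rw [h3, Measure.map_map (by fun_prop) (by fun_prop)]
    congr 1; ext w i
    simp; field_simp
  rcases le_or_gt 0 q with hq | hq
  · exact key r hr0.ne' hrr (div_nonneg hq hr0.le)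
  · rw [key (-r) (by simpa using hr0.ne') (by simpa using hrr) (div_nonneg_of_nonpos hq.le (by linarith)), map_neg_smul_gauss]

lemma lin3 {n : ℕ} (p q r : ℝ) :
    (((stdGaussN n).prod (stdGaussN n)).prod (stdGaussN n)).map
      (fun w => (p • w.1.1 + q • w.1.2) + r • w.2) =
      (stdGaussN n).map (fun z => Real.sqrt (p ^ 2 + q ^ 2 + r ^ 2) • z) := by
  have h : (((stdGaussN n).prod (stdGaussN n)).map (fun w => p • w.1 + q • w.2)).prod ((stdGaussN n).map id) =
      ((stdGaussN n).map (fun z => Real.sqrt (p ^ 2 + q ^ 2) • z)).prod ((stdGaussN n).map id) := by rw [lin2]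
  rw [Measure.map_prod_map _ _ (by fun_prop) measurable_id, Measure.map_prod_map _ _ (by fun_prop) measurable_id] at h
  have h2 := congrArg (fun m => Measure.map (fun w : (Fin n → ℝ) × (Fin n → ℝ) => w.1 + r • w.2) m) h
  rw [Measure.map_map (by fun_prop) (by fun_prop), Measure.map_map (by fun_prop) (by fun_prop)] at h2
  have h3 := lin2 (n := n) (Real.sqrt (p ^ 2 + q ^ 2)) r
  rw [Real.sq_sqrt (by positivity)] at h3
  rw [← h3]
  exact h2

lemma dev2 {n : ℕ} {p q s η : ℝ} (hs : s = p ^ 2 + q ^ 2) :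
    ((stdGaussN n).prod (stdGaussN n)) {w | ¬ Typ n s η (p • w.1 + q • w.2)} ≤ dev n η := by
  have h := dev_scale (n := n) (s := s) (η := η) (by rw [hs]; positivity)
  rw [hs, ← lin2, Measure.map_apply (by fun_prop) (meas_typ _ _ _)] at h
  rw [hs]; exact h

lemma dev3 {n : ℕ} {p q r s η : ℝ} (hs : s = p ^ 2 + q ^ 2 + r ^ 2) :
    (((stdGaussN n).prod (stdGaussN n)).prod (stdGaussN n))
      {w | ¬ Typ n s η ((p • w.1.1 + q • w.1.2) + r • w.2)} ≤ dev n η := by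
  have h := dev_scale (n := n) (s := s) (η := η) (by rw [hs]; positivity)
  rw [hs, ← lin3, Measure.map_apply (by fun_prop) (meas_typ _ _ _)] at h
  rw [hs]; exact h

lemma dev_le {η : ℝ} (hη : 0 < η) : ∃ C : ℝ, ∀ n : ℕ, 0 < n → dev n η ≤ ENNReal.ofReal (C / n) := by
  set V := variance (fun x : ℝ => x ^ 2) (gaussianReal 0 1) with hV
  refine ⟨V / η ^ 2, fun n hn => ?_⟩
  have hn' : (0 : ℝ) < n := by exact_mod_cast hn
  have hm : MemLp (fun x : ℝ => x ^ 2) 2 (gaussianReal 0 1) := by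
    have h4 : MemLp (fun x : ℝ => x) 4 (gaussianReal 0 1) := memLp_id_gaussianReal 4
    refine (memLp_two_iff_integrable_sq (by fun_prop)).2 ?_
    have := h4.integrable_norm_pow (by norm_num)
    refine this.congr (Filter.Eventually.of_forall fun x => ?_)
    simp only [Real.norm_eq_abs]
    have : |x| ^ 4 = (|x| ^ 2) ^ 2 := by ring
    have h5 : (4 : ENNReal).toReal = 4 := by norm_num
    simp [this]
  have hmn : MemLp (sqn (n := n)) 2 (stdGaussN n) := by
    unfold sqn stdGaussN
    refine memLp_finsetSum _ fun i _ => ?_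
    exact hm.comp_measurePreserving (measurePreserving_eval (fun _ : Fin n => gaussianReal 0 1) i)
  have hvar : variance (sqn (n := n)) (stdGaussN n) = n * V := by
    have := variance_sum_pi (μ := fun _ : Fin n => gaussianReal 0 1) (X := fun _ x => x ^ 2) (fun _ => hm)
    simp only [Finset.sum_const, Finset.card_univ, Fintype.card_fin, nsmul_eq_mul] at this
    rw [← hV] at this
    rw [← this]
    unfold stdGaussN
    congr 1
    ext x; simp [sqn]
  have h := meas_ge_le_variance_div_sq hmn (c := n * η) (by positivity)
  rw [hvar, integral_sqn] at h
  refine (measure_mono fun z hz => ?_).trans (h.trans (ENNReal.ofReal_le_ofReal (le_of_eq ?_)))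
  · change (n : ℝ) * η ≤ |sqn z - n|
    by_contra hc
    push Not at hc
    rw [abs_lt] at hc
    exact hz ⟨by nlinarith, by nlinarith⟩
  · field_simp

lemma miss_bound {U : Type} [MeasurableSpace U] (J ρ : Measure U) [IsProbabilityMeasure J]
    [IsProbabilityMeasure ρ] {S : Set U} (hS : MeasurableSet S) {K : ℝ} (hK : 0 < K)
    (h : J S ≤ ENNReal.ofReal K * ρ S) (L : ℕ) :
    (ρ Sᶜ) ^ L ≤ J Sᶜ + ENNReal.ofReal (Real.exp (-(L / K))) := by
  have hr : ρ Sᶜ = ENNReal.ofReal (1 - ρ.real S) := by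
    rw [← probReal_compl_eq_one_sub hS]; simp [Measure.real]
  have hq : J Sᶜ = ENNReal.ofReal (1 - J.real S) := by
    rw [← probReal_compl_eq_one_sub hS]; simp [Measure.real]
  have h' : J.real S ≤ K * ρ.real S := by
    have := ENNReal.toReal_mono (ENNReal.mul_ne_top ENNReal.ofReal_ne_top (measure_ne_top _ _)) h
    rwa [ENNReal.toReal_mul, ENNReal.toReal_ofReal hK.le] at this
  set q := J.real S
  set r := ρ.real S
  have hr1 : r ≤ 1 := measureReal_le_one
  have hq1 : q ≤ 1 := measureReal_le_one
  have hq0 : 0 ≤ q := measureReal_nonneg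
  rw [hr, hq, ← ENNReal.ofReal_pow (by linarith), ← ENNReal.ofReal_add (by linarith) (Real.exp_nonneg _)]
  refine ENNReal.ofReal_le_ofReal ?_
  calc (1 - r) ^ L ≤ (Real.exp (-r)) ^ L := by
        exact pow_le_pow_left₀ (by linarith) (by linarith [Real.add_one_le_exp (-r)]) L
    _ = Real.exp (-(r * L)) := by rw [← Real.exp_nat_mul]; ring_nf
    _ ≤ Real.exp (q * (-(L / K))) := by
        apply Real.exp_le_exp.2
        have : q / K ≤ r := by rw [div_le_iff₀ hK]; linarith
        have : q / K * L ≤ r * L := by gcongr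
        have e : q * (-(L / K)) = - (q / K * L) := by ring
        linarith
    _ ≤ (1 - q) + q * Real.exp (-(L / K)) := by
        have := convexOn_exp.2 (Set.mem_univ 0) (Set.mem_univ (-(L / K) : ℝ)) (by linarith : 0 ≤ 1 - q) hq0 (by ring)
        simpa using this
    _ ≤ _ := by nlinarith [Real.exp_pos (-(L / K))]

end PartL

section PartM
lemma markov3 {n : ℕ} {B : Set (((Fin n → ℝ) × (Fin n → ℝ)) × (Fin n → ℝ))} (hB : MeasurableSet B)
    {δ : ENNReal} (h0 : δ ≠ 0) (ht : δ ≠ ⊤) :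
    ((stdGaussN n).prod (stdGaussN n)) {w | ¬ stdGaussN n {z | (w, z) ∈ B} ≤ δ} ≤
      (((stdGaussN n).prod (stdGaussN n)).prod (stdGaussN n)) B / δ := by
  rw [Measure.prod_apply hB]
  refine le_trans (measure_mono fun w hw => ?_)
    (meas_ge_le_lintegral_div (measurable_measure_prodMk_left hB).aemeasurable h0 ht)
  exact (not_le.1 hw).le

lemma typ_union {n : ℕ} {p q r s p' q' r' s' η : ℝ} (hs : s = p ^ 2 + q ^ 2 + r ^ 2)
    (hs' : s' = p' ^ 2 + q' ^ 2 + r' ^ 2)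
    {B : Set (((Fin n → ℝ) × (Fin n → ℝ)) × (Fin n → ℝ))}
    (h : ∀ w, Typ n s η ((p • w.1.1 + q • w.1.2) + r • w.2) →
      Typ n s' η ((p' • w.1.1 + q' • w.1.2) + r' • w.2) → w ∉ B) :
    (((stdGaussN n).prod (stdGaussN n)).prod (stdGaussN n)) B ≤ 2 * dev n η := by
  rw [two_mul]
  refine le_trans (measure_mono fun w hw => ?_)
    ((measure_union_le _ _).trans (add_le_add (dev3 hs) (dev3 hs')))
  by_contra hc
  simp only [Set.mem_union, Set.mem_ofPred_eq, not_or, not_not] at hc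
  exact h w hc.1 hc.2 hw

theorem gauss_code (a b : ℝ) {P1 P2 Q κ1 c2 η : ℝ} {n : ℕ} (hP1 : 0 ≤ P1) (hP2 : 0 ≤ P2)
    (hQ : 0 < Q) (hp1 : (Q + κ1 ^ 2) * (1 + η) ≤ P1) (hp2 : c2 ^ 2 * (1 + η) ≤ P2)
    {δ : ENNReal} (h0 : δ ≠ 0) (ht : δ ≠ ⊤) {M1 M2 L : ℕ} (hM1 : 0 < M1) (hM2 : 0 < M2)
    {β κ σ c N : ℝ} (hβ : β = Q / (Q + 1)) (hκ : κ = κ1 + a * c2) (hσ : σ = Q + (β * κ) ^ 2)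
    (hc : c = b * κ1 + c2) (hN : N = 1 + b ^ 2 * Q) :
    ∃ (f1 : Fin M1 → Fin M2 → Fin n → ℝ) (f2 : Fin M2 → Fin n → ℝ) (g1 : (Fin n → ℝ) → Fin M1)
      (g2 : (Fin n → ℝ) → Fin M2),
      (∀ w1 w2, sqn (f1 w1 w2) ≤ n * P1) ∧ (∀ w2, sqn (f2 w2) ≤ n * P2) ∧
      ∑ w1, ∑ w2, (stdGaussN n {z | g1 (f1 w1 w2 + a • f2 w2 + z) ≠ w1}
        + stdGaussN n {z | g2 (b • f1 w1 w2 + f2 w2 + z) ≠ w2}) ≤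
      M1 * (M2 * (2 * (δ + (4 * dev n η + 2 * (2 * dev n η / δ) + ENNReal.ofReal (Real.exp (-(L / Real.exp (n * (1 / 2 * Real.log (σ / Q) + η)))))))
        + ((M1 - 1 : ℕ) : ENNReal) * (L * ENNReal.ofReal (Real.exp (-(n * (1 / 2 * Real.log (σ / β) - η)))))
        + ((M2 - 1 : ℕ) : ENNReal) * ENNReal.ofReal (Real.exp (-(n * (1 / 2 * Real.log (1 / (N / (c ^ 2 + N))) - η)))))) := by
  have hβ0 : 0 < β := by rw [hβ]; positivity
  have hσ0 : 0 < σ := by rw [hσ]; positivity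
  have hN0 : 0 < N := by rw [hN]; positivity
  set W := N / (c ^ 2 + N) with hW
  have hW0 : 0 < W := by rw [hW]; positivity
  set ζ := c / (c ^ 2 + N) with hζ
  set φ1 : (Fin n → ℝ) × (Fin n → ℝ) → Fin n → ℝ := fun p => (p.1 - (β * κ) • p.2) + κ1 • p.2 with hφ1
  set φ2 : (Fin n → ℝ) → Fin n → ℝ := fun t => c2 • t with hφ2
  have mφ1 : Measurable φ1 := by fun_prop
  have mφ2 : Measurable φ2 := by fun_prop
  set A1 : Set ((Fin n → ℝ) × (Fin n → ℝ)) :=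
    {p | sqn (p.1 - β • p.2) ≤ n * β * (1 + η) ∧ n * σ * (1 - η) ≤ sqn p.1} with hA1
  set A2 : Set ((Fin n → ℝ) × (Fin n → ℝ)) :=
    {p | sqn (p.1 - ζ • p.2) ≤ n * W * (1 + η) ∧ n * 1 * (1 - η) ≤ sqn p.1} with hA2
  have mA1 : MeasurableSet A1 := by
    rw [hA1, Set.ofPred_and]
    exact (measurableSet_le (by fun_prop) (by fun_prop)).inter (measurableSet_le (by fun_prop) (by fun_prop))
  have mA2 : MeasurableSet A2 := by
    rw [hA2, Set.ofPred_and]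
    exact (measurableSet_le (by fun_prop) (by fun_prop)).inter (measurableSet_le (by fun_prop) (by fun_prop))
  set e1 : (Fin n → ℝ) × (Fin n → ℝ) → ENNReal :=
    fun p => stdGaussN n {z | (p.1, φ1 p + a • φ2 p.2 + z) ∉ A1} with he1
  set e2 : (Fin n → ℝ) × (Fin n → ℝ) → ENNReal :=
    fun p => stdGaussN n {z | (p.2, b • φ1 p + φ2 p.2 + z) ∉ A2} with he2
  have me1 : Measurable e1 := meas_gauss (f := fun p : (Fin n → ℝ) × (Fin n → ℝ) => p.1)
    (g := fun p => φ1 p + a • φ2 p.2) (by fun_prop) (by fun_prop) mA1.compl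
  have me2 : Measurable e2 := meas_gauss (f := fun p : (Fin n → ℝ) × (Fin n → ℝ) => p.2)
    (g := fun p => b • φ1 p + φ2 p.2) (by fun_prop) (by fun_prop) mA2.compl
  set G : Set ((Fin n → ℝ) × (Fin n → ℝ)) :=
    {p | sqn (φ1 p) ≤ n * P1 ∧ sqn (φ2 p.2) ≤ n * P2 ∧ sqn p.1 ≤ n * σ * (1 + η) ∧
      n * Q * (1 - η) ≤ sqn (p.1 - (β * κ) • p.2) ∧ e1 p ≤ δ ∧ e2 p ≤ δ} with hG
  have mG : MeasurableSet G := by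
    rw [hG]; simp only [Set.ofPred_and]
    exact (measurableSet_le (by fun_prop) (by fun_prop)).inter <|
    (measurableSet_le (by fun_prop) (by fun_prop)).inter <|
    (measurableSet_le (by fun_prop) (by fun_prop)).inter <|
    (measurableSet_le (by fun_prop) (by fun_prop)).inter <|
    (measurableSet_le (by fun_prop) (by fun_prop)).inter (measurableSet_le (by fun_prop) (by fun_prop))
  have hpi : stdGaussN n = gauss 0 1 := by simp [gauss]
  refine oneshot (a := a) (b := b) hP1 hP2 (gauss 0 σ) (stdGaussN n) (φ1 := φ1) (φ2 := φ2) (G := G) (A1 := A1) (A2 := A2)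
    mφ1 mφ2 mG mA1 mA2 hM1 hM2 (fun p hp => hp.1) (fun p hp => hp.2.1) (fun p hp => hp.2.2.2.2.1)
    (fun p hp => hp.2.2.2.2.2) ?_ ?_ ?_
  · intro y
    refine change_measure' (β • y) 0 hσ0 hβ0 ((by fun_prop : Measurable fun u : Fin n → ℝ => (u, y)) mA1) ?_ ?_
    · intro u hu; exact hu.1
    · intro u hu; rw [sub_zero]; exact hu.2
  · intro y
    rw [hpi]
    refine change_measure' (ζ • y) 0 one_pos hW0 ((by fun_prop : Measurable fun u : Fin n → ℝ => (u, y)) mA2) ?_ ?_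
    · intro u hu; exact hu.1
    · intro u hu; rw [sub_zero]; exact hu.2
  · set K := Real.exp (n * (1 / 2 * Real.log (σ / Q) + η)) with hK
    set U : (Fin n → ℝ) × (Fin n → ℝ) → (Fin n → ℝ) × (Fin n → ℝ) :=
      fun w => ((β * κ) • w.2 + Real.sqrt Q • w.1, w.2) with hU
    have mU : Measurable U := by fun_prop
    have hQs : Real.sqrt Q ^ 2 = Q := Real.sq_sqrt hQ.le
    have step1 : ∀ t, (gauss 0 σ {u | (u, t) ∉ G}) ^ L ≤
        gauss ((β * κ) • t) Q {u | (u, t) ∉ G} + ENNReal.ofReal (Real.exp (-(L / K))) := by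
      intro t
      have mS : MeasurableSet {u | (u, t) ∈ G} := (by fun_prop : Measurable fun u : Fin n → ℝ => (u, t)) mG
      refine miss_bound (gauss ((β * κ) • t) Q) (gauss 0 σ) mS (Real.exp_pos _) ?_ L
      refine (change_measure (η := η) 0 ((β * κ) • t) hQ hσ0 mS ?_ ?_).trans (le_of_eq ?_)
      · intro u hu; rw [sub_zero]; exact hu.2.2.1
      · intro u hu; exact hu.2.2.2.1
      · congr 3
        rw [Real.log_div hQ.ne' hσ0.ne', Real.log_div hσ0.ne' hQ.ne']; ring
    refine (lintegral_mono step1).trans ?_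
    rw [lintegral_add_right _ measurable_const, lintegral_const, measure_univ, mul_one]
    refine add_le_add ?_ le_rfl
    have e : ∫⁻ t, gauss ((β * κ) • t) Q {u | (u, t) ∉ G} ∂(stdGaussN n) =
        ((stdGaussN n).prod (stdGaussN n)) {w | U w ∉ G} := by
      rw [show {w | U w ∉ G} = U ⁻¹' Gᶜ from rfl, Measure.prod_apply_symm (mU mG.compl)]
      refine lintegral_congr fun t => ?_
      have mS : MeasurableSet {u | (u, t) ∉ G} := (by fun_prop : Measurable fun u : Fin n → ℝ => (u, t)) mG.compl
      rw [gauss, Measure.map_apply (by fun_prop) mS]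
      rfl
    rw [e]
    have t1 := dev2 (n := n) (p := Real.sqrt Q) (q := κ1) (s := Q + κ1 ^ 2) (η := η) (by rw [hQs])
    have t2 := dev2 (n := n) (p := 0) (q := c2) (s := c2 ^ 2) (η := η) (by ring)
    have t3 := dev2 (n := n) (p := Real.sqrt Q) (q := β * κ) (s := σ) (η := η) (by rw [hQs, hσ])
    have t4 := dev2 (n := n) (p := Real.sqrt Q) (q := 0) (s := Q) (η := η) (by rw [hQs]; ring)
    have mB1 : MeasurableSet {w : ((Fin n → ℝ) × (Fin n → ℝ)) × (Fin n → ℝ) |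
        ((U w.1).1, φ1 (U w.1) + a • φ2 (U w.1).2 + w.2) ∉ A1} :=
      (by fun_prop : Measurable fun w : ((Fin n → ℝ) × (Fin n → ℝ)) × (Fin n → ℝ) =>
        ((U w.1).1, φ1 (U w.1) + a • φ2 (U w.1).2 + w.2)) mA1.compl
    have mB2 : MeasurableSet {w : ((Fin n → ℝ) × (Fin n → ℝ)) × (Fin n → ℝ) |
        ((U w.1).2, b • φ1 (U w.1) + φ2 (U w.1).2 + w.2) ∉ A2} :=
      (by fun_prop : Measurable fun w : ((Fin n → ℝ) × (Fin n → ℝ)) × (Fin n → ℝ) =>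
        ((U w.1).2, b • φ1 (U w.1) + φ2 (U w.1).2 + w.2)) mA2.compl
    have s1 : β = ((1 - β) * Real.sqrt Q) ^ 2 + 0 ^ 2 + (-β) ^ 2 := by
      rw [mul_pow, hQs, hβ]; field_simp; ring
    have s2 : W = (-(ζ * b * Real.sqrt Q)) ^ 2 + (1 - ζ * c) ^ 2 + (-ζ) ^ 2 := by
      rw [neg_sq, mul_pow, hQs, hW, hζ]
      have : b ^ 2 * Q = N - 1 := by rw [hN]; ring
      have h2 : (c / (c ^ 2 + N) * b) ^ 2 * Q = (c / (c ^ 2 + N)) ^ 2 * (N - 1) := by rw [← this]; ring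
      rw [h2]; field_simp; ring
    have t5 := (markov3 mB1 h0 ht).trans (ENNReal.div_le_div_right (typ_union (η := η) (B := {w : ((Fin n → ℝ) × (Fin n → ℝ)) × (Fin n → ℝ) | ((U w.1).1, φ1 (U w.1) + a • φ2 (U w.1).2 + w.2) ∉ A1}) s1
      (p' := Real.sqrt Q) (q' := β * κ) (r' := 0) (s' := σ) (by rw [hQs, hσ]; ring)
      (fun w h h' hw => hw ⟨by
          refine le_trans (le_of_eq (congrArg sqn ?_)) h.2
          ext i; simp only [hφ1, hφ2, hU, hκ, Pi.add_apply, Pi.sub_apply, Pi.smul_apply, smul_eq_mul]; ring, by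
          refine le_trans h'.1 (le_of_eq (congrArg sqn ?_))
          ext i; simp only [hU, Pi.add_apply, Pi.smul_apply, smul_eq_mul]; ring⟩)) δ)
    have t6 := (markov3 mB2 h0 ht).trans (ENNReal.div_le_div_right (typ_union (η := η) (B := {w : ((Fin n → ℝ) × (Fin n → ℝ)) × (Fin n → ℝ) | ((U w.1).2, b • φ1 (U w.1) + φ2 (U w.1).2 + w.2) ∉ A2}) s2
      (p' := 0) (q' := 1) (r' := 0) (s' := 1) (by ring)
      (fun w h h' hw => hw ⟨by
          refine le_trans (le_of_eq (congrArg sqn ?_)) h.2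
          ext i; simp only [hφ1, hφ2, hU, hc, Pi.add_apply, Pi.sub_apply, Pi.smul_apply, smul_eq_mul]; ring, by
          refine le_trans h'.1 (le_of_eq (congrArg sqn ?_))
          ext i; simp only [hU, Pi.add_apply, Pi.smul_apply, smul_eq_mul]; ring⟩)) δ)
    have hsum : 4 * dev n η + 2 * (2 * dev n η / δ) = dev n η + (dev n η + (dev n η + (dev n η + (2 * dev n η / δ + 2 * dev n η / δ)))) := by ring
    rw [hsum]
    refine le_trans (measure_mono (t := _ ∪ (_ ∪ (_ ∪ (_ ∪ (_ ∪ _))))) ?_)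
      ((measure_union_le _ _).trans (add_le_add t1 <| (measure_union_le _ _).trans (add_le_add t2 <|
      (measure_union_le _ _).trans (add_le_add t3 <| (measure_union_le _ _).trans (add_le_add t4 <|
      (measure_union_le _ _).trans (add_le_add t5 t6))))))
    intro w hw
    by_contra hcon
    simp only [Set.mem_union, Set.mem_ofPred_eq, not_or, not_not] at hcon
    obtain ⟨c1, c2', c3, c4, c5, c6⟩ := hcon
    have hn0 : (0 : ℝ) ≤ n := Nat.cast_nonneg n
    refine hw ⟨?_, ?_, ?_, ?_, c5, c6⟩
    · refine le_trans (le_of_eq (congrArg sqn ?_)) (c1.2.trans ?_)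
      · ext i; simp only [hφ1, hU, Pi.add_apply, Pi.sub_apply, Pi.smul_apply, smul_eq_mul]; ring
      · rw [mul_assoc]; gcongr
    · refine le_trans (le_of_eq (congrArg sqn ?_)) (c2'.2.trans ?_)
      · ext i; simp only [hφ2, hU, Pi.add_apply, Pi.smul_apply, smul_eq_mul]; ring
      · rw [mul_assoc]; gcongr
    · refine le_trans (le_of_eq (congrArg sqn ?_)) c3.2
      ext i; simp only [hU, Pi.add_apply, Pi.smul_apply, smul_eq_mul]; ring
    · refine le_trans c4.1 (le_of_eq (congrArg sqn ?_))
      ext i; simp only [hU, Pi.add_apply, Pi.sub_apply, Pi.smul_apply, smul_eq_mul]; ring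

end PartM

section PartN
lemma pe_of {M1 M2 : ℕ} (h1 : 0 < M1) (h2 : 0 < M2) {p q : Fin M1 → Fin M2 → ENNReal} {ε : ℝ} (hε : 0 ≤ ε)
    (h : ∑ w1, ∑ w2, (p w1 w2 + q w1 w2) ≤ M1 * (M2 * ENNReal.ofReal ε)) :
    (1 / (M1 * M2) : ℝ) * ∑ w1, ∑ w2, (p w1 w2).toReal ≤ ε := by
  have h' : ∑ w1, ∑ w2, p w1 w2 ≤ M1 * (M2 * ENNReal.ofReal ε) :=
    le_trans (Finset.sum_le_sum fun _ _ => Finset.sum_le_sum fun _ _ => le_self_add) h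
  have hT : (M1 * (M2 * ENNReal.ofReal ε) : ENNReal) ≠ ⊤ := by finiteness
  have hs : ∀ w1 w2, p w1 w2 ≠ ⊤ := fun w1 w2 => ne_top_of_le_ne_top hT
    (le_trans (le_trans (Finset.single_le_sum (f := fun w2 => p w1 w2) (fun _ _ => zero_le) (Finset.mem_univ w2))
      (Finset.single_le_sum (f := fun w1 => ∑ w2, p w1 w2) (fun _ _ => zero_le) (Finset.mem_univ w1))) h')
  have h3 := ENNReal.toReal_mono hT h'
  rw [ENNReal.toReal_sum (fun w1 _ => ENNReal.sum_ne_top.2 fun w2 _ => hs w1 w2)] at h3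
  simp only [ENNReal.toReal_mul, ENNReal.toReal_natCast, ENNReal.toReal_ofReal hε] at h3
  rw [Finset.sum_congr rfl fun w1 _ => ENNReal.toReal_sum fun w2 _ => hs w1 w2] at h3
  have : (0 : ℝ) < M1 * M2 := by positivity
  rw [one_div, inv_mul_le_iff₀ this]
  linarith

lemma power_of {n M1 M2 : ℕ} (hn : 0 < n) (h1 : 0 < M1) (h2 : 0 < M2) {f : Fin M1 → Fin M2 → Fin n → ℝ} {P : ℝ}
    (h : ∀ w1 w2, sqn (f w1 w2) ≤ n * P) :
    (1 / (M1 * M2) : ℝ) * ∑ w1 : Fin M1, ∑ w2 : Fin M2, ((1 / n : ℝ) * ∑ i, (f w1 w2 i) ^ 2) ≤ P := by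
  have hn' : (0 : ℝ) < n := by exact_mod_cast hn
  have h3 : ∑ w1 : Fin M1, ∑ w2 : Fin M2, ((1 / n : ℝ) * ∑ i, (f w1 w2 i) ^ 2) ≤ ∑ w1 : Fin M1, ∑ w2 : Fin M2, P := by
    refine Finset.sum_le_sum fun w1 _ => Finset.sum_le_sum fun w2 _ => ?_
    rw [one_div, inv_mul_le_iff₀ hn']; exact h w1 w2
  have : (0 : ℝ) < M1 * M2 := by positivity
  rw [one_div, inv_mul_le_iff₀ this]
  simp at h3 ⊢; linarith

lemma rate_of {n : ℕ} (hn : 0 < n) {r ε : ℝ} (hε : 0 < ε) :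
    r / Real.log 2 - ε ≤ Real.logb 2 (⌈Real.exp (n * r)⌉₊ : ℕ) / n := by
  have hn' : (0 : ℝ) < n := by exact_mod_cast hn
  have h2 := Real.log_pos one_lt_two
  have h : n * r ≤ Real.log (⌈Real.exp (n * r)⌉₊ : ℕ) :=
    (Real.le_log_iff_exp_le (by exact_mod_cast Nat.ceil_pos.2 (Real.exp_pos _))).2 (Nat.le_ceil _)
  rw [Real.logb, div_div, le_div_iff₀ (by positivity)]
  have : r / Real.log 2 * (Real.log 2 * n) = n * r := by field_simp
  have : 0 < ε * (Real.log 2 * n) := by positivity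
  nlinarith

lemma ceil_sub_one (x : ℝ) (hx : 0 < x) : (((⌈x⌉₊ - 1 : ℕ)) : ENNReal) ≤ ENNReal.ofReal x := by
  have h1 : 1 ≤ ⌈x⌉₊ := Nat.ceil_pos.2 hx
  have h2 := Nat.ceil_lt_add_one hx.le
  rw [← ENNReal.ofReal_natCast]
  refine ENNReal.ofReal_le_ofReal ?_
  rw [Nat.cast_sub h1]; push_cast; linarith

lemma exists_eta {x P : ℝ} (hx : 0 ≤ x) (h : x < P ∨ x = 0) (hP : 0 ≤ P) : ∃ η0 > 0, ∀ η, 0 < η → η ≤ η0 → x * (1 + η) ≤ P := by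
  rcases h with h | h
  · refine ⟨(P - x) / (x + 1), div_pos (by linarith) (by linarith), fun η h0 h1 => ?_⟩
    rw [le_div_iff₀ (by linarith)] at h1
    nlinarith
  · exact ⟨1, one_pos, fun η _ _ => by rw [h, zero_mul]; exact hP⟩

theorem ach_inner (a b : ℝ) {P1 P2 Q κ1 c2 r1 r2 : ℝ} (hP1 : 0 ≤ P1) (hP2 : 0 ≤ P2)
    (hQ : 0 < Q) (h1 : Q + κ1 ^ 2 < P1) (h2 : c2 ^ 2 < P2 ∨ c2 ^ 2 = 0)
    (hr1 : r1 < 1 / 2 * Real.log (1 + Q))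
    (hr2 : r2 < 1 / 2 * Real.log (((b * κ1 + c2) ^ 2 + (1 + b ^ 2 * Q)) / (1 + b ^ 2 * Q))) :
    AchievableGT1 a b P1 P2 (r1 / Real.log 2) (r2 / Real.log 2) := by
  intro ε hε
  obtain ⟨β, hβ⟩ : ∃ β, β = Q / (Q + 1) := ⟨_, rfl⟩
  obtain ⟨κ, hκ⟩ : ∃ κ, κ = κ1 + a * c2 := ⟨_, rfl⟩
  obtain ⟨σ, hσ⟩ : ∃ σ, σ = Q + (β * κ) ^ 2 := ⟨_, rfl⟩
  obtain ⟨c, hc⟩ : ∃ c, c = b * κ1 + c2 := ⟨_, rfl⟩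
  obtain ⟨N, hN⟩ : ∃ N, N = 1 + b ^ 2 * Q := ⟨_, rfl⟩
  rw [← hc, ← hN] at hr2
  have hβ0 : 0 < β := by rw [hβ]; positivity
  have hσ0 : 0 < σ := by rw [hσ]; positivity
  have hN0 : 0 < N := by rw [hN]; positivity
  obtain ⟨η1, hη1, H1⟩ := exists_eta (by positivity : 0 ≤ Q + κ1 ^ 2) (Or.inl h1) hP1
  obtain ⟨η2, hη2, H2⟩ := exists_eta (sq_nonneg c2) h2 hP2
  obtain ⟨d, hd, hd1, hd2, hd3, hd4⟩ : ∃ d > 0, d ≤ η1 ∧ d ≤ η2 ∧ 4 * d ≤ 1 / 2 * Real.log (1 + Q) - r1 ∧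
      2 * d ≤ 1 / 2 * Real.log ((c ^ 2 + N) / N) - r2 := by
    refine ⟨min (min η1 η2) (min ((1 / 2 * Real.log (1 + Q) - r1) / 4) ((1 / 2 * Real.log ((c ^ 2 + N) / N) - r2) / 2)), ?_, ?_, ?_, ?_, ?_⟩
    · refine lt_min (lt_min hη1 hη2) (lt_min ?_ ?_) <;> linarith
    · exact (min_le_left _ _).trans (min_le_left _ _)
    · exact (min_le_left _ _).trans (min_le_right _ _)
    · linarith [(min_le_right (min η1 η2) (min ((1 / 2 * Real.log (1 + Q) - r1) / 4) ((1 / 2 * Real.log ((c ^ 2 + N) / N) - r2) / 2))).trans (min_le_left _ _)]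
    · linarith [(min_le_right (min η1 η2) (min ((1 / 2 * Real.log (1 + Q) - r1) / 4) ((1 / 2 * Real.log ((c ^ 2 + N) / N) - r2) / 2))).trans (min_le_right _ _)]
  obtain ⟨C, hC⟩ := dev_le hd
  set δ : ℝ := ε / 8 with hδ
  have hδ0 : 0 < δ := by positivity
  set F : ℕ → ℝ := fun n => 2 * (δ + (4 * (|C| / n) + 2 * (2 * (|C| / n) / δ) + Real.exp (-(n * d))))
    + 2 * Real.exp (-(n * d)) + Real.exp (-(n * d)) with hF
  have hlim : Filter.Tendsto F Filter.atTop (nhds (2 * (δ + (4 * 0 + 2 * (2 * 0 / δ) + 0)) + 2 * 0 + 0)) := by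
    have l1 : Filter.Tendsto (fun n : ℕ => |C| / (n : ℝ)) Filter.atTop (nhds 0) := tendsto_const_div_atTop_nhds_zero_nat _
    have l2 : Filter.Tendsto (fun n : ℕ => Real.exp (-((n : ℝ) * d))) Filter.atTop (nhds 0) :=
      Real.tendsto_exp_neg_atTop_nhds_zero.comp (tendsto_natCast_atTop_atTop.atTop_mul_const hd)
    exact (((((l1.const_mul 4).add (((l1.const_mul 2).div_const δ).const_mul 2)).add l2).const_add δ).const_mul 2).add (l2.const_mul 2) |>.add l2
  have hev : ∀ᶠ n in Filter.atTop, F n < ε := hlim.eventually_lt_const (by rw [hδ]; ring_nf; linarith)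
  obtain ⟨n, hFn, hn⟩ := (hev.and (Filter.eventually_gt_atTop 0)).exists
  have hn' : (0 : ℝ) < n := by exact_mod_cast hn
  have hM1 : 0 < ⌈Real.exp (n * r1)⌉₊ := Nat.ceil_pos.2 (Real.exp_pos _)
  have hM2 : 0 < ⌈Real.exp (n * r2)⌉₊ := Nat.ceil_pos.2 (Real.exp_pos _)
  set y : ℝ := 1 / 2 * Real.log (σ / Q) with hy
  have hy0 : 0 ≤ y := by
    have : 0 ≤ Real.log (σ / Q) := Real.log_nonneg (by rw [le_div_iff₀ hQ, hσ]; nlinarith [sq_nonneg (β * κ)])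
    positivity
  set L := ⌈Real.exp (n * (y + 2 * d))⌉₊ with hL
  obtain ⟨f1, f2, g1, g2, p1, p2, hsum⟩ := gauss_code (n := n) (η := d) a b hP1 hP2 hQ (H1 d hd hd1) (H2 d hd hd2)
    (δ := ENNReal.ofReal δ) (by simpa using hδ0) ENNReal.ofReal_ne_top (L := L) hM1 hM2 hβ hκ hσ hc hN
  have b0 : dev n d ≤ ENNReal.ofReal (|C| / n) := (hC n hn).trans (ENNReal.ofReal_le_ofReal (by gcongr; exact le_abs_self C))
  have b1 : Real.exp (-(L / Real.exp (n * (y + d)))) ≤ Real.exp (-(n * d)) := by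
    refine Real.exp_le_exp.2 (neg_le_neg ?_)
    rw [le_div_iff₀ (Real.exp_pos _)]
    refine le_trans ?_ (Nat.le_ceil _)
    have : n * (y + 2 * d) = n * d + n * (y + d) := by ring
    rw [this, Real.exp_add]
    gcongr
    linarith [Real.add_one_le_exp (n * d)]
  have b2 : ((⌈Real.exp (n * r1)⌉₊ - 1 : ℕ) : ENNReal) * (L * ENNReal.ofReal (Real.exp (-(n * (1 / 2 * Real.log (σ / β) - d))))) ≤
      ENNReal.ofReal (2 * Real.exp (-(n * d))) := by
    have hLL : (L : ENNReal) ≤ ENNReal.ofReal (2 * Real.exp (n * (y + 2 * d))) := by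
      rw [← ENNReal.ofReal_natCast]
      refine ENNReal.ofReal_le_ofReal ?_
      have := Nat.ceil_lt_add_one (Real.exp_nonneg (n * (y + 2 * d)))
      have := Real.one_le_exp (by positivity : 0 ≤ n * (y + 2 * d))
      linarith
    refine (mul_le_mul' (ceil_sub_one _ (Real.exp_pos _)) (mul_le_mul' hLL le_rfl)).trans ?_
    rw [← ENNReal.ofReal_mul (by positivity), ← ENNReal.ofReal_mul (by positivity)]
    refine ENNReal.ofReal_le_ofReal ?_
    have : Real.exp (n * r1) * (2 * Real.exp (n * (y + 2 * d)) * Real.exp (-(n * (1 / 2 * Real.log (σ / β) - d)))) =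
      2 * Real.exp (n * r1 + n * (y + 2 * d) + -(n * (1 / 2 * Real.log (σ / β) - d))) := by
      rw [Real.exp_add, Real.exp_add]; ring
    rw [this]
    gcongr
    have e : 1 / 2 * Real.log (σ / β) = y + 1 / 2 * Real.log (1 + Q) := by
      have : σ / β = σ / Q * (1 + Q) := by rw [hβ]; field_simp; ring
      rw [this, Real.log_mul (by positivity) (by positivity), hy]; ring
    rw [e]
    nlinarith
  have b3 : ((⌈Real.exp (n * r2)⌉₊ - 1 : ℕ) : ENNReal) * ENNReal.ofReal (Real.exp (-(n * (1 / 2 * Real.log (1 / (N / (c ^ 2 + N))) - d)))) ≤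
      ENNReal.ofReal (Real.exp (-(n * d))) := by
    refine (mul_le_mul' (ceil_sub_one _ (Real.exp_pos _)) le_rfl).trans ?_
    rw [← ENNReal.ofReal_mul (by positivity), ← Real.exp_add, one_div_div]
    refine ENNReal.ofReal_le_ofReal (Real.exp_le_exp.2 ?_)
    nlinarith
  have hFE : ENNReal.ofReal (F n) = 2 * (ENNReal.ofReal δ + (4 * ENNReal.ofReal (|C| / n) + 2 * (2 * ENNReal.ofReal (|C| / n) / ENNReal.ofReal δ) + ENNReal.ofReal (Real.exp (-(n * d)))))
      + ENNReal.ofReal (2 * Real.exp (-(n * d))) + ENNReal.ofReal (Real.exp (-(n * d))) := by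
    have hCn : 0 ≤ |C| / n := by positivity
    have he := Real.exp_pos (-(n * d))
    rw [hF]
    simp only
    rw [ENNReal.ofReal_add (by positivity) (by positivity), ENNReal.ofReal_add (by positivity) (by positivity),
      ENNReal.ofReal_mul (p := 2) (q := δ + _) (by positivity), ENNReal.ofReal_add (p := δ) (by positivity) (by positivity),
      ENNReal.ofReal_add (by positivity) (by positivity), ENNReal.ofReal_add (by positivity) (by positivity),
      ENNReal.ofReal_mul (p := 4) (by positivity), ENNReal.ofReal_mul (p := 2) (q := _ / δ) (by positivity),
      ENNReal.ofReal_div_of_pos hδ0, ENNReal.ofReal_mul (p := 2) (q := |C| / n) (by positivity)]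
    simp
  have hfin : ∑ w1, ∑ w2, (stdGaussN n {z | g1 (f1 w1 w2 + a • f2 w2 + z) ≠ w1}
        + stdGaussN n {z | g2 (b • f1 w1 w2 + f2 w2 + z) ≠ w2}) ≤
      (⌈Real.exp (n * r1)⌉₊ : ENNReal) * ((⌈Real.exp (n * r2)⌉₊ : ENNReal) * ENNReal.ofReal ε) := by
    refine hsum.trans (mul_le_mul' le_rfl (mul_le_mul' le_rfl ?_))
    refine le_trans ?_ (ENNReal.ofReal_le_ofReal hFn.le)
    rw [hFE]
    refine add_le_add (add_le_add ?_ b2) b3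
    gcongr
  refine ⟨n, _, _, f1, f2, g1, g2, hn, hM1, hM2, power_of hn hM1 hM2 p1, ?_, rate_of hn hε, rate_of hn hε, ?_, ?_⟩
  · have := power_of hn one_pos hM2 (f := fun _ : Fin 1 => f2) (fun _ => p2)
    simpa using this
  · exact pe_of hM1 hM2 hε.le hfin
  · refine pe_of hM1 hM2 hε.le (q := fun w1 w2 => stdGaussN n {z | g1 (f1 w1 w2 + a • f2 w2 + z) ≠ w1})
      (le_trans (le_of_eq ?_) hfin)
    refine Finset.sum_congr rfl fun w1 _ => Finset.sum_congr rfl fun w2 _ => add_comm _ _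

end PartN

section PartO
lemma achiev_pos (a b : ℝ) {P1 P2 : ℝ} (hP1 : 0 < P1) (hP2 : 0 ≤ P2) :
    DPC12 b P1 P2 ⊆ CapacityGT1 a b P1 P2 := by
  rintro ⟨R1, R2⟩ ⟨α, hα0, hα1, hR1, hR2⟩
  simp only at hR1 hR2
  have hl2 := Real.log_pos one_lt_two
  obtain ⟨g, hg, hgb⟩ : ∃ g : ℝ, g ^ 2 = 1 ∧ b * g = |b| := by
    rcases le_total 0 b with h | h
    · exact ⟨1, by norm_num, by rw [abs_of_nonneg h, mul_one]⟩
    · exact ⟨-1, by norm_num, by rw [abs_of_nonpos h]; ring⟩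
  set Q : ℝ → ℝ := fun s => α * (1 - s) * P1 + s * P1 / 2 with hQ
  set k : ℝ → ℝ := fun s => g * Real.sqrt ((1 - α) * (1 - s) * P1) with hk
  set c2 : ℝ → ℝ := fun s => Real.sqrt ((1 - s) * P2) with hc2
  set X : ℝ → ℝ := fun s => ((b * k s + c2 s) ^ 2 + (1 + b ^ 2 * Q s)) / (1 + b ^ 2 * Q s) with hX
  set I1 : ℝ → ℝ := fun s => 1 / 2 * Real.log (1 + Q s) with hI1
  set I2 : ℝ → ℝ := fun s => 1 / 2 * Real.log (X s) with hI2
  have cQ : Continuous Q := by fun_prop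
  have ck : Continuous k := by fun_prop
  have cc : Continuous c2 := by fun_prop
  have hQ0 : Q 0 = α * P1 := by simp [hQ]
  have hN0 : 0 < 1 + b ^ 2 * Q 0 := by rw [hQ0]; positivity
  have hX0 : X 0 = (1 + b ^ 2 * P1 + 2 * |b| * Real.sqrt ((1 - α) * P1 * P2) + P2) / (1 + b ^ 2 * α * P1) := by
    have e1 : b * k 0 = |b| * Real.sqrt ((1 - α) * P1) := by
      simp only [hk, sub_zero, mul_one]; rw [← mul_assoc, hgb]
    have e2 : c2 0 = Real.sqrt P2 := by simp [hc2]
    have h1 : 0 ≤ (1 - α) * P1 := mul_nonneg (by linarith) hP1.le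
    simp only [hX]
    rw [e1, e2, hQ0, Real.sqrt_mul h1, add_sq, mul_pow, sq_abs, Real.sq_sqrt h1, Real.sq_sqrt hP2]
    congr 1 <;> ring
  have hX0' : 0 < X 0 := by
    simp only [hX]; positivity
  have cI1 : ContinuousAt I1 0 :=
    (ContinuousAt.log (by fun_prop) (by rw [hQ0]; positivity)).const_mul _
  have cX : ContinuousAt X 0 := ContinuousAt.div (by fun_prop) (by fun_prop) hN0.ne'
  have cI2 : ContinuousAt I2 0 := (cX.log hX0'.ne').const_mul _
  set f : ℝ → ℝ × ℝ := fun s => (min R1 (I1 s / Real.log 2) - s, min R2 (I2 s / Real.log 2) - s) with hf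
  have cf : ContinuousAt f 0 :=
    ContinuousAt.prodMk (ContinuousAt.sub (ContinuousAt.inf continuousAt_const (cI1.div_const _)) continuousAt_id)
      (ContinuousAt.sub (ContinuousAt.inf continuousAt_const (cI2.div_const _)) continuousAt_id)
  have f0 : f 0 = (R1, R2) := by
    simp only [hf, sub_zero]
    rw [min_eq_left, min_eq_left]
    · refine hR2.trans (le_of_eq ?_)
      rw [← hX0, Real.logb]; simp only [hI2]; ring
    · refine hR1.trans (le_of_eq ?_)
      rw [← hQ0, Real.logb]; simp only [hI1]; ring
  have ht : Filter.Tendsto f (nhdsWithin 0 (Set.Ioi 0)) (nhds (R1, R2)) := by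
    rw [← f0]; exact cf.tendsto.mono_left nhdsWithin_le_nhds
  refine mem_closure_of_tendsto ht ?_
  filter_upwards [Ioo_mem_nhdsGT (zero_lt_one : (0 : ℝ) < 1)] with s hs
  obtain ⟨hs0, hs1⟩ := hs
  have h1s : 0 < 1 - s := by linarith
  have hα : 0 ≤ 1 - α := by linarith
  have key := ach_inner a b (P1 := P1) (P2 := P2) (Q := Q s) (κ1 := k s) (c2 := c2 s)
    (r1 := (f s).1 * Real.log 2) (r2 := (f s).2 * Real.log 2) hP1.le hP2
    (by simp only [hQ]; positivity)
    (by
      simp only [hQ, hk]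
      rw [mul_pow, hg, Real.sq_sqrt (by positivity)]
      nlinarith [mul_pos hs0 hP1])
    (by
      simp only [hc2]
      rw [Real.sq_sqrt (by positivity)]
      rcases hP2.eq_or_lt with h | h
      · right; rw [← h, mul_zero]
      · left; nlinarith)
    (by
      have : (f s).1 < I1 s / Real.log 2 := by
        simp only [hf]; linarith [min_le_right R1 (I1 s / Real.log 2)]
      rwa [lt_div_iff₀ hl2] at this)
    (by
      have : (f s).2 < I2 s / Real.log 2 := by
        simp only [hf]; linarith [min_le_right R2 (I2 s / Real.log 2)]
      rwa [lt_div_iff₀ hl2] at this)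
  rw [mul_div_cancel_right₀ _ hl2.ne', mul_div_cancel_right₀ _ hl2.ne'] at key
  exact key

lemma ach_zero (a b : ℝ) {P2 R1 R1' R2 : ℝ} (h1 : R1 ≤ 0)
    (h : AchievableGT1 a 0 1 P2 R1' R2) : AchievableGT1 a b 0 P2 R1 R2 := by
  intro ε hε
  obtain ⟨n, M1, M2, f1, f2, g1, g2, hn, hM1, hM2, -, hp, -, hr, -, he⟩ := h ε hε
  refine ⟨n, 1, M2, fun _ _ _ => 0, f2, fun _ => 0, g2, hn, one_pos, hM2, by simp, hp, by simp; linarith, hr, ?_, ?_⟩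
  · unfold peG1T1
    have : ∀ w1 : Fin 1, ¬ ((0 : Fin 1) ≠ w1) := fun w1 h => h (Subsingleton.elim _ _)
    simp only [this]
    simp; exact hε.le
  · refine le_trans (le_of_eq ?_) he
    unfold peG2T1
    have : (M1 : ℝ) ≠ 0 := by positivity
    have : (M2 : ℝ) ≠ 0 := by positivity
    simp
    field_simp

lemma achiev (a b : ℝ) {P1 P2 : ℝ} (hP1 : 0 ≤ P1) (hP2 : 0 ≤ P2) :
    DPC12 b P1 P2 ⊆ CapacityGT1 a b P1 P2 := by
  rcases hP1.eq_or_lt with h | h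
  · subst h
    rintro ⟨R1, R2⟩ ⟨α, hα0, hα1, hR1, hR2⟩
    simp only [mul_zero, add_zero, zero_mul, Real.sqrt_zero, Real.logb_one, div_one] at hR1 hR2
    have hm : (R1, R2) ∈ CapacityGT1 a 0 1 P2 :=
      achiev_pos a 0 one_pos hP2 ⟨0, le_rfl, zero_le_one, by simpa using hR1, by simpa using hR2⟩
    have hc : Continuous fun x : ℝ × ℝ => (R1, x.2) := by fun_prop
    exact map_mem_closure (f := fun x : ℝ × ℝ => (R1, x.2)) hc hm fun x hx => ach_zero a b hR1 hx
  · exact achiev_pos a b h hP2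

end PartO

/-- **Theorem 5 (capacity of the Gaussian weak IFC with degraded message sets).**
If `|b| ≤ 1`, the capacity region `C^{T₁}_{GIFC}` is exactly the set of rate pairs
`(R₁,R₂)` with `R₁ ≤ ½ log(1 + αP₁)` and
`R₂ ≤ ½ log((1 + b²P₁ + 2|b|√((1−α)P₁P₂) + P₂)/(1 + b²αP₁))` for some `α ∈ [0,1]`. -/
theorem capacityGT1_eq_DPC12 (a b P1 P2 : ℝ) (hb : |b| ≤ 1)
    (hP1 : 0 ≤ P1) (hP2 : 0 ≤ P2) :
    CapacityGT1 a b P1 P2 = DPC12 b P1 P2 := by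
  exact Set.Subset.antisymm (converse hb hP1 hP2) (achiev a b hP1 hP2)
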